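/- (Theorem 1.3(ii): lower Harnack inequality in the good fast diffusion range.) Let d ≥ 3 and m_c < m < 1, where m_c = (d−2)/d. There exist positive constants c₀′ and c depending only on m and d with the following property. Let u be a classical solution of the FDE ∂ₜu = Δ(u^m) on (0,T′) × Ω taking nonnegative initial data u₀ ∈ L¹_loc(Ω), and let x₀ ∈ Ω, R > 0 be such that the closed ball of radius 3R about x₀ is contained in Ω and ∫_{B_R(x₀)} u₀ dx > 0. Set t_* = c₀′ R^{2−d(1−m)} ‖u₀‖_{L¹(B_R(x₀))}^{1−m}. Then for every 0 < t < min{T′, t_*}: u(t,x₀) ≥ c (t/R²)^{1/(1−m)}. -/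

import Mathlib

open MeasureTheory Metric Set Real

/-- The spatial Laplacian of `f : ℝ^d → ℝ` at a point, as the sum of second
coordinate derivatives. -/
noncomputable def spaceLap {d : ℕ} (f : EuclideanSpace ℝ (Fin d) → ℝ)
    (x : EuclideanSpace ℝ (Fin d)) : ℝ :=
  ∑ i : Fin d, fderiv ℝ (fun y => fderiv ℝ f y (EuclideanSpace.single i 1)) x
    (EuclideanSpace.single i 1)

/-- `u` is a classical solution of the fast diffusion equation `∂ₜ u = Δ(u^m)`
on the space-time set `Q`: it is positive and smooth on `Q` and satisfies the
equation pointwise on `Q`. -/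
def IsFDESol {d : ℕ} (m : ℝ) (Q : Set (ℝ × EuclideanSpace ℝ (Fin d)))
    (u : ℝ → EuclideanSpace ℝ (Fin d) → ℝ) : Prop :=
  (∀ p ∈ Q, 0 < u p.1 p.2) ∧
  ContDiffOn ℝ (⊤ : ℕ∞) (fun p : ℝ × EuclideanSpace ℝ (Fin d) => u p.1 p.2) Q ∧
  ∀ p ∈ Q, deriv (fun s => u s p.2) p.1 = spaceLap (fun y => u p.1 y ^ m) p.2

/-- `u` (defined for `0 < t < T` on `Ω`) takes the initial data `u₀`:
it extends continuously to `{0} × Ω` with value `u₀` there. -/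
def TakesInit {d : ℕ} (T : ℝ) (Ω : Set (EuclideanSpace ℝ (Fin d)))
    (u : ℝ → EuclideanSpace ℝ (Fin d) → ℝ) (u₀ : EuclideanSpace ℝ (Fin d) → ℝ) : Prop :=
  ContinuousOn (fun p : ℝ × EuclideanSpace ℝ (Fin d) => u p.1 p.2) (Ico 0 T ×ˢ Ω) ∧
  ∀ x ∈ Ω, u 0 x = u₀ x

/-!
The bound is first proved at one scale: a solution up to the closed unit cylinder with enough mass
near the origin is bounded below at the origin at a fixed later time. It is read off from the
explicit monotone scheme `y ↦ y + κ Δ (y ^ m)` on a lattice cube, which by consistency and the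
discrete comparison principle stays below a multiple of the solution. For the scheme,

* a concave quadratic weight shows that the mass persists;
* the dissipation of the entropy `∑ (y + 1) ^ p`, `p < 1`, together with the Gagliardo–Nirenberg
  inequality bounds `∑ (y + 1) ^ q` with `q = (p + m) / 2 * (d / (d - 1))`; one can take `q > 1`
  exactly because `(d - 2) / d < m`;
* by Hölder's inequality little mass lies in thin slabs around the coordinate hyperplanes, and at
  every other point Aleksandrov reflection shows that the scheme is below its value at the origin,
  so that value is bounded below.

Scaling and translating turns this into `u(t, x) ≥ c t ^ (1 / (1 - m))` at every point `x` near
which there is enough initial mass. By pigeonhole some small ball consists of such points, and a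
Gaussian barrier centred at that ball, multiplied by `t ^ (m / (1 - m))`, carries the bound to the
centre of the original ball.
-/

section Lattice

variable {d N : ℕ}

/-- The cube `{k ∈ ℤ^d : |k i| ≤ N}`, the spatial domain of the finite-difference scheme. -/
noncomputable def latticeBox (d N : ℕ) : Finset (Fin d → ℤ) :=
  Fintype.piFinset fun _ => Finset.Icc (-(N : ℤ)) N

/-- The `i`-th unit vector of `ℤ^d`. -/
abbrev latticeVec (i : Fin d) : Fin d → ℤ := Pi.single i 1

lemma mem_latticeBox {k : Fin d → ℤ} : k ∈ latticeBox d N ↔ ∀ i, (k i).natAbs ≤ N := by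
  simp only [latticeBox, Fintype.mem_piFinset, Finset.mem_Icc]
  exact forall_congr' fun i => by omega

lemma card_latticeBox (d N : ℕ) : ((latticeBox d N).card : ℝ) = (2 * N + 1 : ℝ) ^ d := by
  have hcard : (latticeBox d N).card = (2 * N + 1) ^ d := by
    simp only [latticeBox, Fintype.card_piFinset, Int.card_Icc, Finset.prod_const,
      Finset.card_univ, Fintype.card_fin]
    congr 1
    omega
  rw [hcard]
  push_cast
  rfl

lemma card_latticeBox_le (hN : 1 ≤ N) : ((latticeBox d N).card : ℝ) ≤ 3 ^ d * (N : ℝ) ^ d := by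
  have hN' : (1 : ℝ) ≤ N := by exact_mod_cast hN
  rw [card_latticeBox, ← mul_pow]
  gcongr
  linarith

lemma card_latticeBox_succ_le (hN : 1 ≤ N) :
    ((latticeBox d (N + 1)).card : ℝ) ≤ 5 ^ d * (N : ℝ) ^ d := by
  have hN' : (1 : ℝ) ≤ N := by exact_mod_cast hN
  rw [card_latticeBox, ← mul_pow]
  gcongr
  push_cast
  linarith

lemma latticeBox_mono {M : ℕ} (h : M ≤ N) : latticeBox d M ⊆ latticeBox d N := fun _ hk =>
  mem_latticeBox.2 fun i => (mem_latticeBox.1 hk i).trans h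

lemma add_mem_latticeBox_succ {k v : Fin d → ℤ} (hk : k ∈ latticeBox d N)
    (hv : ∀ i, (v i).natAbs ≤ 1) : k + v ∈ latticeBox d (N + 1) :=
  mem_latticeBox.2 fun i => (Int.natAbs_add_le _ _).trans
    (add_le_add (mem_latticeBox.1 hk i) (hv i))

lemma natAbs_latticeVec_le (i j : Fin d) : (latticeVec i j).natAbs ≤ 1 := by
  by_cases h : j = i <;> simp [h]

lemma add_latticeVec_mem_latticeBox_succ {k : Fin d → ℤ} (hk : k ∈ latticeBox d N) (i : Fin d) :
    k + latticeVec i ∈ latticeBox d (N + 1) :=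
  add_mem_latticeBox_succ hk (natAbs_latticeVec_le i)

lemma sub_latticeVec_mem_latticeBox_succ {k : Fin d → ℤ} (hk : k ∈ latticeBox d N) (i : Fin d) :
    k - latticeVec i ∈ latticeBox d (N + 1) := by
  rw [sub_eq_add_neg]
  exact add_mem_latticeBox_succ hk fun j => by
    rw [Pi.neg_apply, Int.natAbs_neg]
    exact natAbs_latticeVec_le i j

lemma sum_latticeBox_succ_shift {G : (Fin d → ℤ) → ℝ} (hG : ∀ k ∉ latticeBox d N, G k = 0)
    {v : Fin d → ℤ} (hv : ∀ i, (v i).natAbs ≤ 1) :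
    ∑ k ∈ latticeBox d (N + 1), G (k + v) = ∑ k ∈ latticeBox d N, G k := by
  have hneg : ∀ i, ((-v) i).natAbs ≤ 1 := fun i => by
    rw [Pi.neg_apply, Int.natAbs_neg]
    exact hv i
  symm
  refine Finset.sum_of_injOn (fun k => k + -v) (fun a _ b _ h => add_right_cancel h)
    (fun a ha => add_mem_latticeBox_succ ha hneg) (fun k _ hk => ?_) (fun k _ => by simp)
  exact hG _ fun hk' => hk ⟨k + v, hk', by simp⟩

lemma sum_latticeBox_succ {G : (Fin d → ℤ) → ℝ} (hG : ∀ k ∉ latticeBox d N, G k = 0) :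
    ∑ k ∈ latticeBox d (N + 1), G k = ∑ k ∈ latticeBox d N, G k := by
  simpa using sum_latticeBox_succ_shift hG (v := 0) (by simp)

lemma sum_latticeBox_succ_add {G : (Fin d → ℤ) → ℝ} (hG : ∀ k ∉ latticeBox d N, G k = 0)
    (i : Fin d) :
    ∑ k ∈ latticeBox d (N + 1), G (k + latticeVec i) = ∑ k ∈ latticeBox d N, G k :=
  sum_latticeBox_succ_shift hG (natAbs_latticeVec_le i)

lemma sum_latticeBox_succ_sub {G : (Fin d → ℤ) → ℝ} (hG : ∀ k ∉ latticeBox d N, G k = 0)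
    (i : Fin d) :
    ∑ k ∈ latticeBox d (N + 1), G (k - latticeVec i) = ∑ k ∈ latticeBox d N, G k := by
  simp only [sub_eq_add_neg]
  exact sum_latticeBox_succ_shift hG fun j => by
    rw [Pi.neg_apply, Int.natAbs_neg]
    exact natAbs_latticeVec_le i j

/-- The second-difference Laplacian on `ℤ^d` with unit mesh. -/
def discreteLaplacian (g : (Fin d → ℤ) → ℝ) (k : Fin d → ℤ) : ℝ :=
  ∑ i, (g (k + latticeVec i) + g (k - latticeVec i) - 2 * g k)

/-- The Dirichlet form `∑ (f(k + eᵢ) - f(k)) (g(k + eᵢ) - g(k))` over the edges meeting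
`latticeBox d N`; the sum over `latticeBox d (N + 1)` picks up every such edge. -/
noncomputable def dirichletForm (N : ℕ) (f g : (Fin d → ℤ) → ℝ) : ℝ :=
  ∑ k ∈ latticeBox d (N + 1), ∑ i, (f (k + latticeVec i) - f k) * (g (k + latticeVec i) - g k)

lemma discreteLaplacian_const (c : ℝ) (k : Fin d → ℤ) :
    discreteLaplacian (fun _ => c) k = 0 := by
  simp only [discreteLaplacian]
  exact Finset.sum_eq_zero fun i _ => by ring

lemma discreteLaplacian_sub_const (g : (Fin d → ℤ) → ℝ) (c : ℝ) (k : Fin d → ℤ) :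
    discreteLaplacian (fun l => g l - c) k = discreteLaplacian g k :=
  Finset.sum_congr rfl fun i _ => by ring

lemma abs_discreteLaplacian_le {g : (Fin d → ℤ) → ℝ} {B : ℝ} (h0 : ∀ k, 0 ≤ g k)
    (hB : ∀ k, g k ≤ B) (k : Fin d → ℤ) : |discreteLaplacian g k| ≤ 2 * d * B := by
  calc |discreteLaplacian g k|
      ≤ ∑ i : Fin d, |g (k + latticeVec i) + g (k - latticeVec i) - 2 * g k| :=
        Finset.abs_sum_le_sum_abs _ _
    _ ≤ ∑ _i : Fin d, 2 * B := by
        refine Finset.sum_le_sum fun i _ => abs_le.2 ⟨?_, ?_⟩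
        · linarith [h0 (k + latticeVec i), h0 (k - latticeVec i), hB k]
        · linarith [hB (k + latticeVec i), hB (k - latticeVec i), h0 k]
    _ = 2 * d * B := by
        rw [Finset.sum_const, Finset.card_univ, Fintype.card_fin, nsmul_eq_mul]
        ring

lemma dirichletForm_nonneg {f g : (Fin d → ℤ) → ℝ} (h : Monovary f g) :
    0 ≤ dirichletForm N f g :=
  Finset.sum_nonneg fun _ _ => Finset.sum_nonneg fun _ _ => h.sub_mul_sub_nonneg _ _

lemma sum_mul_discreteLaplacian {f : (Fin d → ℤ) → ℝ} (hf : ∀ k ∉ latticeBox d N, f k = 0)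
    (g : (Fin d → ℤ) → ℝ) :
    ∑ k ∈ latticeBox d N, f k * discreteLaplacian g k = -dirichletForm N f g := by
  simp only [discreteLaplacian, dirichletForm, Finset.mul_sum]
  rw [Finset.sum_comm, Finset.sum_comm (s := latticeBox d (N + 1)), ← Finset.sum_neg_distrib]
  refine Finset.sum_congr rfl fun i _ => ?_
  have hshift := sum_latticeBox_succ_add (N := N)
    (G := fun k => f k * (g k - g (k - latticeVec i))) (fun k hk => by rw [hf k hk, zero_mul]) i
  have hext := sum_latticeBox_succ (N := N)
    (G := fun k => f k * (g (k + latticeVec i) - g k)) (fun k hk => by rw [hf k hk, zero_mul])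
  simp only [add_sub_cancel_right] at hshift
  simp only [sub_mul (f _)]
  rw [Finset.sum_sub_distrib, hshift, hext, neg_sub, ← Finset.sum_sub_distrib]
  exact Finset.sum_congr rfl fun _ _ => by ring

lemma sum_discreteLaplacian_nonpos {g : (Fin d → ℤ) → ℝ} {c : ℝ} (hg : ∀ k, c ≤ g k)
    (hc : ∀ k ∉ latticeBox d N, g k = c) : ∑ k ∈ latticeBox d N, discreteLaplacian g k ≤ 0 := by
  let χ : (Fin d → ℤ) → ℝ := fun k => if k ∈ latticeBox d N then 1 else 0
  have hχ : ∑ k ∈ latticeBox d N, discreteLaplacian g k = -dirichletForm N χ g := by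
    rw [← sum_mul_discreteLaplacian (fun k hk => if_neg hk)]
    exact Finset.sum_congr rfl fun k hk => by rw [if_pos hk, one_mul]
  rw [hχ, neg_nonpos]
  refine dirichletForm_nonneg fun k l hkl => ?_
  by_cases hl : l ∈ latticeBox d N
  · simp only [χ, if_pos hl]
    split_ifs <;> norm_num
  · exact absurd ((hc l hl ▸ hkl).trans_le (hg k)) (lt_irrefl _)

lemma sum_mul_discreteLaplacian_comm {g : (Fin d → ℤ) → ℝ} (hg : ∀ k ∉ latticeBox d N, g k = 0)
    (ψ : (Fin d → ℤ) → ℝ) :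
    ∑ k ∈ latticeBox d (N + 1), ψ k * discreteLaplacian g k =
      ∑ k ∈ latticeBox d N, discreteLaplacian ψ k * g k := by
  simp only [discreteLaplacian, Finset.mul_sum, Finset.sum_mul]
  rw [Finset.sum_comm, Finset.sum_comm (s := latticeBox d N)]
  refine Finset.sum_congr rfl fun i _ => ?_
  have hadd := sum_latticeBox_succ_add (N := N)
    (G := fun k => ψ (k - latticeVec i) * g k) (fun k hk => by rw [hg k hk, mul_zero]) i
  have hsub := sum_latticeBox_succ_sub (N := N)
    (G := fun k => ψ (k + latticeVec i) * g k) (fun k hk => by rw [hg k hk, mul_zero]) i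
  have hext := sum_latticeBox_succ (N := N)
    (G := fun k => 2 * ψ k * g k) (fun k hk => by rw [hg k hk, mul_zero])
  simp only [add_sub_cancel_right, sub_add_cancel] at hadd hsub
  calc ∑ k ∈ latticeBox d (N + 1), ψ k * (g (k + latticeVec i) + g (k - latticeVec i) - 2 * g k)
      = ∑ k ∈ latticeBox d (N + 1), ψ k * g (k + latticeVec i) +
          ∑ k ∈ latticeBox d (N + 1), ψ k * g (k - latticeVec i) -
          ∑ k ∈ latticeBox d (N + 1), 2 * ψ k * g k := by
        rw [← Finset.sum_add_distrib, ← Finset.sum_sub_distrib]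
        exact Finset.sum_congr rfl fun _ _ => by ring
    _ = ∑ k ∈ latticeBox d N,
          (ψ (k + latticeVec i) + ψ (k - latticeVec i) - 2 * ψ k) * g k := by
        rw [hadd, hsub, hext, ← Finset.sum_add_distrib, ← Finset.sum_sub_distrib]
        exact Finset.sum_congr rfl fun _ _ => by ring

/-- The paraboloid `1 - |k|² / (N + 1)²`, a test function for following the mass inside
`latticeBox d N`: it is nonpositive just outside the cube and has constant Laplacian. -/
noncomputable def quadraticWeight (N : ℕ) (k : Fin d → ℤ) : ℝ :=
  1 - (∑ j, (k j : ℝ) ^ 2) / (N + 1 : ℝ) ^ 2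

lemma quadraticWeight_le_one (k : Fin d → ℤ) : quadraticWeight N k ≤ 1 := by
  have : 0 ≤ (∑ j, (k j : ℝ) ^ 2) / (N + 1 : ℝ) ^ 2 := by positivity
  rw [quadraticWeight]
  linarith

lemma quadraticWeight_nonpos {k : Fin d → ℤ} (hk : k ∉ latticeBox d N) :
    quadraticWeight N k ≤ 0 := by
  obtain ⟨i, hi⟩ : ∃ i, N < (k i).natAbs := by
    simpa only [mem_latticeBox, not_forall, not_le] using hk
  have hcoord : ((N : ℝ) + 1) ^ 2 ≤ (k i : ℝ) ^ 2 := by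
    rw [sq_le_sq, abs_of_nonneg (by positivity : (0 : ℝ) ≤ N + 1), ← Int.cast_abs,
      Int.abs_eq_natAbs]
    exact_mod_cast hi
  have hsum : (k i : ℝ) ^ 2 ≤ ∑ j, (k j : ℝ) ^ 2 :=
    Finset.single_le_sum (f := fun j => (k j : ℝ) ^ 2) (fun _ _ => sq_nonneg _)
      (Finset.mem_univ i)
  rw [quadraticWeight, sub_nonpos, le_div_iff₀ (by positivity)]
  linarith

lemma discreteLaplacian_quadraticWeight (k : Fin d → ℤ) :
    discreteLaplacian (quadraticWeight N) k = -(2 * d / (N + 1 : ℝ) ^ 2) := by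
  have hsecond : ∀ i : Fin d, quadraticWeight N (k + latticeVec i) +
      quadraticWeight N (k - latticeVec i) - 2 * quadraticWeight N k =
        -(2 / (N + 1 : ℝ) ^ 2) := fun i => by
    have hsq : ∑ j, (((k + latticeVec i) j : ℤ) : ℝ) ^ 2 +
        ∑ j, (((k - latticeVec i) j : ℤ) : ℝ) ^ 2 - 2 * ∑ j, (k j : ℝ) ^ 2 = 2 := by
      rw [Finset.mul_sum, ← Finset.sum_add_distrib, ← Finset.sum_sub_distrib,
        Finset.sum_eq_single i (fun j _ hj => ?_) (by simp)]
      · simp only [Pi.add_apply, Pi.sub_apply, Pi.single_eq_same]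
        push_cast
        ring
      · simp only [Pi.add_apply, Pi.sub_apply, Pi.single_eq_of_ne hj, add_zero, sub_zero]
        ring
    simp only [quadraticWeight]
    field_simp
    linarith
  rw [discreteLaplacian, Finset.sum_congr rfl fun i _ => hsecond i, Finset.sum_const,
    Finset.card_univ, Fintype.card_fin, nsmul_eq_mul]
  ring

lemma le_sum_quadraticWeight_mul_discreteLaplacian {g : (Fin d → ℤ) → ℝ} (h0 : ∀ k, 0 ≤ g k)
    (hg : ∀ k ∉ latticeBox d N, g k = 0) :
    -(2 * d / (N + 1 : ℝ) ^ 2) * ∑ k ∈ latticeBox d N, g k ≤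
      ∑ k ∈ latticeBox d N, quadraticWeight N k * discreteLaplacian g k := by
  have hgreen := sum_mul_discreteLaplacian_comm hg (quadraticWeight N)
  simp only [discreteLaplacian_quadraticWeight, ← Finset.mul_sum] at hgreen
  have hshell : ∑ k ∈ latticeBox d (N + 1) \ latticeBox d N,
      quadraticWeight N k * discreteLaplacian g k ≤ 0 := by
    refine Finset.sum_nonpos fun k hk => ?_
    have hkN := (Finset.mem_sdiff.1 hk).2
    refine mul_nonpos_of_nonpos_of_nonneg (quadraticWeight_nonpos hkN)
      (Finset.sum_nonneg fun i _ => ?_)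
    linarith [hg k hkN, h0 (k + latticeVec i), h0 (k - latticeVec i)]
  rw [← hgreen, ← Finset.sum_sdiff (latticeBox_mono (d := d) N.le_succ)]
  linarith

end Lattice

section Sobolev

variable {d N : ℕ}

lemma ofReal_le_tsum_abs_sub (h : ℤ → ℝ) {a : ℤ} (ha : h a = 0) (n : ℕ) :
    ENNReal.ofReal (h (a + n)) ≤ ∑' j, ENNReal.ofReal |h (j + 1) - h j| := by
  have hfinite : h (a + n) ≤ ∑ j ∈ Finset.range n, |h (a + j + 1) - h (a + j)| := by
    have htele := Finset.sum_range_sub (fun j : ℕ => h (a + j)) n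
    simp only [Nat.cast_add, Nat.cast_one, Nat.cast_zero, add_zero, ha, sub_zero,
      ← add_assoc] at htele
    rw [← htele]
    exact Finset.sum_le_sum fun _ _ => le_abs_self _
  calc ENNReal.ofReal (h (a + n))
      ≤ ENNReal.ofReal (∑ j ∈ Finset.range n, |h (a + j + 1) - h (a + j)|) :=
        ENNReal.ofReal_le_ofReal hfinite
    _ = ∑ j ∈ Finset.range n, ENNReal.ofReal |h (a + j + 1) - h (a + j)| :=
        ENNReal.ofReal_sum_of_nonneg fun _ _ => abs_nonneg _
    _ ≤ ∑' j : ℕ, ENNReal.ofReal |h (a + j + 1) - h (a + j)| := ENNReal.sum_le_tsum _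
    _ ≤ ∑' j, ENNReal.ofReal |h (j + 1) - h j| :=
        ENNReal.tsum_comp_le_tsum_of_injective (f := fun j : ℕ => a + (j : ℤ))
          (fun x y hxy => by simpa using hxy) fun j => ENNReal.ofReal |h (j + 1) - h j|

/-- The `ℓ¹` norm of the discrete gradient at a lattice point. -/
noncomputable def gradNorm (F : (Fin d → ℤ) → ℝ) (k : Fin d → ℤ) : ℝ :=
  ∑ i, |F (k + latticeVec i) - F k|

lemma gradNorm_nonneg (F : (Fin d → ℤ) → ℝ) (k : Fin d → ℤ) : 0 ≤ gradNorm F k :=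
  Finset.sum_nonneg fun _ _ => abs_nonneg _

lemma gradNorm_eq_zero {F : (Fin d → ℤ) → ℝ} (hF : ∀ k ∉ latticeBox d N, F k = 0)
    {k : Fin d → ℤ} (hk : k ∉ latticeBox d (N + 1)) : gradNorm F k = 0 := by
  refine Finset.sum_eq_zero fun i _ => ?_
  have hk₀ : k ∉ latticeBox d N := fun h => hk (latticeBox_mono N.le_succ h)
  have hk₁ : k + latticeVec i ∉ latticeBox d N := fun h =>
    hk (by simpa using sub_latticeVec_mem_latticeBox_succ h i)
  rw [hF _ hk₀, hF _ hk₁, sub_zero, abs_zero]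

lemma update_add_one (k : Fin d → ℤ) (i : Fin d) (j : ℤ) :
    Function.update k i (j + 1) = Function.update k i j + latticeVec i := by
  ext l
  by_cases hl : l = i
  · subst hl
    simp
  · simp [hl]

lemma ofReal_le_tsum_gradNorm_update {F : (Fin d → ℤ) → ℝ}
    (hF : ∀ k ∉ latticeBox d N, F k = 0) {k : Fin d → ℤ} (hk : k ∈ latticeBox d N) (i : Fin d) :
    ENNReal.ofReal (F k) ≤ ∑' j : ℤ, ENNReal.ofReal (gradNorm F (Function.update k i j)) := by
  have hki := mem_latticeBox.1 hk i
  have hstart : F (Function.update k i (-(N + 1 : ℤ))) = 0 := hF _ fun hmem => by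
    have := mem_latticeBox.1 hmem i
    rw [Function.update_self] at this
    omega
  have hline := ofReal_le_tsum_abs_sub (fun j => F (Function.update k i j)) hstart
    (k i + (N + 1)).toNat
  rw [show -(N + 1 : ℤ) + ((k i + (N + 1)).toNat : ℤ) = k i by omega,
    Function.update_eq_self] at hline
  refine hline.trans (ENNReal.tsum_le_tsum fun j => ENNReal.ofReal_le_ofReal ?_)
  rw [update_add_one]
  exact Finset.single_le_sum (f := fun i' => |F (Function.update k i j + latticeVec i') -
    F (Function.update k i j)|) (fun _ _ => abs_nonneg _) (Finset.mem_univ i)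

lemma pi_count_singleton (k : Fin d → ℤ) :
    (Measure.pi fun _ : Fin d => (Measure.count : Measure ℤ)) {k} = 1 := by
  rw [← Set.univ_pi_singleton, Measure.pi_pi]
  simp

-- The grid-lines lemma behind Mathlib's Gagliardo–Nirenberg–Sobolev inequality, applied to the
-- counting measure on each coordinate axis.
lemma tsum_prod_tsum_update_rpow_le (hd : 2 ≤ d) (f : (Fin d → ℤ) → ENNReal) :
    ∑' k, ∏ i, (∑' j, f (Function.update k i j)) ^ (1 / (d - 1 : ℝ)) ≤
      (∑' k, f k) ^ ((d : ℝ) / (d - 1)) := by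
  have hd1 : (1 : ℝ) < d := by exact_mod_cast hd
  have hp : Real.HolderConjugate (Fintype.card (Fin d)) ((d : ℝ) / (d - 1)) := by
    simpa [Real.conjExponent] using Real.HolderConjugate.conjExponent hd1
  have hgrid := lintegral_prod_lintegral_pow_le (ι := Fin d) (A := fun _ => ℤ)
    (μ := fun _ => Measure.count) hp (f := f) (measurable_of_countable _)
  rw [lintegral_countable', lintegral_countable'] at hgrid
  simpa only [pi_count_singleton, mul_one, lintegral_count, Fintype.card_fin] using hgrid

theorem discrete_sobolev (hd : 2 ≤ d) {F : (Fin d → ℤ) → ℝ} (h0 : ∀ k, 0 ≤ F k)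
    (hF : ∀ k ∉ latticeBox d N, F k = 0) :
    ∑ k ∈ latticeBox d N, F k ^ ((d : ℝ) / (d - 1)) ≤
      (∑ k ∈ latticeBox d (N + 1), gradNorm F k) ^ ((d : ℝ) / (d - 1)) := by
  have hd1 : (0 : ℝ) < d - 1 := by
    have : (2 : ℝ) ≤ d := by exact_mod_cast hd
    linarith
  have hβ : (0 : ℝ) ≤ d / (d - 1) := by positivity
  have hgrad : 0 ≤ ∑ k ∈ latticeBox d (N + 1), gradNorm F k :=
    Finset.sum_nonneg fun _ _ => gradNorm_nonneg _ _
  rw [← ENNReal.ofReal_le_ofReal_iff (Real.rpow_nonneg hgrad _),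
    ENNReal.ofReal_sum_of_nonneg fun _ _ => Real.rpow_nonneg (h0 _) _]
  have hpoint : ∀ k ∈ latticeBox d N, ENNReal.ofReal (F k ^ ((d : ℝ) / (d - 1))) ≤
      ∏ i, (∑' j, ENNReal.ofReal (gradNorm F (Function.update k i j))) ^ (1 / (d - 1 : ℝ)) := by
    intro k hk
    calc ENNReal.ofReal (F k ^ ((d : ℝ) / (d - 1)))
        = ∏ _i : Fin d, ENNReal.ofReal (F k) ^ (1 / (d - 1 : ℝ)) := by
          rw [← ENNReal.ofReal_rpow_of_nonneg (h0 k) hβ, Finset.prod_const, Finset.card_univ,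
            Fintype.card_fin, ← ENNReal.rpow_natCast, ← ENNReal.rpow_mul, one_div_mul_eq_div]
      _ ≤ _ := Finset.prod_le_prod' fun i _ =>
          ENNReal.rpow_le_rpow (ofReal_le_tsum_gradNorm_update hF hk i) (by positivity)
  calc ∑ k ∈ latticeBox d N, ENNReal.ofReal (F k ^ ((d : ℝ) / (d - 1)))
      ≤ ∑' k, ∏ i, (∑' j, ENNReal.ofReal (gradNorm F (Function.update k i j))) ^
          (1 / (d - 1 : ℝ)) := (Finset.sum_le_sum hpoint).trans (ENNReal.sum_le_tsum _)
    _ ≤ (∑' k, ENNReal.ofReal (gradNorm F k)) ^ ((d : ℝ) / (d - 1)) :=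
        tsum_prod_tsum_update_rpow_le hd fun k => ENNReal.ofReal (gradNorm F k)
    _ = ENNReal.ofReal ((∑ k ∈ latticeBox d (N + 1), gradNorm F k) ^ ((d : ℝ) / (d - 1))) := by
        rw [tsum_eq_sum fun k hk => by rw [gradNorm_eq_zero hF hk, ENNReal.ofReal_zero],
          ← ENNReal.ofReal_sum_of_nonneg fun _ _ => gradNorm_nonneg _ _,
          ENNReal.ofReal_rpow_of_nonneg hgrad hβ]

end Sobolev

section RealPowers

lemma exists_rpow_sub_rpow_eq (r : ℝ) {a b : ℝ} (ha : 0 < a) (hb : 0 < b) :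
    ∃ c ∈ uIcc a b, b ^ r - a ^ r = r * c ^ (r - 1) * (b - a) := by
  wlog hab : a < b generalizing a b
  · rcases (not_lt.1 hab).eq_or_lt with rfl | hba
    · exact ⟨b, left_mem_uIcc, by ring⟩
    · obtain ⟨c, hc, h⟩ := this hb ha hba
      exact ⟨c, uIcc_comm a b ▸ hc, by linarith⟩
  have hderiv : ∀ x ∈ Icc a b, HasDerivAt (fun y : ℝ => y ^ r) (r * x ^ (r - 1)) x :=
    fun x hx => hasDerivAt_rpow_const (Or.inl (ha.trans_le hx.1).ne')
  obtain ⟨c, hc, h⟩ := exists_hasDerivAt_eq_slope (fun x : ℝ => x ^ r) (fun x => r * x ^ (r - 1))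
    hab (fun x hx => (hderiv x hx).continuousAt.continuousWithinAt)
    fun x hx => hderiv x (Ioo_subset_Icc_self hx)
  refine ⟨c, uIcc_of_le hab.le ▸ Ioo_subset_Icc_self hc, ?_⟩
  rw [h, div_mul_cancel₀ _ (sub_pos.2 hab).ne']

lemma mul_rpow_sub_one_mul_sub_le {r a b : ℝ} (hr : r ≤ 1) (ha : 0 < a) (hab : a ≤ b) :
    |r| * b ^ (r - 1) * (b - a) ≤ |b ^ r - a ^ r| := by
  obtain ⟨c, hc, h⟩ := exists_rpow_sub_rpow_eq r ha (ha.trans_le hab)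
  rw [uIcc_of_le hab] at hc
  have hc0 : 0 < c := ha.trans_le hc.1
  rw [h, abs_mul, abs_mul, abs_of_nonneg (sub_nonneg.2 hab), abs_of_pos (rpow_pos_of_pos hc0 _)]
  have := rpow_le_rpow_of_nonpos hc0 hc.2 (sub_nonpos.2 hr)
  have := sub_nonneg.2 hab
  gcongr

lemma abs_rpow_sub_rpow_le {r a b : ℝ} (hr : |r| ≤ 1) (ha : 1 ≤ a) (hb : 1 ≤ b) :
    |b ^ r - a ^ r| ≤ |b - a| := by
  obtain ⟨c, hc, h⟩ := exists_rpow_sub_rpow_eq r (one_pos.trans_le ha) (one_pos.trans_le hb)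
  have hc1 : 1 ≤ c := (le_inf ha hb).trans hc.1
  have hpow : c ^ (r - 1) ≤ 1 :=
    rpow_le_one_of_one_le_of_nonpos hc1 (sub_nonpos.2 (abs_le.1 hr).2)
  rw [h, abs_mul, abs_mul, abs_of_pos (rpow_pos_of_pos (one_pos.trans_le hc1) _)]
  exact mul_le_of_le_one_left (abs_nonneg _) (mul_le_one₀ hr (by positivity) hpow)

lemma abs_rpow_sub_tangent_le {r a b : ℝ} (hr0 : 0 ≤ r) (hr2 : r ≤ 2) (ha : 1 ≤ a)
    (hb : 1 ≤ b) : |b ^ r - a ^ r - r * a ^ (r - 1) * (b - a)| ≤ r * (b - a) ^ 2 := by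
  obtain ⟨c, hc, h⟩ := exists_rpow_sub_rpow_eq r (one_pos.trans_le ha) (one_pos.trans_le hb)
  have hc1 : 1 ≤ c := (le_inf ha hb).trans hc.1
  have hlip : |c ^ (r - 1) - a ^ (r - 1)| ≤ |b - a| :=
    (abs_rpow_sub_rpow_le (abs_le.2 ⟨by linarith, by linarith⟩) ha hc1).trans
      (abs_sub_left_of_mem_uIcc hc)
  calc |b ^ r - a ^ r - r * a ^ (r - 1) * (b - a)|
      = r * (|c ^ (r - 1) - a ^ (r - 1)| * |b - a|) := by
        rw [h, ← abs_mul, ← abs_of_nonneg hr0, ← abs_mul, abs_of_nonneg hr0]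
        congr 1
        ring
    _ ≤ r * (|b - a| * |b - a|) := by gcongr
    _ = r * (b - a) ^ 2 := by rw [abs_mul_abs_self, sq]

lemma rpow_sub_rpow_le_mul {s A B : ℝ} (hs : s ≤ 1) (hA : 0 < A) (hAB : A ≤ B) :
    B ^ s - A ^ s ≤ B ^ (s - 1) * (B - A) := by
  have hB : 0 < B := hA.trans_le hAB
  have hpow := rpow_le_rpow_of_nonpos hA hAB (sub_nonpos.2 hs)
  have hsplit : ∀ x : ℝ, 0 < x → x ^ s = x ^ (s - 1) * x := fun x hx => by
    rw [rpow_sub_one hx.ne', div_mul_cancel₀ _ hx.ne']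
  rw [hsplit B hB, hsplit A hA]
  nlinarith

lemma sub_mul_rpow_sub_nonneg {m p a b : ℝ} (hm : 0 ≤ m) (hp : p ≤ 1) (ha : 0 < a)
    (hb : 0 < b) : 0 ≤ ((a + 1) ^ (p - 1) - (b + 1) ^ (p - 1)) * (b ^ m - a ^ m) := by
  rcases le_total a b with h | h
  · exact mul_nonneg (sub_nonneg.2 (rpow_le_rpow_of_nonpos (by linarith) (by linarith)
      (by linarith))) (sub_nonneg.2 (rpow_le_rpow ha.le h hm))
  · exact mul_nonneg_of_nonpos_of_nonpos (sub_nonpos.2 (rpow_le_rpow_of_nonpos (by linarith)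
      (by linarith) (by linarith))) (sub_nonpos.2 (rpow_le_rpow hb.le h hm))

lemma mul_sq_sub_le_entropy_dissipation {m p a b : ℝ} (hm0 : 0 ≤ m) (hm1 : m ≤ 1) (hp1 : p ≤ 1)
    (ha : 0 < a) (hab : a ≤ b) :
    m * (1 - p) * (b + 1) ^ (p + m - 3) * (b - a) ^ 2 ≤
      ((a + 1) ^ (p - 1) - (b + 1) ^ (p - 1)) * (b ^ m - a ^ m) := by
  have hb : 0 < b := ha.trans_le hab
  have hp : 0 ≤ 1 - p := sub_nonneg.2 hp1
  have : 0 ≤ b - a := sub_nonneg.2 hab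
  have hpower : m * (b + 1) ^ (m - 1) * (b - a) ≤ b ^ m - a ^ m := by
    have h := mul_rpow_sub_one_mul_sub_le hm1 ha hab
    rw [abs_of_nonneg hm0, abs_of_nonneg (sub_nonneg.2 (rpow_le_rpow ha.le hab hm0))] at h
    refine le_trans ?_ h
    gcongr ?_ * _
    exact mul_le_mul_of_nonneg_left (rpow_le_rpow_of_nonpos hb (by linarith) (by linarith)) hm0
  have hentropy : (1 - p) * (b + 1) ^ (p - 2) * (b - a) ≤
      (a + 1) ^ (p - 1) - (b + 1) ^ (p - 1) := by
    have h := mul_rpow_sub_one_mul_sub_le (r := p - 1) (by linarith) (by linarith : 0 < a + 1)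
      (by linarith : a + 1 ≤ b + 1)
    rw [abs_sub_comm p, abs_of_nonneg hp, abs_sub_comm, abs_of_nonneg (sub_nonneg.2
      (rpow_le_rpow_of_nonpos (by linarith) (by linarith) (by linarith)))] at h
    convert h using 2 <;> ring_nf
  calc m * (1 - p) * (b + 1) ^ (p + m - 3) * (b - a) ^ 2
      = ((1 - p) * (b + 1) ^ (p - 2) * (b - a)) * (m * (b + 1) ^ (m - 1) * (b - a)) := by
        rw [show p + m - 3 = (p - 2) + (m - 1) by ring, rpow_add (by linarith)]
        ring
    _ ≤ ((a + 1) ^ (p - 1) - (b + 1) ^ (p - 1)) * (b ^ m - a ^ m) :=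
        mul_le_mul hentropy hpower (by positivity) ((by positivity :
          0 ≤ (1 - p) * (b + 1) ^ (p - 2) * (b - a)).trans hentropy)

-- The discrete form of `|∇ (u + 1)^((p + m) / 2)|² ≤ C (u + 1) ⟪-∇ (u + 1)^(p - 1), ∇ u^m⟫`.
lemma sq_rpow_sub_le_entropy_dissipation {m p a b : ℝ} (hm0 : 0 < m) (hm1 : m ≤ 1)
    (hp1 : p < 1) (hpm : 0 ≤ p + m) (ha : 0 < a) (hb : 0 < b) :
    ((b + 1) ^ ((p + m) / 2) - (a + 1) ^ ((p + m) / 2)) ^ 2 ≤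
      ((a + 1 + (b + 1)) / (m * (1 - p))) *
        (((a + 1) ^ (p - 1) - (b + 1) ^ (p - 1)) * (b ^ m - a ^ m)) := by
  wlog hab : a ≤ b generalizing a b
  · convert this hb ha (not_le.1 hab).le using 1 <;> ring
  have hp : 0 < 1 - p := sub_pos.2 hp1
  have hB : 0 < b + 1 := by linarith
  have hexp : ((b + 1) ^ ((p + m) / 2 - 1)) ^ 2 = (b + 1) * (b + 1) ^ (p + m - 3) := by
    rw [← rpow_natCast, ← rpow_mul hB.le, ← rpow_one_add' hB.le (by linarith)]
    congr 1
    push_cast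
    ring
  calc ((b + 1) ^ ((p + m) / 2) - (a + 1) ^ ((p + m) / 2)) ^ 2
      ≤ ((b + 1) ^ ((p + m) / 2 - 1) * (b + 1 - (a + 1))) ^ 2 :=
        pow_le_pow_left₀ (sub_nonneg.2 (by gcongr)) (rpow_sub_rpow_le_mul (by linarith)
          (by linarith) (by linarith)) 2
    _ = (b + 1) / (m * (1 - p)) * (m * (1 - p) * (b + 1) ^ (p + m - 3) * (b - a) ^ 2) := by
        rw [mul_pow, hexp]
        field_simp
        ring
    _ ≤ (a + 1 + (b + 1)) / (m * (1 - p)) *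
          (((a + 1) ^ (p - 1) - (b + 1) ^ (p - 1)) * (b ^ m - a ^ m)) :=
        mul_le_mul (div_le_div_of_nonneg_right (by linarith) (by positivity))
          (mul_sq_sub_le_entropy_dissipation hm0.le hm1 hp1.le ha hab) (by positivity)
          (by positivity)

lemma add_rpow_le_two_mul {x y β : ℝ} (hx : 0 ≤ x) (hy : 0 ≤ y) (hβ1 : 1 ≤ β) (hβ2 : β ≤ 2) :
    (x + y) ^ β ≤ 2 * (x ^ β + y ^ β) := by
  have h : (x + y) ^ β ≤ 2 ^ (β - 1) * (x ^ β + y ^ β) := by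
    exact_mod_cast NNReal.rpow_add_le_mul_rpow_add_rpow ⟨x, hx⟩ ⟨y, hy⟩ hβ1
  refine h.trans (mul_le_mul_of_nonneg_right ?_ (by positivity))
  simpa using rpow_le_rpow_of_exponent_le one_le_two (by linarith : β - 1 ≤ 1)

end RealPowers

section Scheme

variable {d N : ℕ} {φ : ℝ → ℝ} {ε κ B : ℝ} {a b : (Fin d → ℤ) → ℝ} {k : Fin d → ℤ}

/-- One explicit Euler step for `∂ₜ y = Δ (φ y)` on `latticeBox d N`, with Dirichlet value `ε`
off the cube and `κ` the ratio of the time step to the square of the mesh. -/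
noncomputable def schemeStep (φ : ℝ → ℝ) (ε κ : ℝ) (N : ℕ) (a : (Fin d → ℤ) → ℝ)
    (k : Fin d → ℤ) : ℝ :=
  if k ∈ latticeBox d N then a k + κ * discreteLaplacian (fun l => φ (a l)) k else ε

/-- The Courant–Friedrichs–Lewy stability condition for `schemeStep` on states `≥ ε`. The factor
`4 d`, twice what monotonicity needs, leaves room for the reflection argument. -/
structure CFL (d : ℕ) (φ : ℝ → ℝ) (ε κ : ℝ) : Prop where
  pos : 0 < κ
  mono : MonotoneOn φ (Ici ε)
  mul_sub_le : ∀ ⦃x y : ℝ⦄, ε ≤ x → x ≤ y → 4 * d * κ * (φ y - φ x) ≤ y - x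

/-- The states of the scheme: lattice functions bounded below by the boundary value `ε` and equal
to it off `latticeBox d N`. -/
structure IsSchemeState (ε : ℝ) (N : ℕ) (a : (Fin d → ℤ) → ℝ) : Prop where
  le : ∀ k, ε ≤ a k
  eq_of_notMem : ∀ k ∉ latticeBox d N, a k = ε

/-- Nearest neighbours in `ℤ^d`. -/
def LatticeAdj (k l : Fin d → ℤ) : Prop := ∃ i, l = k + latticeVec i ∨ l = k - latticeVec i

lemma schemeStep_of_mem (hk : k ∈ latticeBox d N) :
    schemeStep φ ε κ N a k = a k + κ * discreteLaplacian (fun l => φ (a l)) k := if_pos hk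

lemma schemeStep_of_notMem (hk : k ∉ latticeBox d N) : schemeStep φ ε κ N a k = ε := if_neg hk

lemma CFL.add_mul_discreteLaplacian_le_of_adj (hC : CFL d φ ε κ) (ha : ε ≤ a k)
    (hab : a k ≤ b k)
    (hadj : ∀ l, LatticeAdj k l → φ (a l) - φ (b l) ≤ φ (b k) - φ (a k)) :
    a k + κ * discreteLaplacian (fun l => φ (a l)) k ≤
      b k + κ * discreteLaplacian (fun l => φ (b l)) k := by
  have hlap : discreteLaplacian (fun l => φ (a l)) k - discreteLaplacian (fun l => φ (b l)) k ≤
      4 * d * (φ (b k) - φ (a k)) := by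
    calc discreteLaplacian (fun l => φ (a l)) k - discreteLaplacian (fun l => φ (b l)) k
        ≤ ∑ _i : Fin d, 4 * (φ (b k) - φ (a k)) := by
          rw [discreteLaplacian, discreteLaplacian, ← Finset.sum_sub_distrib]
          refine Finset.sum_le_sum fun i _ => ?_
          linarith [hadj _ ⟨i, Or.inl rfl⟩, hadj _ ⟨i, Or.inr rfl⟩]
      _ = 4 * d * (φ (b k) - φ (a k)) := by
          rw [Finset.sum_const, Finset.card_univ, Fintype.card_fin, nsmul_eq_mul]
          ring
  linarith [mul_le_mul_of_nonneg_left hlap hC.pos.le, hC.mul_sub_le ha hab]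

lemma CFL.add_mul_discreteLaplacian_le (hC : CFL d φ ε κ) (ha : ε ≤ a k) (hab : a k ≤ b k)
    (hadj : ∀ l, LatticeAdj k l → ε ≤ a l ∧ a l ≤ b l) :
    a k + κ * discreteLaplacian (fun l => φ (a l)) k ≤
      b k + κ * discreteLaplacian (fun l => φ (b l)) k :=
  hC.add_mul_discreteLaplacian_le_of_adj ha hab fun l hl =>
    (sub_nonpos.2 (hC.mono (hadj l hl).1 ((hadj l hl).1.trans (hadj l hl).2)
      (hadj l hl).2)).trans (sub_nonneg.2 (hC.mono ha (ha.trans hab) hab))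

lemma CFL.le_schemeStep (hC : CFL d φ ε κ) (ha : ∀ k, ε ≤ a k) (k : Fin d → ℤ) :
    ε ≤ schemeStep φ ε κ N a k := by
  by_cases hk : k ∈ latticeBox d N
  · simpa only [schemeStep_of_mem hk, discreteLaplacian_const, mul_zero, add_zero] using
      hC.add_mul_discreteLaplacian_le (a := fun _ => ε) le_rfl (ha k) fun l _ => ⟨le_rfl, ha l⟩
  · rw [schemeStep_of_notMem hk]

lemma CFL.schemeStep_le (hC : CFL d φ ε κ) (ha : ∀ k, ε ≤ a k) (hB : ∀ k, a k ≤ B)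
    (k : Fin d → ℤ) : schemeStep φ ε κ N a k ≤ B := by
  by_cases hk : k ∈ latticeBox d N
  · simpa only [schemeStep_of_mem hk, discreteLaplacian_const, mul_zero, add_zero] using
      hC.add_mul_discreteLaplacian_le (b := fun _ => B) (ha k) (hB k) fun l _ => ⟨ha l, hB l⟩
  · rw [schemeStep_of_notMem hk]
    exact (ha k).trans (hB k)

lemma IsSchemeState.mono {M : ℕ} (ha : IsSchemeState ε M a) (hMN : M ≤ N) :
    IsSchemeState ε N a :=
  ⟨ha.le, fun k hk => ha.eq_of_notMem k fun hk' => hk (latticeBox_mono hMN hk')⟩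

lemma IsSchemeState.step (ha : IsSchemeState ε N a) (hC : CFL d φ ε κ) :
    IsSchemeState ε N (schemeStep φ ε κ N a) :=
  ⟨hC.le_schemeStep ha.le, fun _ hk => schemeStep_of_notMem hk⟩

lemma IsSchemeState.iterate (ha : IsSchemeState ε N a) (hC : CFL d φ ε κ) (n : ℕ) :
    IsSchemeState ε N ((schemeStep φ ε κ N)^[n] a) := by
  induction n with
  | zero => exact ha
  | succ n ih => rw [Function.iterate_succ_apply']; exact ih.step hC

lemma CFL.le_iterate (hC : CFL d φ ε κ) (ha : ∀ k, ε ≤ a k) (n : ℕ) (k : Fin d → ℤ) :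
    ε ≤ (schemeStep φ ε κ N)^[n] a k := by
  induction n generalizing k with
  | zero => exact ha k
  | succ n ih =>
    rw [Function.iterate_succ_apply']
    exact hC.le_schemeStep ih k

lemma CFL.iterate_le (hC : CFL d φ ε κ) (ha : ∀ k, ε ≤ a k) (hB : ∀ k, a k ≤ B) (n : ℕ)
    (k : Fin d → ℤ) : (schemeStep φ ε κ N)^[n] a k ≤ B := by
  induction n generalizing k with
  | zero => exact hB k
  | succ n ih =>
    rw [Function.iterate_succ_apply']
    exact hC.schemeStep_le (hC.le_iterate ha n) ih k

lemma sum_mul_schemeStep (w : (Fin d → ℤ) → ℝ) :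
    ∑ k ∈ latticeBox d N, w k * schemeStep φ ε κ N a k =
      ∑ k ∈ latticeBox d N, w k * a k +
        κ * ∑ k ∈ latticeBox d N, w k * discreteLaplacian (fun l => φ (a l)) k := by
  rw [Finset.mul_sum, ← Finset.sum_add_distrib]
  refine Finset.sum_congr rfl fun k hk => ?_
  rw [schemeStep_of_mem hk]
  ring

lemma sum_schemeStep : ∑ k ∈ latticeBox d N, schemeStep φ ε κ N a k =
    ∑ k ∈ latticeBox d N, a k +
      κ * ∑ k ∈ latticeBox d N, discreteLaplacian (fun l => φ (a l)) k := by
  simpa only [one_mul] using sum_mul_schemeStep (N := N) (a := a) (fun _ => 1)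

lemma IsSchemeState.sum_discreteLaplacian_comp_nonpos (ha : IsSchemeState ε N a)
    (hφ : MonotoneOn φ (Ici ε)) :
    ∑ k ∈ latticeBox d N, discreteLaplacian (fun l => φ (a l)) k ≤ 0 :=
  sum_discreteLaplacian_nonpos (c := φ ε) (fun k => hφ self_mem_Ici (ha.le k) (ha.le k))
    fun k hk => by rw [ha.eq_of_notMem k hk]

lemma IsSchemeState.sum_schemeStep_le (ha : IsSchemeState ε N a) (hC : CFL d φ ε κ) :
    ∑ k ∈ latticeBox d N, schemeStep φ ε κ N a k ≤ ∑ k ∈ latticeBox d N, a k := by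
  rw [sum_schemeStep]
  linarith [mul_nonpos_of_nonneg_of_nonpos hC.pos.le (ha.sum_discreteLaplacian_comp_nonpos hC.mono)]

lemma IsSchemeState.sum_iterate_le (ha : IsSchemeState ε N a) (hC : CFL d φ ε κ) (n : ℕ) :
    ∑ k ∈ latticeBox d N, (schemeStep φ ε κ N)^[n] a k ≤ ∑ k ∈ latticeBox d N, a k := by
  induction n with
  | zero => exact le_rfl
  | succ n ih =>
    rw [Function.iterate_succ_apply']
    exact ((ha.iterate hC n).sum_schemeStep_le hC).trans ih

lemma IsSchemeState.le_sum_quadraticWeight_schemeStep (ha : IsSchemeState ε N a)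
    (hC : CFL d φ ε κ) :
    ∑ k ∈ latticeBox d N, quadraticWeight N k * a k -
        κ * (2 * d / (N + 1 : ℝ) ^ 2 * ∑ k ∈ latticeBox d N, (φ (a k) - φ ε)) ≤
      ∑ k ∈ latticeBox d N, quadraticWeight N k * schemeStep φ ε κ N a k := by
  have hweight := le_sum_quadraticWeight_mul_discreteLaplacian (N := N)
    (g := fun k => φ (a k) - φ ε)
    (fun k => sub_nonneg.2 (hC.mono self_mem_Ici (ha.le k) (ha.le k)))
    (fun k hk => by rw [ha.eq_of_notMem k hk, sub_self])
  simp only [discreteLaplacian_sub_const] at hweight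
  rw [sum_mul_schemeStep]
  linarith [mul_le_mul_of_nonneg_left hweight hC.pos.le]

end Scheme

section Reflection

variable {d N M : ℕ} {φ : ℝ → ℝ} {ε κ : ℝ} {a : (Fin d → ℤ) → ℝ}

/-- The reflection of `ℤ^d` in the hyperplane `k i = A / 2`. -/
def latticeReflect (i : Fin d) (A : ℤ) (k : Fin d → ℤ) : Fin d → ℤ :=
  Function.update k i (A - k i)

lemma latticeReflect_apply_self (i : Fin d) (A : ℤ) (k : Fin d → ℤ) :
    latticeReflect i A k i = A - k i := Function.update_self _ _ _

lemma latticeReflect_apply_of_ne {i j : Fin d} (h : j ≠ i) (A : ℤ) (k : Fin d → ℤ) :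
    latticeReflect i A k j = k j := Function.update_of_ne h _ _

lemma latticeReflect_latticeReflect (i : Fin d) (A : ℤ) (k : Fin d → ℤ) :
    latticeReflect i A (latticeReflect i A k) = k := by
  simp [latticeReflect]

lemma latticeReflect_add (i : Fin d) (A : ℤ) (k v : Fin d → ℤ) :
    latticeReflect i A (k + v) = latticeReflect i A k + Function.update v i (-v i) := by
  ext j
  by_cases hj : j = i
  · subst hj
    simp only [latticeReflect, Function.update_self, Pi.add_apply]
    ring
  · simp [latticeReflect, hj]

lemma discreteLaplacian_comp_latticeReflect (g : (Fin d → ℤ) → ℝ) (i : Fin d) (A : ℤ)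
    (k : Fin d → ℤ) : discreteLaplacian (fun l => g (latticeReflect i A l)) k =
      discreteLaplacian g (latticeReflect i A k) := by
  refine Finset.sum_congr rfl fun j _ => ?_
  simp only [sub_eq_add_neg, latticeReflect_add]
  by_cases hj : j = i
  · subst hj
    have hplus : Function.update (latticeVec j) j (-latticeVec j j) = -latticeVec j := by
      ext l; by_cases hl : l = j <;> simp [hl]
    have hminus : Function.update (-latticeVec j) j (-(-latticeVec j) j) = latticeVec j := by
      ext l; by_cases hl : l = j <;> simp [hl]
    rw [hplus, hminus]
    ring
  · rw [Function.update_eq_self_iff.2 (by simp [Ne.symm hj]),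
      Function.update_eq_self_iff.2 (by simp [Ne.symm hj])]

lemma LatticeAdj.natAbs_le_or_eq_latticeReflect {k l : Fin d → ℤ} (hl : LatticeAdj k l)
    {i : Fin d} {A : ℤ} (hk : (k i).natAbs ≤ (A - k i).natAbs) (hfix : k i ≠ A - k i) :
    (l i).natAbs ≤ (A - l i).natAbs ∨ l = latticeReflect i A k := by
  refine or_iff_not_imp_left.2 fun hli => ?_
  obtain ⟨j, hj⟩ := hl
  obtain rfl : j = i := by
    by_contra hji
    have : l i = k i := by rcases hj with rfl | rfl <;> simp [Ne.symm hji]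
    omega
  ext t
  by_cases ht : t = j
  · subst ht
    rw [latticeReflect_apply_self]
    rcases hj with rfl | rfl <;>
      simp only [Pi.add_apply, Pi.sub_apply, Pi.single_eq_same] at hli ⊢ <;> omega
  · rw [latticeReflect_apply_of_ne ht]
    rcases hj with rfl | rfl <;> simp [ht]

lemma CFL.schemeStep_latticeReflect_le (hC : CFL d φ ε κ) (ha : ∀ k, ε ≤ a k) {i : Fin d}
    {A : ℤ} (h : ∀ k, (k i).natAbs ≤ (A - k i).natAbs → a (latticeReflect i A k) ≤ a k)
    (k : Fin d → ℤ) (hk : (k i).natAbs ≤ (A - k i).natAbs) :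
    schemeStep φ ε κ N a (latticeReflect i A k) ≤ schemeStep φ ε κ N a k := by
  by_cases hrk : latticeReflect i A k ∈ latticeBox d N
  swap
  · rw [schemeStep_of_notMem hrk]
    exact hC.le_schemeStep ha k
  have hkN : k ∈ latticeBox d N := mem_latticeBox.2 fun j => by
    have hj := mem_latticeBox.1 hrk j
    by_cases hji : j = i
    · subst hji
      rw [latticeReflect_apply_self] at hj
      omega
    · rwa [latticeReflect_apply_of_ne hji] at hj
  by_cases hfix : k i = A - k i
  · rw [latticeReflect, ← hfix, Function.update_eq_self]
  rw [schemeStep_of_mem hrk, schemeStep_of_mem hkN,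
    ← discreteLaplacian_comp_latticeReflect (fun l => φ (a l))]
  refine hC.add_mul_discreteLaplacian_le_of_adj (a := fun l => a (latticeReflect i A l))
    (ha _) (h k hk) fun l hl => ?_
  have hgap := hC.mono (ha _) (ha _) (h k hk)
  rcases hl.natAbs_le_or_eq_latticeReflect hk hfix with hside | rfl
  · linarith [hC.mono (ha _) (ha _) (h l hside)]
  · rw [latticeReflect_latticeReflect]

lemma CFL.iterate_le_update_zero (hC : CFL d φ ε κ) (ha : IsSchemeState ε M a) (n : ℕ)
    {k : Fin d → ℤ} {i : Fin d} (hk : 2 * M < (k i).natAbs) :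
    (schemeStep φ ε κ N)^[n] a k ≤ (schemeStep φ ε κ N)^[n] a (Function.update k i 0) := by
  have hreflect : ∀ l : Fin d → ℤ, (l i).natAbs ≤ (k i - l i).natAbs →
      (schemeStep φ ε κ N)^[n] a (latticeReflect i (k i) l) ≤ (schemeStep φ ε κ N)^[n] a l := by
    induction n with
    | zero =>
      intro l hl
      rw [Function.iterate_zero_apply, ha.eq_of_notMem]
      · exact ha.le l
      · intro hmem
        have := mem_latticeBox.1 hmem i
        rw [latticeReflect_apply_self] at this
        omega
    | succ n ih =>
      rw [Function.iterate_succ_apply']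
      exact hC.schemeStep_latticeReflect_le (hC.le_iterate ha.le n) ih
  have hzero := hreflect (Function.update k i 0) (by simp)
  rwa [latticeReflect, Function.update_self, Function.update_idem, sub_zero,
    Function.update_eq_self] at hzero

lemma CFL.iterate_le_zero (hC : CFL d φ ε κ) (ha : IsSchemeState ε M a) (n : ℕ)
    {k : Fin d → ℤ} (hk : ∀ i, 2 * M < (k i).natAbs) :
    (schemeStep φ ε κ N)^[n] a k ≤ (schemeStep φ ε κ N)^[n] a 0 := by
  have hzeroed : ∀ S : Finset (Fin d), (schemeStep φ ε κ N)^[n] a k ≤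
      (schemeStep φ ε κ N)^[n] a (S.piecewise 0 k) := fun S => by
    induction S using Finset.induction_on with
    | empty => rw [Finset.piecewise_empty]
    | insert i S hi ih =>
      rw [Finset.piecewise_insert]
      exact ih.trans (hC.iterate_le_update_zero ha n
        (by rw [Finset.piecewise_eq_of_notMem _ _ _ hi]; exact hk i))
  simpa only [Finset.piecewise_univ] using hzeroed Finset.univ

end Reflection

section Entropy

variable {d N : ℕ} {φ : ℝ → ℝ} {ε κ p q r L : ℝ} {a : (Fin d → ℤ) → ℝ}

lemma IsSchemeState.sum_comp_mul_discreteLaplacian (ha : IsSchemeState ε N a) (g : ℝ → ℝ)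
    (f : (Fin d → ℤ) → ℝ) :
    ∑ k ∈ latticeBox d N, g (a k) * discreteLaplacian f k =
      g ε * ∑ k ∈ latticeBox d N, discreteLaplacian f k -
        dirichletForm N (fun k => g (a k)) f := by
  have hgreen := sum_mul_discreteLaplacian (N := N) (f := fun k => g (a k) - g ε)
    (fun k hk => by rw [ha.eq_of_notMem k hk, sub_self]) f
  simp only [dirichletForm, sub_sub_sub_cancel_right, sub_mul, Finset.sum_sub_distrib,
    ← Finset.mul_sum] at hgreen ⊢
  linarith

lemma abs_sum_rpow_schemeStep_sub_le (hr0 : 0 ≤ r) (hr2 : r ≤ 2) (ha : ∀ k, 0 ≤ a k)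
    (hstep : ∀ k, 0 ≤ schemeStep φ ε κ N a k)
    (hL : ∀ k, |discreteLaplacian (fun l => φ (a l)) k| ≤ L) :
    |∑ k ∈ latticeBox d N, (schemeStep φ ε κ N a k + 1) ^ r -
        ∑ k ∈ latticeBox d N, (a k + 1) ^ r -
        r * κ * ∑ k ∈ latticeBox d N, (a k + 1) ^ (r - 1) *
          discreteLaplacian (fun l => φ (a l)) k| ≤
      r * (κ ^ 2 * ((latticeBox d N).card * L ^ 2)) := by
  rw [Finset.mul_sum, ← Finset.sum_sub_distrib, ← Finset.sum_sub_distrib]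
  calc _ ≤ ∑ k ∈ latticeBox d N, |(schemeStep φ ε κ N a k + 1) ^ r - (a k + 1) ^ r -
        r * κ * ((a k + 1) ^ (r - 1) * discreteLaplacian (fun l => φ (a l)) k)| :=
        Finset.abs_sum_le_sum_abs _ _
    _ ≤ ∑ _k ∈ latticeBox d N, r * (κ ^ 2 * L ^ 2) := by
        refine Finset.sum_le_sum fun k hk => ?_
        have htaylor := abs_rpow_sub_tangent_le hr0 hr2 (by linarith [ha k] : 1 ≤ a k + 1)
          (by linarith [hstep k] : 1 ≤ schemeStep φ ε κ N a k + 1)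
        have hincr : schemeStep φ ε κ N a k + 1 - (a k + 1) =
            κ * discreteLaplacian (fun l => φ (a l)) k := by
          rw [schemeStep_of_mem hk]
          ring
        rw [hincr] at htaylor
        calc _ = _ := by congr 1; ring
          _ ≤ r * (κ * discreteLaplacian (fun l => φ (a l)) k) ^ 2 := htaylor
          _ = r * (κ ^ 2 * |discreteLaplacian (fun l => φ (a l)) k| ^ 2) := by
              rw [mul_pow, sq_abs]
          _ ≤ r * (κ ^ 2 * L ^ 2) := by
              gcongr
              exact hL k
    _ = r * (κ ^ 2 * ((latticeBox d N).card * L ^ 2)) := by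
        rw [Finset.sum_const, nsmul_eq_mul]
        ring

lemma IsSchemeState.sum_rpow_schemeStep_le (ha : IsSchemeState ε N a) (hC : CFL d φ ε κ)
    (hε : 0 ≤ ε) (hq1 : 1 ≤ q) (hq2 : q ≤ 2)
    (hL : ∀ k, |discreteLaplacian (fun l => φ (a l)) k| ≤ L) :
    ∑ k ∈ latticeBox d N, (schemeStep φ ε κ N a k + 1) ^ q ≤
      ∑ k ∈ latticeBox d N, (a k + 1) ^ q + q * (κ ^ 2 * ((latticeBox d N).card * L ^ 2)) := by
  have hq0 : 0 ≤ q := by linarith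
  have htaylor := (abs_le.1 (abs_sum_rpow_schemeStep_sub_le hq0 hq2
    (fun k => hε.trans (ha.le k)) (fun k => hε.trans (hC.le_schemeStep (N := N) ha.le k)) hL)).2
  have hmono : Monovary (fun k => (a k + 1) ^ (q - 1)) fun k => φ (a k) := fun k l hkl => by
    have hle : a k ≤ a l := not_lt.1 fun hlt => hkl.not_ge (hC.mono (ha.le l) (ha.le k) hlt.le)
    have := ha.le k
    exact rpow_le_rpow (by linarith) (by linarith) (by linarith)
  have hgreen := ha.sum_comp_mul_discreteLaplacian (fun x => (x + 1) ^ (q - 1))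
    fun k => φ (a k)
  have hflux : ∑ k ∈ latticeBox d N, (a k + 1) ^ (q - 1) *
      discreteLaplacian (fun l => φ (a l)) k ≤ 0 := by
    rw [hgreen]
    linarith [mul_nonpos_of_nonneg_of_nonpos (rpow_nonneg (by linarith : 0 ≤ ε + 1) (q - 1))
      (ha.sum_discreteLaplacian_comp_nonpos hC.mono), dirichletForm_nonneg (N := N) hmono]
  linarith [mul_nonpos_of_nonneg_of_nonpos (mul_nonneg hq0 hC.pos.le) hflux]

lemma IsSchemeState.sum_rpow_iterate_le (ha : IsSchemeState ε N a) (hC : CFL d φ ε κ)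
    (hε : 0 ≤ ε) (hq1 : 1 ≤ q) (hq2 : q ≤ 2)
    (hL : ∀ n k, |discreteLaplacian (fun l => φ ((schemeStep φ ε κ N)^[n] a l)) k| ≤ L)
    {j n : ℕ} (hjn : j ≤ n) :
    ∑ k ∈ latticeBox d N, ((schemeStep φ ε κ N)^[n] a k + 1) ^ q ≤
      ∑ k ∈ latticeBox d N, ((schemeStep φ ε κ N)^[j] a k + 1) ^ q +
        q * (n * (κ ^ 2 * ((latticeBox d N).card * L ^ 2))) := by
  suffices hstrong : ∑ k ∈ latticeBox d N, ((schemeStep φ ε κ N)^[n] a k + 1) ^ q ≤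
      ∑ k ∈ latticeBox d N, ((schemeStep φ ε κ N)^[j] a k + 1) ^ q +
        (n - j) * (q * (κ ^ 2 * ((latticeBox d N).card * L ^ 2))) by
    have hj : 0 ≤ j * (q * (κ ^ 2 * ((latticeBox d N).card * L ^ 2))) := by positivity
    linarith
  induction n, hjn using Nat.le_induction with
  | base => simp
  | succ n _ ih =>
    have hstep := (ha.iterate hC n).sum_rpow_schemeStep_le hC hε hq1 hq2 (hL n)
    rw [Function.iterate_succ_apply']
    push_cast
    linarith

/-- The relative entropy `∑ ((a + 1) ^ p - p a)`, which the scheme increases for `p ≤ 1`. The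
linear correction compensates the mass lost through the boundary. -/
noncomputable def schemeEntropy (p : ℝ) (N : ℕ) (a : (Fin d → ℤ) → ℝ) : ℝ :=
  ∑ k ∈ latticeBox d N, ((a k + 1) ^ p - p * a k)

/-- The production rate of `schemeEntropy` for `∂ₜ a = Δ (φ a)`, divided by `p`. -/
noncomputable def entropyDissipation (φ : ℝ → ℝ) (p : ℝ) (N : ℕ) (a : (Fin d → ℤ) → ℝ) : ℝ :=
  -dirichletForm N (fun k => (a k + 1) ^ (p - 1)) fun k => φ (a k)

lemma schemeEntropy_le_card (hp0 : 0 ≤ p) (hp1 : p ≤ 1) (ha : ∀ k, 0 ≤ a k) :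
    schemeEntropy p N a ≤ (latticeBox d N).card := by
  calc schemeEntropy p N a ≤ ∑ _k ∈ latticeBox d N, (1 : ℝ) := by
        refine Finset.sum_le_sum fun k _ => ?_
        have := rpow_one_add_le_one_add_mul_self (by linarith [ha k] : -1 ≤ a k) hp0 hp1
        rw [add_comm (a k)]
        linarith
    _ = (latticeBox d N).card := by rw [Finset.sum_const, nsmul_eq_mul, mul_one]

lemma neg_mul_sum_le_schemeEntropy (ha : ∀ k, 0 ≤ a k) :
    -(p * ∑ k ∈ latticeBox d N, a k) ≤ schemeEntropy p N a := by
  rw [Finset.mul_sum, ← Finset.sum_neg_distrib]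
  refine Finset.sum_le_sum fun k _ => ?_
  linarith [rpow_nonneg (by linarith [ha k] : 0 ≤ a k + 1) p]

lemma IsSchemeState.mul_entropyDissipation_le (ha : IsSchemeState ε N a) (hC : CFL d φ ε κ)
    (hε : 0 ≤ ε) (hp0 : 0 ≤ p) (hp1 : p ≤ 1)
    (hL : ∀ k, |discreteLaplacian (fun l => φ (a l)) k| ≤ L) :
    p * κ * entropyDissipation φ p N a ≤
      schemeEntropy p N (schemeStep φ ε κ N a) - schemeEntropy p N a +
        p * (κ ^ 2 * ((latticeBox d N).card * L ^ 2)) := by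
  have htaylor := (abs_le.1 (abs_sum_rpow_schemeStep_sub_le hp0 (by linarith)
    (fun k => hε.trans (ha.le k)) (fun k => hε.trans (hC.le_schemeStep (N := N) ha.le k)) hL)).1
  rw [ha.sum_comp_mul_discreteLaplacian (fun x => (x + 1) ^ (p - 1)) fun k => φ (a k)] at htaylor
  have hboundary : 0 ≤ p * κ * (((ε + 1) ^ (p - 1) - 1) *
      ∑ k ∈ latticeBox d N, discreteLaplacian (fun l => φ (a l)) k) :=
    mul_nonneg (mul_nonneg hp0 hC.pos.le) (mul_nonneg_of_nonpos_of_nonpos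
      (sub_nonpos.2 (rpow_le_one_of_one_le_of_nonpos (by linarith) (by linarith)))
      (ha.sum_discreteLaplacian_comp_nonpos hC.mono))
  simp only [schemeEntropy, entropyDissipation, Finset.sum_sub_distrib, ← Finset.mul_sum]
  rw [sum_schemeStep]
  linarith

lemma IsSchemeState.mul_sum_entropyDissipation_le (ha : IsSchemeState ε N a)
    (hC : CFL d φ ε κ) (hε : 0 ≤ ε) (hp0 : 0 ≤ p) (hp1 : p ≤ 1)
    (hL : ∀ n k, |discreteLaplacian (fun l => φ ((schemeStep φ ε κ N)^[n] a l)) k| ≤ L)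
    (n : ℕ) :
    p * κ * ∑ j ∈ Finset.range n, entropyDissipation φ p N ((schemeStep φ ε κ N)^[j] a) ≤
      schemeEntropy p N ((schemeStep φ ε κ N)^[n] a) - schemeEntropy p N a +
        p * (n * (κ ^ 2 * ((latticeBox d N).card * L ^ 2))) := by
  induction n with
  | zero => simp
  | succ n ih =>
    have hstep := (ha.iterate hC n).mul_entropyDissipation_le hC hε hp0 hp1 (hL n)
    rw [Finset.sum_range_succ, Function.iterate_succ_apply']
    push_cast
    linarith

lemma IsSchemeState.exists_entropyDissipation_le (ha : IsSchemeState ε N a)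
    (hC : CFL d φ ε κ) (hε : 0 ≤ ε) (hp0 : 0 ≤ p) (hp1 : p ≤ 1)
    (hL : ∀ n k, |discreteLaplacian (fun l => φ ((schemeStep φ ε κ N)^[n] a l)) k| ≤ L)
    {n : ℕ} (hn : 0 < n) :
    ∃ j < n, p * (n * κ) * entropyDissipation φ p N ((schemeStep φ ε κ N)^[j] a) ≤
      (latticeBox d N).card + ∑ k ∈ latticeBox d N, a k +
        n * (κ ^ 2 * ((latticeBox d N).card * L ^ 2)) := by
  have hn' : (n : ℝ) ≠ 0 := by exact_mod_cast hn.ne'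
  have ha0 : ∀ k, 0 ≤ a k := fun k => hε.trans (ha.le k)
  have htotal := ha.mul_sum_entropyDissipation_le hC hε hp0 hp1 hL n
  have hupper := schemeEntropy_le_card (N := N) hp0 hp1
    fun k => hε.trans (hC.le_iterate (N := N) ha.le n k)
  have hlower := neg_mul_sum_le_schemeEntropy (N := N) (p := p) ha0
  have hmass : 0 ≤ ∑ k ∈ latticeBox d N, a k := Finset.sum_nonneg fun k _ => ha0 k
  have herr : 0 ≤ n * (κ ^ 2 * ((latticeBox d N).card * L ^ 2)) := by positivity
  set budget := (latticeBox d N).card + ∑ k ∈ latticeBox d N, a k +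
    n * (κ ^ 2 * ((latticeBox d N).card * L ^ 2))
  obtain ⟨j, hj, hle⟩ := Finset.exists_le_of_sum_le (Finset.nonempty_range_iff.2 hn.ne')
    (f := fun j => p * κ * entropyDissipation φ p N ((schemeStep φ ε κ N)^[j] a))
    (g := fun _ => budget / n) <| by
      rw [← Finset.mul_sum, Finset.sum_const, Finset.card_range, nsmul_eq_mul,
        mul_div_cancel₀ _ hn']
      nlinarith
  refine ⟨j, Finset.mem_range.1 hj, ?_⟩
  rw [le_div_iff₀ (by positivity)] at hle
  linarith

end Entropy

section GradientBound

variable {d N : ℕ} {m ε p s : ℝ} {a : (Fin d → ℤ) → ℝ}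

lemma IsSchemeState.sum_edges_add (ha : IsSchemeState ε N a) :
    ∑ k ∈ latticeBox d (N + 1), ∑ i, (a k + 1 + (a (k + latticeVec i) + 1)) =
      2 * d * ((1 + ε) * (latticeBox d (N + 1)).card + ∑ k ∈ latticeBox d N, (a k - ε)) := by
  have hvanish : ∀ k ∉ latticeBox d N, a k - ε = 0 := fun k hk => by
    rw [ha.eq_of_notMem k hk, sub_self]
  have hdirection : ∀ i : Fin d,
      ∑ k ∈ latticeBox d (N + 1), (a k + 1 + (a (k + latticeVec i) + 1)) =
        2 * ((1 + ε) * (latticeBox d (N + 1)).card + ∑ k ∈ latticeBox d N, (a k - ε)) := by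
    intro i
    calc _ = ∑ k ∈ latticeBox d (N + 1), ((a k - ε) + (a (k + latticeVec i) - ε) +
          2 * (1 + ε)) := Finset.sum_congr rfl fun k _ => by ring
      _ = _ := by
        rw [Finset.sum_add_distrib, Finset.sum_add_distrib, sum_latticeBox_succ hvanish,
          sum_latticeBox_succ_add hvanish, Finset.sum_const, nsmul_eq_mul]
        ring
  rw [Finset.sum_comm, Finset.sum_congr rfl fun i _ => hdirection i, Finset.sum_const,
    Finset.card_univ, Fintype.card_fin, nsmul_eq_mul]
  ring

lemma sq_sum_gradNorm_rpow_le (hm0 : 0 < m) (hm1 : m ≤ 1) (hp1 : p < 1) (hpm : 0 ≤ p + m)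
    (ha : ∀ k, 0 < a k) :
    (∑ k ∈ latticeBox d (N + 1), gradNorm (fun l => (a l + 1) ^ ((p + m) / 2)) k) ^ 2 ≤
      (∑ k ∈ latticeBox d (N + 1), ∑ i, (a k + 1 + (a (k + latticeVec i) + 1))) /
        (m * (1 - p)) * entropyDissipation (fun x => x ^ m) p N a := by
  have : 0 < m * (1 - p) := mul_pos hm0 (sub_pos.2 hp1)
  have hedges : entropyDissipation (fun x => x ^ m) p N a =
      ∑ k ∈ latticeBox d (N + 1), ∑ i,
        ((a k + 1) ^ (p - 1) - (a (k + latticeVec i) + 1) ^ (p - 1)) *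
          (a (k + latticeVec i) ^ m - a k ^ m) := by
    simp only [entropyDissipation, dirichletForm, ← Finset.sum_neg_distrib, ← neg_mul, neg_sub]
  rw [hedges]
  simp only [gradNorm, ← Finset.sum_product', Finset.sum_div]
  refine Finset.sum_sq_le_sum_mul_sum_of_sq_le_mul _ (fun e _ => ?_) (fun e _ => ?_)
    fun e _ => ?_
  · have := ha e.1
    have := ha (e.1 + latticeVec e.2)
    positivity
  · exact sub_mul_rpow_sub_nonneg hm0.le hp1.le (ha _) (ha _)
  · rw [sq_abs]
    exact sq_rpow_sub_le_entropy_dissipation hm0 hm1 hp1 hpm (ha _) (ha _)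

lemma entropyDissipation_rpow_nonneg (hm0 : 0 ≤ m) (hp1 : p ≤ 1) (ha : ∀ k, 0 < a k) :
    0 ≤ entropyDissipation (fun x => x ^ m) p N a := by
  simp only [entropyDissipation, dirichletForm, ← Finset.sum_neg_distrib, ← neg_mul, neg_sub]
  exact Finset.sum_nonneg fun k _ => Finset.sum_nonneg fun i _ =>
    sub_mul_rpow_sub_nonneg hm0 hp1 (ha _) (ha _)

lemma IsSchemeState.sum_rpow_le_gradNorm (ha : IsSchemeState ε N a) (hd : 2 ≤ d) (hε0 : 0 ≤ ε)
    (hε1 : ε ≤ 1) (hs0 : 0 ≤ s) (hs : s * ((d : ℝ) / (d - 1)) ≤ 2) :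
    ∑ k ∈ latticeBox d N, (a k + 1) ^ (s * ((d : ℝ) / (d - 1))) ≤
      2 * (∑ k ∈ latticeBox d (N + 1), gradNorm (fun l => (a l + 1) ^ s) k) ^
        ((d : ℝ) / (d - 1)) + 8 * (latticeBox d N).card := by
  have hd2 : (2 : ℝ) ≤ d := by exact_mod_cast hd
  have hβ1 : 1 ≤ (d : ℝ) / (d - 1) := by rw [le_div_iff₀ (by linarith)]; linarith
  have hβ2 : (d : ℝ) / (d - 1) ≤ 2 := by rw [div_le_iff₀ (by linarith)]; linarith
  have ha0 : ∀ k, 0 ≤ a k := fun k => hε0.trans (ha.le k)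
  have hexcess : ∀ k, 0 ≤ (a k + 1) ^ s - (ε + 1) ^ s := fun k =>
    sub_nonneg.2 (rpow_le_rpow (by linarith) (by linarith [ha.le k]) hs0)
  have hsobolev := discrete_sobolev (N := N) hd hexcess
    fun k hk => by rw [ha.eq_of_notMem k hk, sub_self]
  simp only [gradNorm, sub_sub_sub_cancel_right] at hsobolev
  set β := (d : ℝ) / (d - 1)
  have hboundary : ((ε + 1) ^ s) ^ β ≤ 4 := by
    rw [← rpow_mul (by linarith)]
    calc (ε + 1) ^ (s * β) ≤ (2 : ℝ) ^ (s * β) := by gcongr; linarith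
      _ ≤ (2 : ℝ) ^ (2 : ℝ) := rpow_le_rpow_of_exponent_le one_le_two hs
      _ = 4 := by norm_num
  have hpoint : ∀ k, (a k + 1) ^ (s * β) ≤ 2 * ((a k + 1) ^ s - (ε + 1) ^ s) ^ β + 8 := by
    intro k
    have hadd := add_rpow_le_two_mul (hexcess k) (rpow_nonneg (by linarith) s) hβ1 hβ2
      (y := (ε + 1) ^ s)
    rw [sub_add_cancel, ← rpow_mul (by linarith [ha0 k])] at hadd
    linarith
  calc ∑ k ∈ latticeBox d N, (a k + 1) ^ (s * β)
      ≤ ∑ k ∈ latticeBox d N, (2 * ((a k + 1) ^ s - (ε + 1) ^ s) ^ β + 8) :=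
        Finset.sum_le_sum fun k _ => hpoint k
    _ = 2 * ∑ k ∈ latticeBox d N, ((a k + 1) ^ s - (ε + 1) ^ s) ^ β +
          8 * (latticeBox d N).card := by
        rw [Finset.sum_add_distrib, Finset.mul_sum, Finset.sum_const, nsmul_eq_mul]
        ring
    _ ≤ _ := by simp only [gradNorm]; linarith

end GradientBound

section SchemeRun

variable {d N n : ℕ} {m ε κ τ p : ℝ} {a : (Fin d → ℤ) → ℝ}

/-- The explicit scheme for the fast diffusion equation itself, `φ x = x ^ m`. -/
noncomputable abbrev fdeStep (m ε κ : ℝ) (N : ℕ) :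
    ((Fin d → ℤ) → ℝ) → (Fin d → ℤ) → ℝ :=
  schemeStep (fun x => x ^ m) ε κ N

/-- A run of `n` steps of the scheme up to the time `n κ = τ N²`, starting from a state `a` of mass
`N ^ d` above the boundary value. The last field asks that `κ` be so small that the second-order
errors, accumulated over the run, are dominated by the mass. -/
structure IsFDERun (m ε κ τ : ℝ) (N n : ℕ) (a : (Fin d → ℤ) → ℝ) : Prop where
  one_le : 1 ≤ N
  pos : 0 < ε
  le_one : ε ≤ 1
  cfl : CFL d (fun x => x ^ m) ε κ
  state : IsSchemeState ε N a
  mass : ∑ k ∈ latticeBox d N, (a k - ε) = (N : ℝ) ^ d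
  time : n * κ = τ * N ^ 2
  error_le : n * (κ ^ 2 * ((latticeBox d N).card *
    (2 * d * ((ε + (N : ℝ) ^ d) ^ m - ε ^ m)) ^ 2)) ≤ (N : ℝ) ^ d

lemma CFL.abs_discreteLaplacian_iterate_le {φ : ℝ → ℝ} {Y : ℝ} (hC : CFL d φ ε κ)
    (ha : ∀ k, ε ≤ a k) (hY : ∀ k, a k ≤ Y) (j : ℕ) (k : Fin d → ℤ) :
    |discreteLaplacian (fun l => φ ((schemeStep φ ε κ N)^[j] a l)) k| ≤
      2 * d * (φ Y - φ ε) := by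
  have hle : ∀ l, ε ≤ (schemeStep φ ε κ N)^[j] a l := hC.le_iterate ha j
  have hge : ∀ l, (schemeStep φ ε κ N)^[j] a l ≤ Y := hC.iterate_le ha hY j
  rw [← discreteLaplacian_sub_const _ (φ ε)]
  exact abs_discreteLaplacian_le
    (fun l => sub_nonneg.2 (hC.mono self_mem_Ici (hle l) (hle l)))
    (fun l => sub_le_sub_right (hC.mono (hle l) ((hle l).trans (hge l)) (hge l)) _) k

lemma IsSchemeState.le_add_sum (ha : IsSchemeState ε N a) (k : Fin d → ℤ) :
    a k ≤ ε + ∑ l ∈ latticeBox d N, (a l - ε) := by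
  have hnonneg : ∀ l ∈ latticeBox d N, 0 ≤ a l - ε := fun l _ => sub_nonneg.2 (ha.le l)
  by_cases hk : k ∈ latticeBox d N
  · linarith [Finset.single_le_sum hnonneg hk]
  · linarith [ha.eq_of_notMem k hk, Finset.sum_nonneg hnonneg]

namespace IsFDERun

lemma abs_discreteLaplacian_le (h : IsFDERun m ε κ τ N n a) (j : ℕ) (k : Fin d → ℤ) :
    |discreteLaplacian (fun l => (fdeStep m ε κ N)^[j] a l ^ m) k| ≤
      2 * d * ((ε + (N : ℝ) ^ d) ^ m - ε ^ m) :=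
  h.cfl.abs_discreteLaplacian_iterate_le h.state.le
    (fun k => (h.state.le_add_sum k).trans_eq (by rw [h.mass])) j k

lemma sum_iterate_sub_le (h : IsFDERun m ε κ τ N n a) (j : ℕ) :
    ∑ k ∈ latticeBox d N, ((fdeStep m ε κ N)^[j] a k - ε) ≤ (N : ℝ) ^ d := by
  rw [← h.mass, Finset.sum_sub_distrib, Finset.sum_sub_distrib]
  linarith [h.state.sum_iterate_le h.cfl j]

lemma iterate_pos (h : IsFDERun m ε κ τ N n a) (j : ℕ) (k : Fin d → ℤ) :
    0 < (fdeStep m ε κ N)^[j] a k :=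
  h.pos.trans_le (h.cfl.le_iterate h.state.le j k)

lemma pow_pos (h : IsFDERun m ε κ τ N n a) : (0 : ℝ) < (N : ℝ) ^ d := by
  have : (0 : ℝ) < N := by exact_mod_cast h.one_le
  positivity

lemma exists_entropyDissipation_le (h : IsFDERun m ε κ τ N n a) (hτ : 0 < τ) (hp0 : 0 < p)
    (hp1 : p ≤ 1) :
    ∃ j < n, entropyDissipation (fun x => x ^ m) p N ((fdeStep m ε κ N)^[j] a) ≤
      (2 + 2 * 3 ^ d) / (p * τ) * ((N : ℝ) ^ d / N ^ 2) := by
  have hN : (0 : ℝ) < N := by exact_mod_cast h.one_le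
  have hn : 0 < n := by
    have : 0 < n * κ := h.time ▸ by positivity
    exact_mod_cast (pos_iff_pos_of_mul_pos this).2 h.cfl.pos
  obtain ⟨j, hj, hdiss⟩ := h.state.exists_entropyDissipation_le h.cfl h.pos.le hp0.le hp1
    h.abs_discreteLaplacian_le hn
  have hcard := card_latticeBox_le (d := d) h.one_le
  have hmass : ∑ k ∈ latticeBox d N, a k ≤ (1 + 3 ^ d) * (N : ℝ) ^ d := by
    have hmass' := h.mass
    rw [Finset.sum_sub_distrib, Finset.sum_const, nsmul_eq_mul] at hmass'
    linarith [mul_le_of_le_one_right (latticeBox d N).card.cast_nonneg h.le_one]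
  refine ⟨j, hj, ?_⟩
  rw [h.time] at hdiss
  rw [div_mul_div_comm, le_div_iff₀ (by positivity)]
  linarith [h.error_le]

lemma exists_sum_gradNorm_le (h : IsFDERun m ε κ τ N n a) (hτ : 0 < τ) (hm0 : 0 < m)
    (hm1 : m ≤ 1) (hp0 : 0 < p) (hp1 : p < 1) :
    ∃ j < n, ∑ k ∈ latticeBox d (N + 1),
        gradNorm (fun l => ((fdeStep m ε κ N)^[j] a l + 1) ^ ((p + m) / 2)) k ≤
      √(2 * d * (2 * 5 ^ d + 1) / (m * (1 - p)) * ((2 + 2 * 3 ^ d) / (p * τ))) *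
        ((N : ℝ) ^ d / N) := by
  obtain ⟨j, hj, hdiss⟩ := h.exists_entropyDissipation_le hτ hp0 hp1.le
  have : 0 < m * (1 - p) := mul_pos hm0 (sub_pos.2 hp1)
  have hNd := h.pow_pos
  have hedges : ∑ k ∈ latticeBox d (N + 1), ∑ i,
      ((fdeStep m ε κ N)^[j] a k + 1 + ((fdeStep m ε κ N)^[j] a (k + latticeVec i) + 1)) ≤
        2 * d * (2 * 5 ^ d + 1) * (N : ℝ) ^ d := by
    have hcard := card_latticeBox_succ_le (d := d) h.one_le
    have hone : (1 + ε) * (latticeBox d (N + 1)).card ≤ 2 * (5 ^ d * (N : ℝ) ^ d) :=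
      mul_le_mul (by linarith [h.le_one]) hcard (by positivity) zero_le_two
    rw [(h.state.iterate h.cfl j).sum_edges_add, mul_assoc (2 * d : ℝ)]
    gcongr
    linarith [h.sum_iterate_sub_le j]
  refine ⟨j, hj, (abs_le_of_sq_le_sq' ?_ (by positivity)).2⟩
  rw [mul_pow, sq_sqrt (by positivity)]
  calc _ ≤ _ := sq_sum_gradNorm_rpow_le hm0 hm1 hp1 (by linarith) (h.iterate_pos j)
    _ ≤ 2 * d * (2 * 5 ^ d + 1) * (N : ℝ) ^ d / (m * (1 - p)) *
        ((2 + 2 * 3 ^ d) / (p * τ) * ((N : ℝ) ^ d / N ^ 2)) :=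
      mul_le_mul (by gcongr) hdiss
        (entropyDissipation_rpow_nonneg hm0.le hp1.le (h.iterate_pos j)) (by positivity)
    _ = _ := by ring

end IsFDERun

lemma natCast_pow_div_rpow (hd : 2 ≤ d) (hN : 1 ≤ N) :
    ((N : ℝ) ^ d / N) ^ ((d : ℝ) / (d - 1)) = (N : ℝ) ^ d := by
  have hd1 : (d : ℝ) - 1 ≠ 0 := by
    have : (2 : ℝ) ≤ d := by exact_mod_cast hd
    linarith
  have hN0 : (0 : ℝ) < N := by exact_mod_cast hN
  rw [← rpow_natCast, ← rpow_sub_one hN0.ne', ← rpow_mul hN0.le, mul_div_cancel₀ _ hd1]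

/-- A uniform `ℓ^q` bound with `q = (p + m) / 2 * d / (d - 1)`: the entropy estimate yields it at
one time of the run, and `∑ (a + 1) ^ q` hardly increases afterwards. -/
lemma exists_sum_rpow_iterate_le (hd : 2 ≤ d) (hm0 : 0 < m) (hm1 : m ≤ 1) (hp0 : 0 < p)
    (hp1 : p < 1) (hτ : 0 < τ) (hq1 : 1 ≤ (p + m) / 2 * ((d : ℝ) / (d - 1)))
    (hq2 : (p + m) / 2 * ((d : ℝ) / (d - 1)) ≤ 2) :
    ∃ C > 0, ∀ (N n : ℕ) (ε κ : ℝ) (a : (Fin d → ℤ) → ℝ), IsFDERun m ε κ τ N n a →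
      ∑ k ∈ latticeBox d N, ((fdeStep m ε κ N)^[n] a k + 1) ^ ((p + m) / 2 * ((d : ℝ) / (d - 1)))
        ≤ C * (N : ℝ) ^ d := by
  set D := √(2 * d * (2 * 5 ^ d + 1) / (m * (1 - p)) * ((2 + 2 * 3 ^ d) / (p * τ)))
  refine ⟨2 * D ^ ((d : ℝ) / (d - 1)) + 8 * 3 ^ d + 2, by positivity,
    fun N n ε κ a h => ?_⟩
  have hβ : 0 ≤ (d : ℝ) / (d - 1) := by
    have : (2 : ℝ) ≤ d := by exact_mod_cast hd
    exact div_nonneg (by linarith) (by linarith)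
  obtain ⟨j, hj, hgrad⟩ := h.exists_sum_gradNorm_le hτ hm0 hm1 hp0 hp1
  have hgood := (h.state.iterate h.cfl j).sum_rpow_le_gradNorm hd h.pos.le h.le_one
    (by linarith : 0 ≤ (p + m) / 2) hq2
  have hrpow := rpow_le_rpow (Finset.sum_nonneg fun k _ => gradNorm_nonneg _ k) hgrad hβ
  rw [mul_rpow (sqrt_nonneg _) (by positivity), natCast_pow_div_rpow hd h.one_le] at hrpow
  have hlater := h.state.sum_rpow_iterate_le h.cfl h.pos.le hq1 hq2
    h.abs_discreteLaplacian_le hj.le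
  have herr := mul_le_mul hq2 h.error_le (by positivity) zero_le_two
  linarith [card_latticeBox_le (d := d) h.one_le]

end SchemeRun

section Persistence

variable {d N M n : ℕ} {m ε κ τ : ℝ} {a : (Fin d → ℤ) → ℝ}

lemma rpow_le_one_add {x : ℝ} (hm0 : 0 ≤ m) (hm1 : m ≤ 1) (hx : 0 ≤ x) : x ^ m ≤ 1 + x :=
  calc x ^ m ≤ (1 + x) ^ m := by gcongr; linarith
    _ ≤ (1 + x) ^ (1 : ℝ) := rpow_le_rpow_of_exponent_le (by linarith) hm1
    _ = 1 + x := rpow_one _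

lemma IsSchemeState.le_sum_quadraticWeight (ha : IsSchemeState ε M a)
    (hM : (d : ℝ) * M ^ 2 ≤ 1 / 4 * (N + 1) ^ 2) :
    3 / 4 * ∑ k ∈ latticeBox d N, (a k - ε) ≤
      ∑ k ∈ latticeBox d N, quadraticWeight N k * (a k - ε) := by
  rw [Finset.mul_sum]
  refine Finset.sum_le_sum fun k _ => ?_
  by_cases hk : k ∈ latticeBox d M
  · refine mul_le_mul_of_nonneg_right ?_ (sub_nonneg.2 (ha.le k))
    have hsum : ∑ j, (k j : ℝ) ^ 2 ≤ d * M ^ 2 := by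
      calc ∑ j, (k j : ℝ) ^ 2 ≤ ∑ _j : Fin d, (M : ℝ) ^ 2 := by
            refine Finset.sum_le_sum fun j _ => sq_le_sq.2 ?_
            rw [Nat.abs_cast, ← Int.cast_abs, Int.abs_eq_natAbs]
            exact_mod_cast mem_latticeBox.1 hk j
        _ = d * M ^ 2 := by
            rw [Finset.sum_const, Finset.card_univ, Fintype.card_fin, nsmul_eq_mul]
    have hquot : (∑ j, (k j : ℝ) ^ 2) / (N + 1 : ℝ) ^ 2 ≤ 1 / 4 := by
      rw [div_le_iff₀ (by positivity)]
      exact hsum.trans hM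
    rw [quadraticWeight]
    linarith
  · rw [ha.eq_of_notMem k hk, sub_self, mul_zero, mul_zero]

namespace IsFDERun

lemma sum_iterate_rpow_sub_le (h : IsFDERun m ε κ τ N n a) (hm0 : 0 ≤ m) (hm1 : m ≤ 1)
    (j : ℕ) :
    ∑ k ∈ latticeBox d N, ((fdeStep m ε κ N)^[j] a k ^ m - ε ^ m) ≤
      (2 * 3 ^ d + 1) * (N : ℝ) ^ d := by
  calc ∑ k ∈ latticeBox d N, ((fdeStep m ε κ N)^[j] a k ^ m - ε ^ m)
      ≤ ∑ k ∈ latticeBox d N, ((fdeStep m ε κ N)^[j] a k - ε + 2) := by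
        refine Finset.sum_le_sum fun k _ => ?_
        linarith [rpow_le_one_add hm0 hm1 (h.iterate_pos j k).le, rpow_nonneg h.pos.le m,
          h.le_one]
    _ = ∑ k ∈ latticeBox d N, ((fdeStep m ε κ N)^[j] a k - ε) + 2 * (latticeBox d N).card := by
        rw [Finset.sum_add_distrib, Finset.sum_const, nsmul_eq_mul, mul_comm (2 : ℝ)]
    _ ≤ _ := by linarith [h.sum_iterate_sub_le j, card_latticeBox_le (d := d) h.one_le]

lemma le_sum_quadraticWeight_iterate (h : IsFDERun m ε κ τ N n a) (hm0 : 0 ≤ m) (hm1 : m ≤ 1)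
    (j : ℕ) :
    ∑ k ∈ latticeBox d N, quadraticWeight N k * a k -
        j * (κ * (2 * d / (N + 1 : ℝ) ^ 2 * ((2 * 3 ^ d + 1) * (N : ℝ) ^ d))) ≤
      ∑ k ∈ latticeBox d N, quadraticWeight N k * (fdeStep m ε κ N)^[j] a k := by
  induction j with
  | zero => simp
  | succ j ih =>
    have hstep := (h.state.iterate h.cfl j).le_sum_quadraticWeight_schemeStep h.cfl
    have hflux : κ * (2 * d / (N + 1 : ℝ) ^ 2 *
          ∑ k ∈ latticeBox d N, ((fdeStep m ε κ N)^[j] a k ^ m - ε ^ m)) ≤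
        κ * (2 * d / (N + 1 : ℝ) ^ 2 * ((2 * 3 ^ d + 1) * (N : ℝ) ^ d)) :=
      mul_le_mul_of_nonneg_left (mul_le_mul_of_nonneg_left
        (h.sum_iterate_rpow_sub_le hm0 hm1 j) (by positivity)) h.cfl.pos.le
    rw [Function.iterate_succ_apply']
    push_cast
    linarith

lemma half_pow_le_sum_iterate (h : IsFDERun m ε κ τ N n a) (hm0 : 0 ≤ m) (hm1 : m ≤ 1)
    (ha : IsSchemeState ε M a) (hM : (d : ℝ) * M ^ 2 ≤ 1 / 4 * (N + 1) ^ 2)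
    (hτ : τ * (2 * d * (2 * 3 ^ d + 1)) ≤ 1 / 4) :
    1 / 2 * (N : ℝ) ^ d ≤ ∑ k ∈ latticeBox d N, ((fdeStep m ε κ N)^[n] a k - ε) := by
  have hNd := h.pow_pos
  have hinit := ha.le_sum_quadraticWeight (N := N) hM
  rw [h.mass] at hinit
  have hloss : n * (κ * (2 * d / (N + 1 : ℝ) ^ 2 * ((2 * 3 ^ d + 1) * (N : ℝ) ^ d))) ≤
      1 / 4 * (N : ℝ) ^ d := by
    have hratio : (N : ℝ) ^ 2 / (N + 1) ^ 2 ≤ 1 := by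
      rw [div_le_one (by positivity)]
      gcongr
      linarith
    calc n * (κ * (2 * d / (N + 1 : ℝ) ^ 2 * ((2 * 3 ^ d + 1) * (N : ℝ) ^ d)))
        = n * κ / (N + 1 : ℝ) ^ 2 * (2 * d * (2 * 3 ^ d + 1)) * (N : ℝ) ^ d := by ring
      _ = τ * (2 * d * (2 * 3 ^ d + 1)) * ((N : ℝ) ^ 2 / (N + 1) ^ 2) * (N : ℝ) ^ d := by
          rw [h.time]
          ring
      _ ≤ 1 / 4 * 1 * (N : ℝ) ^ d := by gcongr
      _ = _ := by ring
  have hweight : ∑ k ∈ latticeBox d N, quadraticWeight N k * ((fdeStep m ε κ N)^[n] a k - ε) ≤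
      ∑ k ∈ latticeBox d N, ((fdeStep m ε κ N)^[n] a k - ε) :=
    Finset.sum_le_sum fun k _ => mul_le_of_le_one_left
      (sub_nonneg.2 (h.cfl.le_iterate h.state.le n k)) (quadraticWeight_le_one k)
  have hevolve := h.le_sum_quadraticWeight_iterate hm0 hm1 n
  simp only [mul_sub, Finset.sum_sub_distrib] at hinit hweight ⊢
  linarith

end IsFDERun

end Persistence

section Slabs

variable {d N M n : ℕ} {m ε κ τ q Λ C : ℝ} {a : (Fin d → ℤ) → ℝ}

/-- The part of the cube of radius `N` within distance `2 M` of a coordinate hyperplane. This is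
what reflection in hyperplanes beyond the cube of radius `M` cannot control. -/
noncomputable def latticeSlabs (d N M : ℕ) : Finset (Fin d → ℤ) :=
  {k ∈ latticeBox d N | ∃ i, (k i).natAbs ≤ 2 * M}

lemma card_latticeSlabs_le (d N M : ℕ) :
    ((latticeSlabs d N M).card : ℝ) ≤ d * ((4 * M + 1) * (2 * N + 1 : ℝ) ^ (d - 1)) := by
  classical
  let slab (i : Fin d) : Finset (Fin d → ℤ) := Fintype.piFinset
    fun j => Finset.Icc (-(if j = i then 2 * M else N : ℤ)) (if j = i then 2 * M else N)
  have hcover : latticeSlabs d N M ⊆ Finset.univ.biUnion slab := fun k hk => by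
    obtain ⟨hkN, i, hi⟩ := Finset.mem_filter.1 hk
    refine Finset.mem_biUnion.2 ⟨i, Finset.mem_univ _, Fintype.mem_piFinset.2 fun j => ?_⟩
    have := mem_latticeBox.1 hkN j
    rw [Finset.mem_Icc]
    split_ifs with hj
    · subst hj
      omega
    · omega
  have hslab : ∀ i, (slab i).card = (4 * M + 1) * (2 * N + 1) ^ (d - 1) := fun i => by
    have hside : ∀ j, (Finset.Icc (-(if j = i then 2 * M else N : ℤ))
        (if j = i then 2 * M else N)).card = if j = i then 4 * M + 1 else 2 * N + 1 := fun j => by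
      split_ifs <;> rw [Int.card_Icc] <;> omega
    simp only [slab, Fintype.card_piFinset, hside]
    rw [← Finset.mul_prod_erase _ _ (Finset.mem_univ i), if_pos rfl,
      Finset.prod_congr rfl fun j hj => if_neg (Finset.ne_of_mem_erase hj), Finset.prod_const,
      Finset.card_erase_of_mem (Finset.mem_univ i), Finset.card_univ, Fintype.card_fin]
  have hcard := (Finset.card_le_card hcover).trans Finset.card_biUnion_le
  simp only [hslab, Finset.sum_const, Finset.card_univ, Fintype.card_fin, smul_eq_mul] at hcard
  exact_mod_cast hcard

lemma card_latticeSlabs_le_mul_pow {θ : ℝ} (hd : 1 ≤ d) (hN : 1 ≤ N) (hM : 1 ≤ M)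
    (hMN : (M : ℝ) ≤ θ * N) :
    ((latticeSlabs d N M).card : ℝ) ≤ d * 5 * 3 ^ (d - 1) * θ * (N : ℝ) ^ d := by
  have hN' : (1 : ℝ) ≤ N := by exact_mod_cast hN
  have hM' : (1 : ℝ) ≤ M := by exact_mod_cast hM
  calc ((latticeSlabs d N M).card : ℝ) ≤ d * ((4 * M + 1) * (2 * N + 1 : ℝ) ^ (d - 1)) :=
        card_latticeSlabs_le d N M
    _ ≤ d * ((5 * (θ * N)) * (3 * N) ^ (d - 1)) := by gcongr <;> linarith
    _ = d * 5 * 3 ^ (d - 1) * θ * (N : ℝ) ^ d := by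
        rw [← Nat.sub_add_cancel hd, Nat.add_sub_cancel, pow_succ', mul_pow]
        ring

lemma le_add_rpow_mul_rpow {x : ℝ} (hΛ : 0 < Λ) (hx : 0 ≤ x) (hq : 1 ≤ q) :
    x ≤ Λ + Λ ^ (1 - q) * x ^ q := by
  rcases le_total x Λ with hxΛ | hΛx
  · have : 0 ≤ Λ ^ (1 - q) * x ^ q := by positivity
    linarith
  · have hx0 : 0 < x := hΛ.trans_le hΛx
    calc x = x ^ (1 - q) * x ^ q := by rw [← rpow_add hx0, sub_add_cancel, rpow_one]
      _ ≤ Λ ^ (1 - q) * x ^ q :=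
          mul_le_mul_of_nonneg_right (rpow_le_rpow_of_nonpos hΛ hΛx (by linarith)) (by positivity)
      _ ≤ Λ + Λ ^ (1 - q) * x ^ q := le_add_of_nonneg_left hΛ.le

lemma sum_le_card_mul_add_rpow {s : Finset (Fin d → ℤ)} (hΛ : 0 < Λ) (hq : 1 ≤ q)
    (hε : 0 ≤ ε) (ha : ∀ k, 0 ≤ a k) (hs : s ⊆ latticeBox d N) :
    ∑ k ∈ s, (a k - ε) ≤ s.card * Λ + Λ ^ (1 - q) * ∑ k ∈ latticeBox d N, (a k + 1) ^ q := by
  have ha1 : ∀ k, 0 ≤ a k + 1 := fun k => by linarith [ha k]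
  calc ∑ k ∈ s, (a k - ε) ≤ ∑ k ∈ s, (Λ + Λ ^ (1 - q) * (a k + 1) ^ q) :=
        Finset.sum_le_sum fun k _ => by linarith [le_add_rpow_mul_rpow hΛ (ha1 k) hq]
    _ = s.card * Λ + Λ ^ (1 - q) * ∑ k ∈ s, (a k + 1) ^ q := by
        rw [Finset.sum_add_distrib, Finset.sum_const, nsmul_eq_mul, Finset.mul_sum]
    _ ≤ _ := by
        gcongr
        exact fun k _ _ => rpow_nonneg (ha1 k) q

lemma IsFDERun.quarter_le_iterate_zero (h : IsFDERun m ε κ τ N n a) (ha : IsSchemeState ε M a)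
    (hmass : 1 / 2 * (N : ℝ) ^ d ≤ ∑ k ∈ latticeBox d N, ((fdeStep m ε κ N)^[n] a k - ε))
    (hslabs : ∑ k ∈ latticeSlabs d N M, ((fdeStep m ε κ N)^[n] a k - ε) ≤ 1 / 4 * (N : ℝ) ^ d) :
    1 / (4 * 3 ^ d) ≤ (fdeStep m ε κ N)^[n] a 0 := by
  set y := (fdeStep m ε κ N)^[n] a
  have hsplit := Finset.sum_filter_add_sum_filter_not (latticeBox d N)
    (fun k => ∃ i, (k i).natAbs ≤ 2 * M) (fun k => y k - ε)
  rw [latticeSlabs] at hslabs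
  set rest := {k ∈ latticeBox d N | ¬∃ i, (k i).natAbs ≤ 2 * M}
  have hNd := h.pow_pos
  have hne : rest.Nonempty := by
    by_contra hempty
    rw [Finset.not_nonempty_iff_eq_empty.1 hempty, Finset.sum_empty] at hsplit
    linarith
  have hcard : (rest.card : ℝ) ≤ 3 ^ d * (N : ℝ) ^ d :=
    (Nat.cast_le.2 (Finset.card_filter_le _ _)).trans (card_latticeBox_le h.one_le)
  obtain ⟨k, hk, hky⟩ := Finset.exists_le_of_sum_le hne
    (f := fun _ => 1 / (4 * 3 ^ d : ℝ)) (g := fun k => y k - ε) <| by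
      calc ∑ _k ∈ rest, 1 / (4 * 3 ^ d : ℝ) = rest.card * (1 / (4 * 3 ^ d)) := by
            rw [Finset.sum_const, nsmul_eq_mul]
        _ ≤ 3 ^ d * (N : ℝ) ^ d * (1 / (4 * 3 ^ d)) := by gcongr
        _ = 1 / 4 * (N : ℝ) ^ d := by field_simp
        _ ≤ ∑ k ∈ rest, (y k - ε) := by linarith
  have hfar : ∀ i, 2 * M < (k i).natAbs := by
    simpa only [not_exists, not_le] using (Finset.mem_filter.1 hk).2
  linarith [h.cfl.iterate_le_zero (N := N) ha n hfar, h.pos]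

end Slabs

section DiscreteBound

open scoped Topology

variable {d N M : ℕ} {m ε κ τ : ℝ} {a : (Fin d → ℤ) → ℝ}

lemma cfl_rpow (hm0 : 0 ≤ m) (hm1 : m ≤ 1) (hε : 0 < ε) (hκ : 0 < κ)
    (h : 4 * d * κ * ε ^ (m - 1) ≤ 1) : CFL d (fun x => x ^ m) ε κ where
  pos := hκ
  mono := fun _ hx _ _ hxy => rpow_le_rpow (hε.le.trans hx) hxy hm0
  mul_sub_le := fun x y hx hxy => by
    have hx0 : 0 < x := hε.trans_le hx
    calc 4 * d * κ * (y ^ m - x ^ m) ≤ 4 * d * κ * (y ^ (m - 1) * (y - x)) := by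
          gcongr
          exact rpow_sub_rpow_le_mul hm1 hx0 hxy
      _ ≤ 4 * d * κ * (ε ^ (m - 1) * (y - x)) := by
          gcongr 4 * d * κ * (?_ * _)
          exact rpow_le_rpow_of_nonpos hε (hx.trans hxy) (by linarith)
      _ = 4 * d * κ * ε ^ (m - 1) * (y - x) := by ring
      _ ≤ y - x := mul_le_of_le_one_left (sub_nonneg.2 hxy) h

lemma eventually_isFDERun (hm0 : 0 ≤ m) (hm1 : m ≤ 1) (hd : 1 ≤ d) (hτ : 0 < τ) (hN : 1 ≤ N)
    (hε : 0 < ε) (hε1 : ε ≤ 1) (ha : IsSchemeState ε N a)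
    (hmass : ∑ k ∈ latticeBox d N, (a k - ε) = (N : ℝ) ^ d) :
    ∀ᶠ κ in 𝓝[>] 0, CFL d (fun x => x ^ m) ε κ ∧
      ∀ n : ℕ, n * κ = τ * N ^ 2 → IsFDERun m ε κ τ N n a := by
  have : (0 : ℝ) < d := by exact_mod_cast hd
  have : (0 : ℝ) < N := by exact_mod_cast hN
  set K := (latticeBox d N).card * (2 * d * ((ε + (N : ℝ) ^ d) ^ m - ε ^ m)) ^ 2
  have hcfl : 0 < 1 / (4 * d * ε ^ (m - 1)) := by positivity
  have herr : 0 < (N : ℝ) ^ d / (τ * N ^ 2 * (K + 1)) := by positivity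
  filter_upwards [Ioc_mem_nhdsGT hcfl, Ioc_mem_nhdsGT herr] with κ ⟨hκ, hκ₁⟩ ⟨_, hκ₂⟩
  have hC : CFL d (fun x => x ^ m) ε κ := by
    refine cfl_rpow hm0 hm1 hε hκ ?_
    rw [le_div_iff₀ (by positivity)] at hκ₁
    linarith
  refine ⟨hC, fun n hn => ⟨hN, hε, hε1, hC, ha, hmass, hn, ?_⟩⟩
  rw [le_div_iff₀ (by positivity)] at hκ₂
  calc n * (κ ^ 2 * K) = n * κ * (κ * K) := by ring
    _ = κ * (τ * N ^ 2 * K) := by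
        rw [hn]
        ring
    _ ≤ κ * (τ * N ^ 2 * (K + 1)) := by gcongr; linarith
    _ ≤ N ^ d := hκ₂

lemma exists_entropy_exponent (hd : 2 ≤ d) (hmc : (d - 2 : ℝ) / d < m) (hm1 : m < 1) :
    ∃ p : ℝ, 0 < p ∧ p < 1 ∧ 1 < (p + m) / 2 * ((d : ℝ) / (d - 1)) ∧
      (p + m) / 2 * ((d : ℝ) / (d - 1)) ≤ 2 := by
  have hd2 : (2 : ℝ) ≤ d := by exact_mod_cast hd
  have hd1 : (0 : ℝ) < d - 1 := by linarith
  have hmc' : d - 2 < m * d := (div_lt_iff₀ (by linarith)).1 hmc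
  obtain ⟨p, hp, hp1⟩ : ∃ p, 2 * (d - 1) / (d : ℝ) - m < p ∧ p < 1 :=
    exists_between (by rw [sub_lt_iff_lt_add, div_lt_iff₀ (by linarith)]; linarith)
  rw [sub_lt_iff_lt_add, div_lt_iff₀ (by linarith)] at hp
  refine ⟨p, ?_, hp1, ?_, ?_⟩
  · nlinarith
  · rw [← mul_div_assoc, lt_div_iff₀ hd1]
    linarith
  · rw [← mul_div_assoc, div_le_iff₀ hd1]
    nlinarith

lemma exists_rpow_mul_le {q C δ : ℝ} (hq : 1 < q) (hC : 0 < C) (hδ : 0 < δ) :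
    ∃ Λ > 0, Λ ^ (1 - q) * C ≤ δ := by
  refine ⟨(δ / C) ^ (1 / (1 - q)), by positivity, ?_⟩
  rw [← rpow_mul (by positivity), one_div_mul_cancel (by linarith), rpow_one,
    div_mul_cancel₀ _ hC.ne']

lemma IsFDERun.sum_latticeSlabs_le {n : ℕ} {q Λ C θ : ℝ} (h : IsFDERun m ε κ τ N n a)
    (hd : 1 ≤ d) (hM : 1 ≤ M) (hMN : (M : ℝ) ≤ θ * N) (hq : 1 ≤ q) (hΛ : 0 < Λ)
    (hΛC : Λ ^ (1 - q) * C ≤ 1 / 8) (hθ : θ * (d * 5 * 3 ^ (d - 1) * Λ) ≤ 1 / 8)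
    (hC : ∑ k ∈ latticeBox d N, ((fdeStep m ε κ N)^[n] a k + 1) ^ q ≤ C * (N : ℝ) ^ d) :
    ∑ k ∈ latticeSlabs d N M, ((fdeStep m ε κ N)^[n] a k - ε) ≤ 1 / 4 * (N : ℝ) ^ d := by
  have hNd := h.pow_pos
  calc ∑ k ∈ latticeSlabs d N M, ((fdeStep m ε κ N)^[n] a k - ε)
      ≤ (latticeSlabs d N M).card * Λ +
          Λ ^ (1 - q) * ∑ k ∈ latticeBox d N, ((fdeStep m ε κ N)^[n] a k + 1) ^ q :=
        sum_le_card_mul_add_rpow hΛ hq h.pos.le (fun k => (h.iterate_pos n k).le)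
          (Finset.filter_subset _ _)
    _ ≤ d * 5 * 3 ^ (d - 1) * θ * (N : ℝ) ^ d * Λ + Λ ^ (1 - q) * (C * (N : ℝ) ^ d) := by
        gcongr
        exact card_latticeSlabs_le_mul_pow hd h.one_le hM hMN
    _ = θ * (d * 5 * 3 ^ (d - 1) * Λ) * (N : ℝ) ^ d + Λ ^ (1 - q) * C * (N : ℝ) ^ d := by ring
    _ ≤ 1 / 8 * (N : ℝ) ^ d + 1 / 8 * (N : ℝ) ^ d := by gcongr
    _ = 1 / 4 * (N : ℝ) ^ d := by ring

lemma mul_sq_le_of_le_mul_of_le_one_div {θ x y : ℝ} (hd : 1 ≤ d) (hx : 0 ≤ x) (hy : 0 ≤ y)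
    (hθ : θ ≤ 1 / (2 * d)) (h : x ≤ θ * y) : d * x ^ 2 ≤ 1 / 4 * (y + 1) ^ 2 := by
  have hd1 : (1 : ℝ) ≤ d := by exact_mod_cast hd
  have hxy : x ≤ y / (2 * d) :=
    calc x ≤ 1 / (2 * d) * y := h.trans (by gcongr)
      _ = y / (2 * d) := by ring
  calc d * x ^ 2 ≤ d * (y / (2 * d)) ^ 2 := by gcongr
    _ = 1 / 4 * (y ^ 2 / d) := by field_simp; ring
    _ ≤ 1 / 4 * (y + 1) ^ 2 := by
        gcongr
        exact (div_le_self (by positivity) hd1).trans (by gcongr; linarith)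

theorem exists_le_iterate_zero (hd : 2 ≤ d) (hmc : (d - 2 : ℝ) / d < m) (hm1 : m < 1) :
    ∃ θ τ c : ℝ, 0 < θ ∧ θ ≤ 1 ∧ 0 < τ ∧ 0 < c ∧
      ∀ (N M : ℕ) (ε : ℝ) (a : (Fin d → ℤ) → ℝ), 1 ≤ M → (M : ℝ) ≤ θ * N → 0 < ε → ε ≤ 1 →
        IsSchemeState ε M a → ∑ k ∈ latticeBox d M, (a k - ε) = (N : ℝ) ^ d →
        ∀ᶠ κ in 𝓝[>] 0, CFL d (fun x => x ^ m) ε κ ∧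
          ∀ n : ℕ, n * κ = τ * N ^ 2 → c ≤ (fdeStep m ε κ N)^[n] a 0 := by
  have hd1 : 1 ≤ d := by omega
  have hd2 : (2 : ℝ) ≤ d := by exact_mod_cast hd
  have hm0 : 0 < m := hmc.trans_le' (div_nonneg (by linarith) (by linarith))
  obtain ⟨p, hp0, hp1, hq1, hq2⟩ := exists_entropy_exponent hd hmc hm1
  set τ : ℝ := 1 / 4 / (2 * d * (2 * 3 ^ d + 1))
  have hτ : 0 < τ := by positivity
  obtain ⟨C, hC0, hC⟩ := exists_sum_rpow_iterate_le hd hm0 hm1.le hp0 hp1 hτ hq1.le hq2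
  obtain ⟨Λ, hΛ, hΛC⟩ := exists_rpow_mul_le hq1 hC0 (show (0 : ℝ) < 1 / 8 by norm_num)
  set θ : ℝ := min (1 / (2 * d)) (1 / 8 / (d * 5 * 3 ^ (d - 1) * Λ))
  have hθ₁ : θ ≤ 1 / (2 * d) := min_le_left _ _
  have hθ₂ : θ * (d * 5 * 3 ^ (d - 1) * Λ) ≤ 1 / 8 :=
    (le_div_iff₀ (by positivity)).1 (min_le_right _ _)
  have hθ1 : θ ≤ 1 := hθ₁.trans ((div_le_one (by positivity)).2 (by linarith))
  refine ⟨θ, τ, 1 / (4 * 3 ^ d), by positivity, hθ1, hτ, by positivity, ?_⟩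
  intro N M ε a hM hMN hε hε1 ha hmass
  have hMN' : M ≤ N := by exact_mod_cast hMN.trans (mul_le_of_le_one_left N.cast_nonneg hθ1)
  have hmassN : ∑ k ∈ latticeBox d N, (a k - ε) = (N : ℝ) ^ d := by
    rw [← hmass]
    refine (Finset.sum_subset (latticeBox_mono hMN') fun k _ hk => ?_).symm
    rw [ha.eq_of_notMem k hk, sub_self]
  filter_upwards [eventually_isFDERun hm0.le hm1.le hd1 hτ (hM.trans hMN') hε hε1
    (ha.mono hMN') hmassN] with κ ⟨hcfl, hrun⟩
  refine ⟨hcfl, fun n hn => (hrun n hn).quarter_le_iterate_zero ha ?_ ?_⟩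
  · exact (hrun n hn).half_pow_le_sum_iterate hm0.le hm1.le ha
      (mul_sq_le_of_le_mul_of_le_one_div hd1 M.cast_nonneg N.cast_nonneg hθ₁ hMN)
      (div_mul_cancel₀ _ (by positivity)).le
  · exact (hrun n hn).sum_latticeSlabs_le hd1 hM hMN hq1.le hΛ hΛC hθ₂
      (hC N n ε κ a (hrun n hn))

end DiscreteBound

section Solutions

variable {d : ℕ} {m : ℝ} {Q Q' : Set (ℝ × EuclideanSpace ℝ (Fin d))}
  {u : ℝ → EuclideanSpace ℝ (Fin d) → ℝ} {ut : ℝ × EuclideanSpace ℝ (Fin d) → ℝ}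
  {W D : Fin d → ℝ × EuclideanSpace ℝ (Fin d) → ℝ}

/-- `u` is a positive solution of `∂ₜ u = Δ(u^m)` on `Q` with time derivative `ut`, and `W i`, `D i`
are the first and second derivatives of `u^m` in the `i`-th coordinate direction. Naming the
derivatives makes the notion meaningful, and stable under rescaling, on sets that are not open. -/
structure IsFDESolWith (m : ℝ) (Q : Set (ℝ × EuclideanSpace ℝ (Fin d)))
    (u : ℝ → EuclideanSpace ℝ (Fin d) → ℝ) (ut : ℝ × EuclideanSpace ℝ (Fin d) → ℝ)
    (W D : Fin d → ℝ × EuclideanSpace ℝ (Fin d) → ℝ) : Prop where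
  pos : ∀ p ∈ Q, 0 < u p.1 p.2
  continuousOn : ContinuousOn (fun p : ℝ × EuclideanSpace ℝ (Fin d) => u p.1 p.2) Q
  continuousOn_time : ContinuousOn ut Q
  continuousOn_second : ∀ i, ContinuousOn (D i) Q
  hasDerivAt_time : ∀ p ∈ Q, HasDerivAt (fun s => u s p.2) (ut p) p.1
  hasLineDerivAt_first : ∀ i, ∀ p ∈ Q,
    HasLineDerivAt ℝ (fun y => u p.1 y ^ m) (W i p) p.2 (EuclideanSpace.single i 1)
  hasLineDerivAt_second : ∀ i, ∀ p ∈ Q,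
    HasLineDerivAt ℝ (fun y => W i (p.1, y)) (D i p) p.2 (EuclideanSpace.single i 1)
  eq_sum : ∀ p ∈ Q, ut p = ∑ i, D i p

lemma IsFDESolWith.mono (h : IsFDESolWith m Q u ut W D) (hQ : Q' ⊆ Q) :
    IsFDESolWith m Q' u ut W D where
  pos p hp := h.pos p (hQ hp)
  continuousOn := h.continuousOn.mono hQ
  continuousOn_time := h.continuousOn_time.mono hQ
  continuousOn_second i := (h.continuousOn_second i).mono hQ
  hasDerivAt_time p hp := h.hasDerivAt_time p (hQ hp)
  hasLineDerivAt_first i p hp := h.hasLineDerivAt_first i p (hQ hp)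
  hasLineDerivAt_second i p hp := h.hasLineDerivAt_second i p (hQ hp)
  eq_sum p hp := h.eq_sum p (hQ hp)

lemma hasFDerivAt_comp_prodMk {E F : Type*} [NormedAddCommGroup E] [NormedSpace ℝ E]
    [NormedAddCommGroup F] [NormedSpace ℝ F] {f : E × F → ℝ} {p : E × F}
    (hf : DifferentiableAt ℝ f p) :
    HasFDerivAt (fun y => f (p.1, y)) ((fderiv ℝ f p).comp (ContinuousLinearMap.inr ℝ E F)) p.2 :=
  HasFDerivAt.comp p.2 hf.hasFDerivAt (hasFDerivAt_prodMk_right p.1 p.2)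

theorem IsFDESol.exists_isFDESolWith (hQ : IsOpen Q) (h : IsFDESol m Q u) :
    ∃ ut W D, IsFDESolWith m Q u ut W D := by
  obtain ⟨hpos, hsmooth, heq⟩ := h
  let e (i : Fin d) : EuclideanSpace ℝ (Fin d) := EuclideanSpace.single i 1
  let U : ℝ × EuclideanSpace ℝ (Fin d) → ℝ := fun p => u p.1 p.2
  let G : ℝ × EuclideanSpace ℝ (Fin d) → ℝ := fun p => u p.1 p.2 ^ m
  let W (i : Fin d) (p : ℝ × EuclideanSpace ℝ (Fin d)) : ℝ := fderiv ℝ G p (0, e i)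
  have hfderiv : ∀ {F : ℝ × EuclideanSpace ℝ (Fin d) → ℝ} (v), ContDiffOn ℝ (⊤ : ℕ∞) F Q →
      ContDiffOn ℝ (⊤ : ℕ∞) (fun p => fderiv ℝ F p v) Q := fun v hF =>
    (hF.fderiv_of_isOpen hQ (by simp)).clm_apply contDiffOn_const
  have hdiff : ∀ {F : ℝ × EuclideanSpace ℝ (Fin d) → ℝ}, ContDiffOn ℝ (⊤ : ℕ∞) F Q → ∀ p ∈ Q,
      DifferentiableAt ℝ F p := fun hF p hp =>
    (hF.contDiffAt (hQ.mem_nhds hp)).differentiableAt (by simp)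
  have hG : ContDiffOn ℝ (⊤ : ℕ∞) G Q := hsmooth.rpow_const_of_ne fun p hp => (hpos p hp).ne'
  have hW : ∀ i, ContDiffOn ℝ (⊤ : ℕ∞) (W i) Q := fun i => hfderiv _ hG
  have htime : ∀ p ∈ Q, HasDerivAt (fun s => u s p.2) (fderiv ℝ U p (1, 0)) p.1 := fun p hp =>
    HasFDerivAt.comp_hasDerivAt (l := U) p.1 (hdiff hsmooth p hp).hasFDerivAt
      ((hasDerivAt_id p.1).prodMk (hasDerivAt_const _ _))
  refine ⟨fun p => fderiv ℝ U p (1, 0), W, fun i p => fderiv ℝ (W i) p (0, e i), hpos,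
    hsmooth.continuousOn, (hfderiv _ hsmooth).continuousOn,
    fun i => (hfderiv _ (hW i)).continuousOn, htime,
    fun i p hp => (hasFDerivAt_comp_prodMk (hdiff hG p hp)).hasLineDerivAt _,
    fun i p hp => (hasFDerivAt_comp_prodMk (hdiff (hW i) p hp)).hasLineDerivAt _, fun p hp => ?_⟩
  rw [← (htime p hp).deriv, heq p hp, spaceLap]
  refine Finset.sum_congr rfl fun i _ => ?_
  have hnear : ∀ᶠ y in nhds p.2, (p.1, y) ∈ Q :=
    (Continuous.prodMk_right p.1).continuousAt.eventually (hQ.mem_nhds hp)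
  have hfirst : (fun y => fderiv ℝ (fun y => u p.1 y ^ m) y (e i)) =ᶠ[nhds p.2]
      fun y => W i (p.1, y) := by
    filter_upwards [hnear] with y hy
    rw [(hasFDerivAt_comp_prodMk (hdiff hG _ hy)).fderiv]
    rfl
  rw [hfirst.fderiv_eq, (hasFDerivAt_comp_prodMk (hdiff (hW i) p hp)).fderiv]
  rfl

lemma mul_rpow_of_pos {x y : ℝ} (hx : 0 < x) : (x * y) ^ m = x ^ m * y ^ m := by
  rcases le_or_gt 0 y with hy | hy
  · exact mul_rpow hx.le hy
  · rw [rpow_def_of_neg hy, rpow_def_of_neg (mul_neg_of_pos_of_neg hx hy), log_mul hx.ne' hy.ne,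
      rpow_def_of_pos hx, add_mul, exp_add, mul_assoc]

lemma hasLineDerivAt_const_mul_comp_affine {E : Type*} [NormedAddCommGroup E] [NormedSpace ℝ E]
    {f : E → ℝ} {f' : ℝ} {x₁ x v : E} {ρ : ℝ} (hf : HasLineDerivAt ℝ f f' (x₁ + ρ • x) v)
    (c : ℝ) : HasLineDerivAt ℝ (fun y => c * f (x₁ + ρ • y)) (c * ρ * f') x v := by
  have hsmul : HasDerivAt (fun s : ℝ => c * f (x₁ + ρ • x + s • ρ • v)) (c * (ρ * f')) 0 :=
    (hf.smul ρ).const_mul c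
  rw [HasLineDerivAt, mul_assoc]
  refine hsmul.congr_of_eventuallyEq (.of_forall fun s => ?_)
  simp only [smul_add, smul_comm ρ s, add_assoc]

theorem IsFDESolWith.rescale (h : IsFDESolWith m Q u ut W D) {A ρ : ℝ} (hA : 0 < A) (t₁ : ℝ)
    (x₁ : EuclideanSpace ℝ (Fin d))
    (hQ : ∀ p ∈ Q', (t₁ + A ^ (1 - m) * ρ ^ 2 * p.1, x₁ + ρ • p.2) ∈ Q) :
    ∃ ut' W' D', IsFDESolWith m Q'
      (fun t x => A⁻¹ * u (t₁ + A ^ (1 - m) * ρ ^ 2 * t) (x₁ + ρ • x)) ut' W' D' := by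
  set σ := A ^ (1 - m) * ρ ^ 2
  let f (p : ℝ × EuclideanSpace ℝ (Fin d)) : ℝ × EuclideanSpace ℝ (Fin d) :=
    (t₁ + σ * p.1, x₁ + ρ • p.2)
  have hcont : ∀ {F : ℝ × EuclideanSpace ℝ (Fin d) → ℝ} (c : ℝ), ContinuousOn F Q →
      ContinuousOn (fun p => c * F (f p)) Q' := fun c hF =>
    continuousOn_const.mul (hF.comp (by fun_prop) hQ)
  refine ⟨fun p => A⁻¹ * σ * ut (f p), fun i p => A⁻¹ ^ m * ρ * W i (f p),
    fun i p => A⁻¹ ^ m * ρ * ρ * D i (f p), ?_⟩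
  constructor
  · exact fun p hp => mul_pos (inv_pos.2 hA) (h.pos _ (hQ p hp))
  · exact hcont _ h.continuousOn
  · exact hcont _ h.continuousOn_time
  · exact fun i => hcont _ (h.continuousOn_second i)
  · intro p hp
    have hσ : HasDerivAt (fun s => t₁ + σ * s) σ p.1 := by
      simpa using ((hasDerivAt_id p.1).const_mul σ).const_add t₁
    have hcomp : HasDerivAt (fun s => u (t₁ + σ * s) (f p).2) (ut (f p) * σ) p.1 :=
      HasDerivAt.comp (h₂ := fun s => u s (f p).2) p.1 (h.hasDerivAt_time (f p) (hQ p hp)) hσ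
    exact (hcomp.const_mul A⁻¹).congr_deriv (by ring)
  · intro i p hp
    simp only [mul_rpow_of_pos (inv_pos.2 hA)]
    exact hasLineDerivAt_const_mul_comp_affine (h.hasLineDerivAt_first i (f p) (hQ p hp)) _
  · intro i p hp
    exact hasLineDerivAt_const_mul_comp_affine (h.hasLineDerivAt_second i (f p) (hQ p hp)) _
  · intro p hp
    have hcoeff : A⁻¹ * σ = A⁻¹ ^ m * ρ * ρ := by
      rw [inv_rpow hA.le, ← rpow_neg hA.le, ← rpow_neg_one, ← mul_assoc, ← rpow_add hA]
      ring_nf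
    rw [hcoeff, h.eq_sum _ (hQ p hp), Finset.mul_sum]

end Solutions

section Consistency

variable {d N : ℕ} {m ε κ σ ζ B C : ℝ}

lemma mul_add_rpow_mul_le {A U U' : ℝ} (hm0 : 0 ≤ m) (hm1 : m ≤ 1) (hσ : 0 ≤ σ) (hζ0 : 0 ≤ ζ)
    (hζ1 : ζ ≤ 1) (hA : ζ ≤ A - 1) (hC : 0 ≤ C) (hB : C + 2 ≤ B * U') (hU : U - U' ≤ C * σ) :
    A * U + A ^ m * (U' - U + σ * ζ) ≤ (A + B * σ * (A - 1)) * U' := by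
  have hA1 : 1 ≤ A := by linarith
  have hAm1 : 1 ≤ A ^ m := one_le_rpow hA1 hm0
  have hAm : A ^ m ≤ A := (rpow_le_rpow_of_exponent_le hA1 hm1).trans_eq (rpow_one A)
  have hgap : (A - A ^ m) * (U - U') ≤ (A - 1) * (C * σ) := by
    calc (A - A ^ m) * (U - U') ≤ (A - A ^ m) * (C * σ) := by gcongr
      _ ≤ (A - 1) * (C * σ) := by gcongr
  have herror : A ^ m * (σ * ζ) ≤ 2 * (A - 1) * σ := by
    calc A ^ m * (σ * ζ) ≤ A * (σ * ζ) := by gcongr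
      _ = (A * ζ) * σ := by ring
      _ ≤ 2 * (A - 1) * σ := by
          gcongr ?_ * σ
          nlinarith
  have hgrowth : (C + 2) * (σ * (A - 1)) ≤ B * U' * (σ * (A - 1)) :=
    mul_le_mul_of_nonneg_right hB (mul_nonneg hσ (by linarith))
  linarith

lemma discreteLaplacian_const_mul_rpow {A : ℝ} (hA : 0 < A) (g : (Fin d → ℤ) → ℝ)
    (k : Fin d → ℤ) :
    discreteLaplacian (fun l => (A * g l) ^ m) k =
      A ^ m * discreteLaplacian (fun l => g l ^ m) k := by
  simp only [discreteLaplacian, Finset.mul_sum, mul_rpow_of_pos hA]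
  exact Finset.sum_congr rfl fun i _ => by ring

lemma CFL.schemeStep_le_mul_of_consistent (hCFL : CFL d (fun x => x ^ m) ε κ) (hm0 : 0 ≤ m)
    (hm1 : m ≤ 1) (hσ : 0 ≤ σ) (hζ0 : 0 ≤ ζ) (hζ1 : ζ ≤ 1) (hC : 0 ≤ C) {A U' : ℝ}
    (hA : ζ ≤ A - 1) {b U : (Fin d → ℤ) → ℝ} (hb : ∀ k, ε ≤ b k)
    (hbU : ∀ k ∈ latticeBox d (N + 1), b k ≤ A * U k) {k : Fin d → ℤ} (hk : k ∈ latticeBox d N)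
    (hB : C + 2 ≤ B * U')
    (hconsistent : κ * discreteLaplacian (fun l => U l ^ m) k ≤ U' - U k + σ * ζ)
    (hLip : U k - U' ≤ C * σ) :
    fdeStep m ε κ N b k ≤ (A + B * σ * (A - 1)) * U' := by
  have hA0 : 0 < A := by linarith
  calc fdeStep m ε κ N b k
      = b k + κ * discreteLaplacian (fun l => b l ^ m) k := schemeStep_of_mem hk
    _ ≤ A * U k + κ * discreteLaplacian (fun l => (A * U l) ^ m) k := by
        refine hCFL.add_mul_discreteLaplacian_le (b := fun l => A * U l) (hb k)
          (hbU k (latticeBox_mono (Nat.le_succ N) hk)) ?_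
        rintro l ⟨i, rfl | rfl⟩
        · exact ⟨hb _, hbU _ (add_latticeVec_mem_latticeBox_succ hk i)⟩
        · exact ⟨hb _, hbU _ (sub_latticeVec_mem_latticeBox_succ hk i)⟩
    _ = A * U k + A ^ m * (κ * discreteLaplacian (fun l => U l ^ m) k) := by
        rw [discreteLaplacian_const_mul_rpow hA0]
        ring
    _ ≤ A * U k + A ^ m * (U' - U k + σ * ζ) := by gcongr
    _ ≤ (A + B * σ * (A - 1)) * U' := mul_add_rpow_mul_le hm0 hm1 hσ hζ0 hζ1 hA hC hB hLip

theorem IsSchemeState.iterate_le_mul_of_consistent {a : (Fin d → ℤ) → ℝ}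
    (ha : IsSchemeState ε N a) (hCFL : CFL d (fun x => x ^ m) ε κ) (hm0 : 0 ≤ m) (hm1 : m ≤ 1)
    (hε : 0 < ε) (hσ : 0 ≤ σ) (hζ0 : 0 ≤ ζ) (hζ1 : ζ ≤ 1) (hC : 0 ≤ C) (hB : C + 2 ≤ B * ε)
    {n : ℕ} {U : ℕ → (Fin d → ℤ) → ℝ} (hU : ∀ j ≤ n, ∀ k ∈ latticeBox d (N + 1), ε ≤ U j k)
    (haU : ∀ k ∈ latticeBox d N, a k ≤ U 0 k)
    (hconsistent : ∀ j < n, ∀ k ∈ latticeBox d N,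
      κ * discreteLaplacian (fun l => U j l ^ m) k ≤ U (j + 1) k - U j k + σ * ζ)
    (hLip : ∀ j < n, ∀ k ∈ latticeBox d N, U j k - U (j + 1) k ≤ C * σ) :
    ∀ j ≤ n, ∀ k ∈ latticeBox d (N + 1),
      (fdeStep m ε κ N)^[j] a k ≤ (1 + ζ * (1 + B * σ) ^ j) * U j k := by
  have hB0 : 0 ≤ B := (pos_of_mul_pos_left (by linarith : 0 < B * ε) hε.le).le
  have hfactor (j : ℕ) : ζ ≤ (1 + ζ * (1 + B * σ) ^ j) - 1 := by
    rw [add_sub_cancel_left]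
    exact le_mul_of_one_le_right hζ0 (one_le_pow₀ (by linarith [mul_nonneg hB0 hσ]))
  have hle_mul : ∀ j ≤ n, ∀ k ∈ latticeBox d (N + 1),
      U j k ≤ (1 + ζ * (1 + B * σ) ^ j) * U j k := fun j hj k hk =>
    le_mul_of_one_le_left (hε.le.trans (hU j hj k hk)) (by linarith [hfactor j])
  intro j
  induction j with
  | zero =>
    intro hn k hk
    refine le_trans ?_ (hle_mul 0 hn k hk)
    by_cases hkN : k ∈ latticeBox d N
    · exact haU k hkN
    · exact (ha.eq_of_notMem k hkN).trans_le (hU 0 hn k hk)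
  | succ j ih =>
    intro hj k hk
    by_cases hkN : k ∈ latticeBox d N
    · have hstep := hCFL.schemeStep_le_mul_of_consistent hm0 hm1 hσ hζ0 hζ1 hC (hfactor j)
        (hCFL.le_iterate ha.le j) (ih (Nat.le_of_succ_le hj)) hkN
        (hB.trans (mul_le_mul_of_nonneg_left (hU _ hj k hk) hB0)) (hconsistent j hj k hkN)
        (hLip j hj k hkN)
      rw [Function.iterate_succ_apply']
      refine hstep.trans_eq ?_
      ring
    · rw [(ha.iterate hCFL _).eq_of_notMem k hkN]
      exact (hU _ hj k hk).trans (hle_mul _ hj k hk)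

lemma add_sub_two_mul_le_of_second_deriv_le {g g' g'' : ℝ → ℝ} {ℓ C : ℝ} (hℓ : 0 ≤ ℓ)
    (hg : ∀ s ∈ Icc (-ℓ) ℓ, HasDerivAt g (g' s) s)
    (hg' : ∀ s ∈ Icc (-ℓ) ℓ, HasDerivAt g' (g'' s) s) (hC : ∀ s ∈ Icc (-ℓ) ℓ, g'' s ≤ C) :
    g ℓ + g (-ℓ) - 2 * g 0 ≤ ℓ ^ 2 * C := by
  have hconcave : ConcaveOn ℝ (Icc (-ℓ) ℓ) fun s => g s - s ^ 2 * (C / 2) := by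
    refine concaveOn_of_hasDerivWithinAt2_nonpos (convex_Icc _ _)
      (f' := fun s => g' s - s * C) (f'' := fun s => g'' s - C) ?_ ?_ ?_ ?_
    · exact ContinuousOn.sub (fun s hs => (hg s hs).continuousAt.continuousWithinAt) (by fun_prop)
    · intro s hs
      refine (((hg s (interior_subset hs)).sub
        ((hasDerivAt_pow 2 s).mul_const (C / 2))).congr_deriv ?_).hasDerivWithinAt
      norm_num
      ring
    · intro s hs
      refine (((hg' s (interior_subset hs)).sub
        ((hasDerivAt_id s).mul_const C)).congr_deriv ?_).hasDerivWithinAt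
      rw [one_mul]
    · exact fun s hs => sub_nonpos.2 (hC s (interior_subset hs))
  have hmid := hconcave.2 (by constructor <;> linarith : ℓ ∈ Icc (-ℓ) ℓ)
    (by constructor <;> linarith : -ℓ ∈ Icc (-ℓ) ℓ) (by norm_num : (0 : ℝ) ≤ 1 / 2)
    (by norm_num : (0 : ℝ) ≤ 1 / 2) (by norm_num)
  simp only [smul_eq_mul, mul_neg, add_neg_cancel] at hmid
  linarith

lemma hasDerivAt_comp_add_smul_of_hasLineDerivAt {E : Type*} [NormedAddCommGroup E]
    [NormedSpace ℝ E] {f : E → ℝ} {f' s : ℝ} {x v : E}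
    (hf : HasLineDerivAt ℝ f f' (x + s • v) v) :
    HasDerivAt (fun r => f (x + r • v)) f' s := by
  have hshift : HasDerivAt (fun r => f (x + s • v + (r - s) • v)) f' s :=
    HasDerivAt.comp_sub_const s s (by rwa [sub_self])
  refine hshift.congr_of_eventuallyEq (.of_forall fun r => ?_)
  simp only [sub_smul, add_add_sub_cancel]

variable {Q : Set (ℝ × EuclideanSpace ℝ (Fin d))}
  {u : ℝ → EuclideanSpace ℝ (Fin d) → ℝ} {ut : ℝ × EuclideanSpace ℝ (Fin d) → ℝ}
  {W D : Fin d → ℝ × EuclideanSpace ℝ (Fin d) → ℝ} {t η ℓ : ℝ} {x : EuclideanSpace ℝ (Fin d)}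

lemma IsFDESolWith.sum_second_difference_le (h : IsFDESolWith m Q u ut W D) (hℓ : 0 ≤ ℓ)
    (hx : (t, x) ∈ Q)
    (hQ : ∀ i, ∀ s ∈ Icc (-ℓ) ℓ, (t, x + s • EuclideanSpace.single i 1) ∈ Q)
    (hη : ∀ i, ∀ s ∈ Icc (-ℓ) ℓ, D i (t, x + s • EuclideanSpace.single i 1) ≤ D i (t, x) + η) :
    ∑ i, (u t (x + ℓ • EuclideanSpace.single i 1) ^ m +
        u t (x + -ℓ • EuclideanSpace.single i 1) ^ m - 2 * u t x ^ m) ≤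
      ℓ ^ 2 * (ut (t, x) + d * η) := by
  calc ∑ i, (u t (x + ℓ • EuclideanSpace.single i 1) ^ m +
        u t (x + -ℓ • EuclideanSpace.single i 1) ^ m - 2 * u t x ^ m)
      ≤ ∑ i, ℓ ^ 2 * (D i (t, x) + η) := Finset.sum_le_sum fun i _ => by
        simpa only [zero_smul, add_zero] using add_sub_two_mul_le_of_second_deriv_le
          (g := fun s => u t (x + s • EuclideanSpace.single i 1) ^ m) hℓ
          (fun s hs => hasDerivAt_comp_add_smul_of_hasLineDerivAt
            (h.hasLineDerivAt_first i _ (hQ i s hs)))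
          (fun s hs => hasDerivAt_comp_add_smul_of_hasLineDerivAt
            (f := fun y => W i (t, y)) (h.hasLineDerivAt_second i _ (hQ i s hs))) (hη i)
    _ = ℓ ^ 2 * (ut (t, x) + d * η) := by
        rw [h.eq_sum _ hx, ← Finset.mul_sum, Finset.sum_add_distrib, Finset.sum_const,
          Finset.card_univ, Fintype.card_fin, nsmul_eq_mul]

lemma IsFDESolWith.mul_le_time_increment (h : IsFDESolWith m Q u ut W D) (hσ : 0 ≤ σ)
    (hQ : ∀ s ∈ Icc t (t + σ), (s, x) ∈ Q) (hC : ∀ s ∈ Icc t (t + σ), C ≤ ut (s, x)) :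
    C * σ ≤ u (t + σ) x - u t x := by
  have hderiv : ∀ s ∈ Icc t (t + σ), HasDerivAt (fun r => u r x) (ut (s, x)) s := fun s hs =>
    h.hasDerivAt_time _ (hQ s hs)
  have hmean := (convex_Icc t (t + σ)).mul_sub_le_image_sub_of_le_deriv
    (fun s hs => (hderiv s hs).continuousAt.continuousWithinAt)
    (fun s hs => (hderiv s (interior_subset hs)).differentiableAt.differentiableWithinAt)
    (fun s hs => (hderiv s (interior_subset hs)).deriv ▸ hC s (interior_subset hs))
    t ⟨le_rfl, by linarith⟩ (t + σ) ⟨by linarith, le_rfl⟩ (by linarith)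
  rwa [add_sub_cancel_left] at hmean

/-- The point of the lattice `ℓ ℤ^d` with integer coordinates `k`. -/
noncomputable def latticePoint (ℓ : ℝ) (k : Fin d → ℤ) : EuclideanSpace ℝ (Fin d) :=
  WithLp.toLp 2 fun i => ℓ * k i

lemma latticePoint_zero : latticePoint ℓ (0 : Fin d → ℤ) = 0 := by
  ext i
  simp [latticePoint]

lemma latticePoint_add_latticeVec (k : Fin d → ℤ) (i : Fin d) :
    latticePoint ℓ (k + latticeVec i) = latticePoint ℓ k + ℓ • EuclideanSpace.single i 1 := by
  ext j
  rcases eq_or_ne j i with rfl | hj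
  · simp [latticePoint, mul_add]
  · simp [latticePoint, hj]

lemma latticePoint_sub_latticeVec (k : Fin d → ℤ) (i : Fin d) :
    latticePoint ℓ (k - latticeVec i) = latticePoint ℓ k + -ℓ • EuclideanSpace.single i 1 := by
  ext j
  rcases eq_or_ne j i with rfl | hj
  · simp [latticePoint, mul_add, sub_eq_add_neg]
  · simp [latticePoint, hj]

lemma norm_le_of_forall_abs_le {c : ℝ} (hx : ∀ i, |x i| ≤ c) : ‖x‖ ≤ d * c := by
  calc ‖x‖ = ‖∑ i, EuclideanSpace.single i (x i)‖ := by
        congr 1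
        ext j
        simp
    _ ≤ ∑ i, ‖(EuclideanSpace.single i (x i) : EuclideanSpace ℝ (Fin d))‖ := norm_sum_le _ _
    _ ≤ ∑ _i : Fin d, c := Finset.sum_le_sum fun i _ => by
        rw [PiLp.norm_single, norm_eq_abs]
        exact hx i
    _ = d * c := by rw [Finset.sum_const, Finset.card_univ, Fintype.card_fin, nsmul_eq_mul]

lemma norm_latticePoint_le (hℓ : 0 ≤ ℓ) {k : Fin d → ℤ} (hk : k ∈ latticeBox d N) :
    ‖latticePoint ℓ k‖ ≤ d * (ℓ * N) :=
  norm_le_of_forall_abs_le fun i => by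
    have hki : |(k i : ℝ)| ≤ N := by
      rw [← Int.cast_abs, Int.abs_eq_natAbs]
      exact_mod_cast mem_latticeBox.1 hk i
    rw [latticePoint, abs_mul, abs_of_nonneg hℓ]
    gcongr

end Consistency

section Convergence

variable {d N : ℕ} {m ε κ σ ζ η δ ℓ B C T : ℝ}
  {u : ℝ → EuclideanSpace ℝ (Fin d) → ℝ} {ut : ℝ × EuclideanSpace ℝ (Fin d) → ℝ}
  {W D : Fin d → ℝ × EuclideanSpace ℝ (Fin d) → ℝ}

/-- Values of `u`, `ut` and all `D i` at points of `K` less than `δ` apart differ by less than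
`η`. -/
def HasCommonModulus (K : Set (ℝ × EuclideanSpace ℝ (Fin d)))
    (u : ℝ → EuclideanSpace ℝ (Fin d) → ℝ) (ut : ℝ × EuclideanSpace ℝ (Fin d) → ℝ)
    (D : Fin d → ℝ × EuclideanSpace ℝ (Fin d) → ℝ) (δ η : ℝ) : Prop :=
  ∀ p ∈ K, ∀ q ∈ K, dist p q < δ →
    |u p.1 p.2 - u q.1 q.2| < η ∧ |ut p - ut q| < η ∧ ∀ i, |D i p - D i q| < η

lemma IsFDESolWith.exists_hasCommonModulus {K : Set (ℝ × EuclideanSpace ℝ (Fin d))}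
    (hK : IsCompact K) (h : IsFDESolWith m K u ut W D) (hη : 0 < η) :
    ∃ δ, 0 < δ ∧ HasCommonModulus K u ut D δ η := by
  have hcont : ContinuousOn (fun p : ℝ × EuclideanSpace ℝ (Fin d) =>
      ((u p.1 p.2, ut p), fun i => D i p)) K :=
    (h.continuousOn.prodMk h.continuousOn_time).prodMk (continuousOn_pi.2 h.continuousOn_second)
  obtain ⟨δ, hδ, hclose⟩ :=
    Metric.uniformContinuousOn_iff.1 (hK.uniformContinuousOn_of_continuous hcont) η hη
  refine ⟨δ, hδ, fun p hp q hq hpq => ?_⟩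
  have hdist := hclose p hp q hq hpq
  rw [Prod.dist_eq, max_lt_iff, Prod.dist_eq, max_lt_iff] at hdist
  exact ⟨hdist.1.1, hdist.1.2, fun i => (dist_le_pi_dist _ _ i).trans_lt hdist.2⟩

lemma latticePoint_mem_closedBall (hℓ : 0 ≤ ℓ) (hmesh : d * (ℓ * (N + 1)) ≤ 1)
    {k : Fin d → ℤ} (hk : k ∈ latticeBox d (N + 1)) :
    latticePoint ℓ k ∈ closedBall (0 : EuclideanSpace ℝ (Fin d)) 1 := by
  rw [mem_closedBall_zero_iff]
  refine (norm_latticePoint_le hℓ hk).trans ?_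
  exact_mod_cast hmesh

lemma latticePoint_add_smul_mem_closedBall (hℓ : 0 ≤ ℓ) (hmesh : d * (ℓ * (N + 1)) ≤ 1)
    {k : Fin d → ℤ} (hk : k ∈ latticeBox d N) (i : Fin d) {s : ℝ} (hs : s ∈ Icc (-ℓ) ℓ) :
    latticePoint ℓ k + s • EuclideanSpace.single i 1 ∈
      closedBall (0 : EuclideanSpace ℝ (Fin d)) 1 := by
  have hshift : ‖s • (EuclideanSpace.single i 1 : EuclideanSpace ℝ (Fin d))‖ ≤ d * ℓ := by
    rw [norm_smul, PiLp.norm_single, norm_one, mul_one]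
    exact (abs_le.2 hs).trans (le_mul_of_one_le_left hℓ (mod_cast Fin.pos i))
  rw [mem_closedBall_zero_iff]
  linarith [norm_add_le (latticePoint ℓ k) (s • EuclideanSpace.single i 1),
    norm_latticePoint_le hℓ hk]

lemma IsFDESolWith.mul_discreteLaplacian_latticePoint_le
    (h : IsFDESolWith m (Icc 0 T ×ˢ closedBall 0 1) u ut W D)
    (hmod : HasCommonModulus (Icc 0 T ×ˢ closedBall 0 1) u ut D δ η)
    (hℓ : 0 ≤ ℓ) (hℓδ : ℓ < δ) (hκ : 0 ≤ κ) (hσ : κ * ℓ ^ 2 = σ) (hσδ : σ < δ)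
    (hmesh : d * (ℓ * (N + 1)) ≤ 1) {k : Fin d → ℤ} (hk : k ∈ latticeBox d N) {t : ℝ}
    (ht0 : 0 ≤ t) (htT : t + σ ≤ T) :
    κ * discreteLaplacian (fun l => u t (latticePoint ℓ l) ^ m) k ≤
      u (t + σ) (latticePoint ℓ k) - u t (latticePoint ℓ k) + σ * ((d + 1) * η) := by
  have hσ0 : 0 ≤ σ := hσ ▸ mul_nonneg hκ (sq_nonneg ℓ)
  have hx : latticePoint ℓ k ∈ closedBall (0 : EuclideanSpace ℝ (Fin d)) 1 :=
    latticePoint_mem_closedBall hℓ hmesh (latticeBox_mono (Nat.le_succ N) hk)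
  have ht : t ∈ Icc 0 T := ⟨ht0, by linarith⟩
  have hspace : discreteLaplacian (fun l => u t (latticePoint ℓ l) ^ m) k ≤
      ℓ ^ 2 * (ut (t, latticePoint ℓ k) + d * η) := by
    simp only [discreteLaplacian, latticePoint_add_latticeVec, latticePoint_sub_latticeVec]
    have hball (i : Fin d) (s : ℝ) (hs : s ∈ Icc (-ℓ) ℓ) :=
      latticePoint_add_smul_mem_closedBall hℓ hmesh hk i hs
    refine h.sum_second_difference_le hℓ ⟨ht, hx⟩ (fun i s hs => ⟨ht, hball i s hs⟩)
      fun i s hs => ?_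
    have hclose := (hmod (t, _) ⟨ht, hball i s hs⟩ (t, latticePoint ℓ k) ⟨ht, hx⟩ (by
      rw [dist_prod_same_left, dist_self_add_left, norm_smul, PiLp.norm_single, norm_one, mul_one]
      exact (abs_le.2 hs).trans_lt hℓδ)).2.2 i
    linarith [(abs_lt.1 hclose).2]
  have htime : (ut (t, latticePoint ℓ k) - η) * σ ≤
      u (t + σ) (latticePoint ℓ k) - u t (latticePoint ℓ k) := by
    have hIcc : ∀ s ∈ Icc t (t + σ), s ∈ Icc 0 T := fun s hs =>
      ⟨ht0.trans hs.1, hs.2.trans htT⟩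
    refine h.mul_le_time_increment hσ0 (fun s hs => ⟨hIcc s hs, hx⟩) fun s hs => ?_
    have hclose := (hmod (s, latticePoint ℓ k) ⟨hIcc s hs, hx⟩ (t, latticePoint ℓ k) ⟨ht, hx⟩ (by
      rw [dist_prod_same_right, Real.dist_eq, abs_of_nonneg (sub_nonneg.2 hs.1)]
      linarith [hs.2])).2.1
    linarith [(abs_lt.1 hclose).1]
  calc κ * discreteLaplacian (fun l => u t (latticePoint ℓ l) ^ m) k
      ≤ κ * (ℓ ^ 2 * (ut (t, latticePoint ℓ k) + d * η)) := mul_le_mul_of_nonneg_left hspace hκ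
    _ = (ut (t, latticePoint ℓ k) - η) * σ + σ * ((d + 1) * η) := by
        rw [← mul_assoc, hσ]
        ring
    _ ≤ _ := by gcongr

lemma one_add_mul_pow_le_exp {n : ℕ} (hB : 0 ≤ B) (hσ : 0 ≤ σ) (hn : n * σ = T) :
    (1 + B * σ) ^ n ≤ exp (B * T) := by
  calc (1 + B * σ) ^ n ≤ exp (B * σ) ^ n := by
        gcongr
        linarith [add_one_le_exp (B * σ)]
    _ = exp (B * T) := by
        rw [← exp_nat_mul, ← hn]
        ring_nf

lemma IsFDESolWith.iterate_le_two_mul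
    (h : IsFDESolWith m (Icc 0 T ×ˢ closedBall 0 1) u ut W D) (hm0 : 0 ≤ m) (hm1 : m ≤ 1)
    (hT : 0 ≤ T) (hε : 0 < ε) (hεu : ∀ p ∈ Icc 0 T ×ˢ closedBall 0 1, ε ≤ u p.1 p.2)
    (hC : ∀ p ∈ Icc 0 T ×ˢ closedBall 0 1, |ut p| ≤ C) (hC0 : 0 ≤ C) (hB : C + 2 ≤ B * ε)
    (hB0 : 0 ≤ B)
    (hmod : HasCommonModulus (Icc 0 T ×ˢ closedBall 0 1) u ut D δ (exp (-(B * T)) / (d + 1)))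
    (hℓ : 0 ≤ ℓ) (hℓδ : ℓ < δ) (hmesh : d * (ℓ * (N + 1)) ≤ 1)
    (hCFL : CFL d (fun x => x ^ m) ε κ) (hσ : κ * ℓ ^ 2 = σ) (hσδ : σ < δ) {n : ℕ}
    (hn : n * σ = T) {a : (Fin d → ℤ) → ℝ} (ha : IsSchemeState ε N a)
    (hau : ∀ k ∈ latticeBox d N, a k ≤ u 0 (latticePoint ℓ k)) :
    (fdeStep m ε κ N)^[n] a 0 ≤ 2 * u T 0 := by
  have hσ0 : 0 ≤ σ := hσ ▸ mul_nonneg hCFL.pos.le (sq_nonneg ℓ)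
  have htime : ∀ j ≤ n, (j : ℝ) * σ ≤ T := fun j hj => hn ▸ by gcongr
  have htime_succ : ∀ j < n, (j : ℝ) * σ + σ ≤ T := fun j hj => by
    simpa only [Nat.cast_succ, add_one_mul] using htime (j + 1) hj
  have hball : ∀ k ∈ latticeBox d (N + 1), latticePoint ℓ k ∈ closedBall 0 1 := fun k hk =>
    latticePoint_mem_closedBall hℓ hmesh hk
  have hLip : ∀ j < n, ∀ k ∈ latticeBox d N,
      u (j * σ) (latticePoint ℓ k) - u (j * σ + σ) (latticePoint ℓ k) ≤ C * σ := by
    intro j hj k hk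
    have hmem : ∀ s ∈ Icc (j * σ) (j * σ + σ), (s, latticePoint ℓ k) ∈ Icc 0 T ×ˢ closedBall 0 1 :=
      fun s hs => ⟨⟨(by positivity : 0 ≤ j * σ).trans hs.1, hs.2.trans (htime_succ j hj)⟩,
        hball k (latticeBox_mono (Nat.le_succ N) hk)⟩
    linarith [h.mul_le_time_increment (C := -C) hσ0 hmem fun s hs =>
      (abs_le.1 (hC _ (hmem s hs))).1]
  have hconsistent : ∀ j < n, ∀ k ∈ latticeBox d N,
      κ * discreteLaplacian (fun l => u (j * σ) (latticePoint ℓ l) ^ m) k ≤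
        u (j * σ + σ) (latticePoint ℓ k) - u (j * σ) (latticePoint ℓ k) +
          σ * exp (-(B * T)) := fun j hj k hk =>
    (h.mul_discreteLaplacian_latticePoint_le hmod hℓ hℓδ hCFL.pos.le hσ hσδ hmesh hk
      (by positivity) (htime_succ j hj)).trans_eq (by rw [mul_div_cancel₀ _ (by positivity)])
  have hcompare : (fdeStep m ε κ N)^[n] a 0 ≤
      (1 + exp (-(B * T)) * (1 + B * σ) ^ n) * u (n * σ) (latticePoint ℓ 0) := by
    refine ha.iterate_le_mul_of_consistent (n := n) (C := C)
      (U := fun j k => u (j * σ) (latticePoint ℓ k)) hCFL hm0 hm1 hε hσ0 (exp_nonneg _)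
      (exp_le_one_iff.2 (neg_nonpos.2 (mul_nonneg hB0 hT))) hC0 hB ?_ ?_ ?_ ?_ n le_rfl 0
      (mem_latticeBox.2 fun _ => Nat.zero_le _)
    · exact fun j hj k hk => hεu (_, _) ⟨⟨by positivity, htime j hj⟩, hball k hk⟩
    · simpa only [Nat.cast_zero, zero_mul] using hau
    · simpa only [Nat.cast_succ, add_one_mul] using hconsistent
    · simpa only [Nat.cast_succ, add_one_mul] using hLip
  rw [hn, latticePoint_zero] at hcompare
  have hfactor : exp (-(B * T)) * (1 + B * σ) ^ n ≤ 1 := by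
    calc exp (-(B * T)) * (1 + B * σ) ^ n ≤ exp (-(B * T)) * exp (B * T) := by
          gcongr
          exact one_add_mul_pow_le_exp hB0 hσ0 hn
      _ = 1 := by rw [← exp_add, neg_add_cancel, exp_zero]
  have hu : 0 ≤ u T 0 := (h.pos (T, 0) ⟨⟨hT, le_rfl⟩, mem_closedBall_self zero_le_one⟩).le
  linarith [mul_le_mul_of_nonneg_right hfactor hu]

theorem IsFDESolWith.exists_mesh_bound
    (h : IsFDESolWith m (Icc 0 T ×ˢ closedBall 0 1) u ut W D) (hm0 : 0 ≤ m) (hm1 : m ≤ 1)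
    (hT : 0 ≤ T) (hε : 0 < ε) (hεu : ∀ p ∈ Icc 0 T ×ˢ closedBall 0 1, ε ≤ u p.1 p.2) :
    ∃ δ, 0 < δ ∧
      (∀ x ∈ closedBall 0 1, ∀ y ∈ closedBall 0 1, dist x y < δ → u 0 x ≤ u 0 y + 1) ∧
      ∀ (N n : ℕ) (ℓ κ : ℝ) (a : (Fin d → ℤ) → ℝ), 0 ≤ ℓ → ℓ < δ → d * (ℓ * (N + 1)) ≤ 1 →
        CFL d (fun x => x ^ m) ε κ → κ * ℓ ^ 2 < δ → n * (κ * ℓ ^ 2) = T → IsSchemeState ε N a →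
        (∀ k ∈ latticeBox d N, a k ≤ u 0 (latticePoint ℓ k)) →
        (fdeStep m ε κ N)^[n] a 0 ≤ 2 * u T 0 := by
  have hcompact : IsCompact (Icc 0 T ×ˢ closedBall (0 : EuclideanSpace ℝ (Fin d)) 1) :=
    isCompact_Icc.prod (isCompact_closedBall _ _)
  obtain ⟨C, hC⟩ := hcompact.exists_bound_of_continuousOn h.continuousOn_time
  have hzero : ((0 : ℝ), (0 : EuclideanSpace ℝ (Fin d))) ∈ Icc 0 T ×ˢ closedBall 0 1 :=
    ⟨⟨le_rfl, hT⟩, mem_closedBall_self zero_le_one⟩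
  have hC0 : 0 ≤ C := (norm_nonneg _).trans (hC _ hzero)
  obtain ⟨B, hB⟩ : ∃ B, C + 2 = B * ε := ⟨(C + 2) / ε, (div_mul_cancel₀ _ hε.ne').symm⟩
  have hB0 : 0 ≤ B := (pos_of_mul_pos_left (by linarith : 0 < B * ε) hε.le).le
  obtain ⟨δ, hδ, hmod⟩ := h.exists_hasCommonModulus hcompact
    (by positivity : 0 < exp (-(B * T)) / (d + 1))
  have hη1 : exp (-(B * T)) / (d + 1) ≤ 1 := by
    have : exp (-(B * T)) ≤ 1 := exp_le_one_iff.2 (neg_nonpos.2 (mul_nonneg hB0 hT))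
    exact div_le_one_of_le₀ (by linarith) (by positivity)
  refine ⟨δ, hδ, fun x hx y hy hxy => ?_, ?_⟩
  · have hclose := (hmod (0, x) ⟨hzero.1, hx⟩ (0, y) ⟨hzero.1, hy⟩
      (by rwa [dist_prod_same_left])).1
    linarith [(abs_lt.1 hclose).2]
  · intro N n ℓ κ a hℓ hℓδ hmesh hCFL hσδ hn ha hau
    exact h.iterate_le_two_mul hm0 hm1 hT hε hεu hC hC0 hB.le hB0 hmod hℓ hℓδ hmesh hCFL rfl hσδ
      hn ha hau

end Convergence

section UnitScale

open Filter
open scoped Topology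

variable {d M N : ℕ} {m ε ℓ r T : ℝ}

lemma exists_latticePoint_dist_le (hℓ : 0 < ℓ) (hr : r < (M + 1 / 2) * ℓ)
    {x : EuclideanSpace ℝ (Fin d)} (hx : x ∈ closedBall 0 r) :
    ∃ k ∈ latticeBox d M, dist x (latticePoint ℓ k) ≤ d * ℓ := by
  have hround (i : Fin d) : |x i - ℓ * round (x i / ℓ)| ≤ ℓ / 2 := by
    have hfactor : x i - ℓ * round (x i / ℓ) = ℓ * (x i / ℓ - round (x i / ℓ)) := by field_simp
    rw [hfactor, abs_mul, abs_of_pos hℓ]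
    linarith [mul_le_mul_of_nonneg_left (abs_sub_round (x i / ℓ)) hℓ.le]
  refine ⟨fun i => round (x i / ℓ), mem_latticeBox.2 fun i => ?_, ?_⟩
  · have hxi : |x i| ≤ r := (PiLp.norm_apply_le x i).trans (mem_closedBall_zero_iff.1 hx)
    have hlt : ℓ * |(round (x i / ℓ) : ℝ)| < ℓ * (M + 1) := by
      rw [← abs_of_pos hℓ, ← abs_mul, abs_of_pos hℓ]
      linarith [abs_sub_abs_le_abs_sub (ℓ * round (x i / ℓ)) (x i), hround i,
        abs_sub_comm (ℓ * round (x i / ℓ)) (x i)]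
    have hlt' : |(round (x i / ℓ) : ℝ)| < M + 1 := lt_of_mul_lt_mul_left hlt hℓ.le
    rw [← Int.cast_abs, Int.abs_eq_natAbs] at hlt'
    exact Nat.lt_succ_iff.1 (by exact_mod_cast hlt')
  · rw [dist_eq_norm]
    exact norm_le_of_forall_abs_le fun i => (hround i).trans (by linarith)

lemma volume_real_closedBall_eq (x : EuclideanSpace ℝ (Fin d)) (hr : 0 ≤ r) :
    volume.real (closedBall x r) =
      r ^ d * volume.real (ball (0 : EuclideanSpace ℝ (Fin d)) 1) := by
  rw [Measure.addHaar_real_closedBall _ _ hr, finrank_euclideanSpace_fin]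

lemma setIntegral_closedBall_le_sum_latticePoint {f : EuclideanSpace ℝ (Fin d) → ℝ} (hℓ : 0 < ℓ)
    (hr : r < (M + 1 / 2) * ℓ) (hf : IntegrableOn f (closedBall 0 r))
    (hpos : ∀ k ∈ latticeBox d M, 0 ≤ f (latticePoint ℓ k))
    (hosc : ∀ k ∈ latticeBox d M, ∀ x ∈ closedBall 0 r, dist x (latticePoint ℓ k) ≤ d * ℓ →
      f x ≤ f (latticePoint ℓ k) + 1) :
    ∫ x in closedBall 0 r, f x ≤ (d * ℓ) ^ d *
      volume.real (ball (0 : EuclideanSpace ℝ (Fin d)) 1) *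
        ∑ k ∈ latticeBox d M, (f (latticePoint ℓ k) + 1) := by
  let g (k : Fin d → ℤ) : EuclideanSpace ℝ (Fin d) → ℝ :=
    (closedBall (latticePoint ℓ k) (d * ℓ)).indicator fun _ => f (latticePoint ℓ k) + 1
  have hg : ∀ k ∈ latticeBox d M, IntegrableOn (g k) (closedBall 0 r) := fun k _ =>
    (integrableOn_const measure_closedBall_lt_top.ne).indicator measurableSet_closedBall
  have hfg : ∀ x ∈ closedBall 0 r, f x ≤ ∑ k ∈ latticeBox d M, g k x := by
    intro x hx
    obtain ⟨k, hk, hdist⟩ := exists_latticePoint_dist_le hℓ hr hx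
    calc f x ≤ f (latticePoint ℓ k) + 1 := hosc k hk x hx hdist
      _ = g k x := by simp only [g, indicator_of_mem (mem_closedBall.2 hdist)]
      _ ≤ ∑ k ∈ latticeBox d M, g k x := Finset.single_le_sum (f := fun k => g k x)
          (fun l hl => indicator_nonneg (fun _ _ => by linarith [hpos l hl]) x) hk
  calc ∫ x in closedBall 0 r, f x
      ≤ ∫ x in closedBall 0 r, ∑ k ∈ latticeBox d M, g k x :=
        setIntegral_mono_on hf (integrable_finsetSum _ hg) measurableSet_closedBall hfg
    _ = ∑ k ∈ latticeBox d M, ∫ x in closedBall 0 r, g k x := integral_finsetSum _ hg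
    _ ≤ ∑ k ∈ latticeBox d M, ((d * ℓ) ^ d *
          volume.real (ball (0 : EuclideanSpace ℝ (Fin d)) 1)) * (f (latticePoint ℓ k) + 1) := by
        refine Finset.sum_le_sum fun k hk => ?_
        rw [setIntegral_indicator measurableSet_closedBall, setIntegral_const, smul_eq_mul,
          ← volume_real_closedBall_eq (latticePoint ℓ k) (by positivity)]
        exact mul_le_mul_of_nonneg_right
          (measureReal_mono inter_subset_right measure_closedBall_lt_top.ne)
          (by linarith [hpos k hk])
    _ = _ := (Finset.mul_sum _ _ _).symm

lemma pow_le_sum_sub_of_le_setIntegral {f : EuclideanSpace ℝ (Fin d) → ℝ} (hM : 1 ≤ M)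
    (hMN : M ≤ N) (hε : ε ≤ 1) (hℓ : 0 < ℓ) (hN : 2 * N * (d * ℓ) = 1)
    (hr : r < (M + 1 / 2) * ℓ) (hf : IntegrableOn f (closedBall 0 r))
    (hpos : ∀ k ∈ latticeBox d M, 0 ≤ f (latticePoint ℓ k))
    (hosc : ∀ k ∈ latticeBox d M, ∀ x ∈ closedBall 0 r, dist x (latticePoint ℓ k) ≤ d * ℓ →
      f x ≤ f (latticePoint ℓ k) + 1)
    (hmass : volume.real (ball (0 : EuclideanSpace ℝ (Fin d)) 1) * (1 + 2 * 3 ^ d) / 2 ^ d ≤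
      ∫ x in closedBall 0 r, f x) :
    (N : ℝ) ^ d ≤ ∑ k ∈ latticeBox d M, (f (latticePoint ℓ k) - ε) := by
  set ω := volume.real (ball (0 : EuclideanSpace ℝ (Fin d)) 1) with hω
  have hω0 : 0 < ω :=
    ENNReal.toReal_pos (measure_ball_pos _ _ one_pos).ne' measure_ball_lt_top.ne
  set S := ∑ k ∈ latticeBox d M, (f (latticePoint ℓ k) + 1) with hS
  have hcard : ((latticeBox d M).card : ℝ) ≤ 3 ^ d * N ^ d :=
    (card_latticeBox_le hM).trans (by gcongr)
  have hsum : (1 + 2 * 3 ^ d) * (N : ℝ) ^ d ≤ S := by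
    have hintegral := hmass.trans (setIntegral_closedBall_le_sum_latticePoint hℓ hr hf hpos hosc)
    refine le_of_mul_le_mul_left ?_ hω0
    calc ω * ((1 + 2 * 3 ^ d) * (N : ℝ) ^ d)
        = (2 * N) ^ d * (ω * (1 + 2 * 3 ^ d) / 2 ^ d) := by
          rw [mul_pow]
          field_simp
      _ ≤ (2 * N) ^ d * ((d * ℓ) ^ d * ω * S) := by gcongr
      _ = (2 * N * (d * ℓ)) ^ d * (ω * S) := by
          rw [mul_pow (2 * (N : ℝ)) (d * ℓ)]
          ring
      _ = ω * S := by rw [hN, one_pow, one_mul]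
  calc (N : ℝ) ^ d ≤ S - 2 * (3 ^ d * N ^ d) := by linarith
    _ ≤ S - (1 + ε) * (latticeBox d M).card := by
        gcongr
        linarith
    _ = ∑ k ∈ latticeBox d M, (f (latticePoint ℓ k) - ε) := by
        rw [hS, Finset.sum_add_distrib, Finset.sum_sub_distrib, Finset.sum_const, Finset.sum_const,
          nsmul_eq_mul, nsmul_eq_mul]
        ring

lemma exists_isSchemeState_le {g : (Fin d → ℤ) → ℝ} {A : ℝ} (hA : 0 < A)
    (hg : ∀ k ∈ latticeBox d M, ε ≤ g k) (hAg : A ≤ ∑ k ∈ latticeBox d M, (g k - ε)) :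
    ∃ a, IsSchemeState ε M a ∧ ∑ k ∈ latticeBox d M, (a k - ε) = A ∧
      ∀ k ∈ latticeBox d M, a k ≤ g k := by
  classical
  set S := ∑ k ∈ latticeBox d M, (g k - ε)
  have hS : 0 < S := hA.trans_le hAg
  let a (k : Fin d → ℤ) : ℝ := if k ∈ latticeBox d M then ε + A / S * (g k - ε) else ε
  have ha : ∀ k ∈ latticeBox d M, a k = ε + A / S * (g k - ε) := fun k hk => if_pos hk
  refine ⟨a, ⟨fun k => ?_, fun k hk => if_neg hk⟩, ?_, fun k hk => ?_⟩
  · by_cases hk : k ∈ latticeBox d M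
    · rw [ha k hk]
      exact le_add_of_nonneg_right (mul_nonneg (by positivity) (sub_nonneg.2 (hg k hk)))
    · exact (if_neg hk).ge
  · calc ∑ k ∈ latticeBox d M, (a k - ε) = ∑ k ∈ latticeBox d M, A / S * (g k - ε) :=
          Finset.sum_congr rfl fun k hk => by rw [ha k hk, add_sub_cancel_left]
      _ = A / S * S := (Finset.mul_sum _ _ _).symm
      _ = A := div_mul_cancel₀ _ hS.ne'
  · rw [ha k hk]
    linarith [mul_le_of_le_one_left (sub_nonneg.2 (hg k hk)) ((div_le_one hS).2 hAg)]

lemma IsFDESolWith.exists_pos_le {Q : Set (ℝ × EuclideanSpace ℝ (Fin d))}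
    {u : ℝ → EuclideanSpace ℝ (Fin d) → ℝ} {ut W D} (h : IsFDESolWith m Q u ut W D)
    (hQ : IsCompact Q) : ∃ ε, 0 < ε ∧ ε ≤ 1 ∧ ∀ p ∈ Q, ε ≤ u p.1 p.2 := by
  rcases Q.eq_empty_or_nonempty with rfl | hne
  · exact ⟨1, one_pos, le_rfl, fun p hp => hp.elim⟩
  · obtain ⟨p, hp, hmin⟩ := hQ.exists_isMinOn hne h.continuousOn
    exact ⟨min 1 (u p.1 p.2), lt_min one_pos (h.pos p hp), min_le_left _ _,
      fun q hq => (min_le_right _ _).trans (hmin hq)⟩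

lemma exists_isSchemeState_le_of_le_setIntegral {f : EuclideanSpace ℝ (Fin d) → ℝ} {δ : ℝ}
    (hM : 1 ≤ M) (hMN : M ≤ N) (hε0 : 0 < ε) (hε : ε ≤ 1) (hℓ : 0 < ℓ)
    (hN : 2 * N * (d * ℓ) = 1) (hmesh : d * (ℓ * (N + 1)) ≤ 1) (hδ : d * ℓ < δ)
    (hr : r < (M + 1 / 2) * ℓ) (hr1 : r ≤ 1) (hf : ContinuousOn f (closedBall 0 1))
    (hεf : ∀ x ∈ closedBall 0 1, ε ≤ f x)
    (hosc : ∀ x ∈ closedBall 0 1, ∀ y ∈ closedBall 0 1, dist x y < δ → f x ≤ f y + 1)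
    (hmass : volume.real (ball (0 : EuclideanSpace ℝ (Fin d)) 1) * (1 + 2 * 3 ^ d) / 2 ^ d ≤
      ∫ x in closedBall 0 r, f x) :
    ∃ a, IsSchemeState ε M a ∧ ∑ k ∈ latticeBox d M, (a k - ε) = (N : ℝ) ^ d ∧
      ∀ k ∈ latticeBox d N, a k ≤ f (latticePoint ℓ k) := by
  have hball : closedBall (0 : EuclideanSpace ℝ (Fin d)) r ⊆ closedBall 0 1 :=
    closedBall_subset_closedBall hr1
  have hpoint : ∀ k ∈ latticeBox d N, latticePoint ℓ k ∈ closedBall 0 1 := fun k hk =>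
    latticePoint_mem_closedBall hℓ.le hmesh (latticeBox_mono N.le_succ hk)
  have hpointM : ∀ k ∈ latticeBox d M, latticePoint ℓ k ∈ closedBall 0 1 := fun k hk =>
    hpoint k (latticeBox_mono hMN hk)
  have hN0 : (0 : ℝ) < N := by exact_mod_cast hM.trans hMN
  obtain ⟨a, ha, hsum, hle⟩ := exists_isSchemeState_le (pow_pos hN0 d)
    (fun k hk => hεf _ (hpointM k hk)) <|
    pow_le_sum_sub_of_le_setIntegral hM hMN hε hℓ hN hr
      ((hf.mono hball).integrableOn_compact (isCompact_closedBall _ _))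
      (fun k hk => hε0.le.trans (hεf _ (hpointM k hk)))
      (fun k hk x hx hdist => hosc x (hball hx) _ (hpointM k hk) (hdist.trans_lt hδ)) hmass
  refine ⟨a, ha, hsum, fun k hk => ?_⟩
  by_cases hkM : k ∈ latticeBox d M
  · exact hle k hkM
  · exact (ha.eq_of_notMem k hkM).trans_le (hεf _ (hpoint k hk))

lemma eventually_div_natCast_of_eventually_nhdsGT {P : ℝ → Prop} (hP : ∀ᶠ κ in 𝓝[>] 0, P κ)
    {A : ℝ} (hA : 0 < A) : ∀ᶠ n : ℕ in atTop, P (A / n) := by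
  refine (tendsto_nhdsWithin_iff.2 ⟨tendsto_const_div_atTop_nhds_zero_nat A, ?_⟩).eventually hP
  filter_upwards [eventually_gt_atTop 0] with n hn
  exact div_pos hA (Nat.cast_pos.2 hn)

lemma exists_mesh {θ δ : ℝ} (hd : 1 ≤ d) (hθ : 0 < θ) (hθ1 : θ ≤ 1) (hδ : 0 < δ) :
    ∃ (N M : ℕ) (ℓ : ℝ), 1 ≤ M ∧ M ≤ N ∧ (M : ℝ) ≤ θ * N ∧ 0 < ℓ ∧ 2 * N * (d * ℓ) = 1 ∧
      d * ℓ < δ ∧ d * (ℓ * (N + 1)) ≤ 1 ∧ θ / (4 * d) < (M + 1 / 2) * ℓ := by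
  obtain ⟨N, hθN, hδN⟩ : ∃ N : ℕ, 1 ≤ θ * N ∧ 1 < δ * N :=
    (((tendsto_natCast_atTop_atTop.const_mul_atTop hθ).eventually_ge_atTop 1).and
      ((tendsto_natCast_atTop_atTop.const_mul_atTop hδ).eventually_gt_atTop 1)).exists
  have : (0 : ℝ) < d := by exact_mod_cast hd
  have hθNle : θ * N ≤ N := mul_le_of_le_one_left N.cast_nonneg hθ1
  have hN : (1 : ℝ) ≤ N := hθN.trans hθNle
  have hMle : (⌊θ * N⌋₊ : ℝ) ≤ θ * N := Nat.floor_le (by positivity)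
  have hM : 1 ≤ ⌊θ * N⌋₊ := (Nat.one_le_floor_iff _).2 hθN
  obtain ⟨ℓ, hℓ, hℓN⟩ : ∃ ℓ : ℝ, 0 < ℓ ∧ 2 * N * (d * ℓ) = 1 :=
    ⟨1 / (2 * d * N), by positivity, by field_simp⟩
  refine ⟨N, ⌊θ * N⌋₊, ℓ, hM, by exact_mod_cast hMle.trans hθNle, hMle, hℓ, hℓN, ?_, ?_, ?_⟩
  · nlinarith
  · have hdℓ : d * ℓ * 1 ≤ d * ℓ * N := by gcongr
    linarith
  · have hradius : θ / (4 * d) = θ * N / 2 * ℓ := by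
      rw [div_eq_iff (by positivity)]
      linear_combination -θ * hℓN
    rw [hradius]
    gcongr
    linarith [Nat.lt_floor_add_one (θ * N), (Nat.one_le_cast (α := ℝ)).2 hM]

/-- The lower Harnack inequality at one scale: every solution up to the closed unit cylinder of
height `T` whose initial mass in the ball of radius `r` is at least `K` is at least `c` at the
centre at time `T`. -/
def UnitScaleBound (d : ℕ) (m r T c K : ℝ) : Prop :=
  ∀ (u : ℝ → EuclideanSpace ℝ (Fin d) → ℝ) ut W D,
    IsFDESolWith m (Icc 0 T ×ˢ closedBall 0 1) u ut W D →
    K ≤ ∫ x in closedBall 0 r, u 0 x → c ≤ u T 0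

theorem exists_unitScaleBound (hd : 2 ≤ d) (hmc : (d - 2 : ℝ) / d < m) (hm1 : m < 1) :
    ∃ r T c K : ℝ, 0 < r ∧ r ≤ 1 ∧ 0 < T ∧ 0 < c ∧ 0 < K ∧ UnitScaleBound d m r T c K := by
  have hd2 : (2 : ℝ) ≤ d := by exact_mod_cast hd
  have hm0 : 0 < m := lt_of_le_of_lt (div_nonneg (by linarith) (by linarith)) hmc
  have hω : 0 < volume.real (ball (0 : EuclideanSpace ℝ (Fin d)) 1) :=
    ENNReal.toReal_pos (measure_ball_pos _ _ one_pos).ne' measure_ball_lt_top.ne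
  obtain ⟨θ, τ, c, hθ, hθ1, hτ, hc, hscheme⟩ := exists_le_iterate_zero hd hmc hm1
  have hT : 0 < τ / (2 * d) ^ 2 := by positivity
  have hr1 : θ / (4 * d) ≤ 1 := (div_le_one (by positivity)).2 (by linarith)
  refine ⟨θ / (4 * d), τ / (2 * d) ^ 2, c / 2, _, by positivity, hr1, hT, by positivity,
    show 0 < volume.real (ball (0 : EuclideanSpace ℝ (Fin d)) 1) * (1 + 2 * 3 ^ d) / 2 ^ d by
      positivity, fun u ut W D h hmass => ?_⟩
  obtain ⟨ε, hε, hε1, hεu⟩ := h.exists_pos_le (isCompact_Icc.prod (isCompact_closedBall _ _))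
  obtain ⟨δ, hδ, hosc, hbound⟩ := h.exists_mesh_bound hm0.le hm1.le hT.le hε hεu
  obtain ⟨N, M, ℓ, hM, hMN, hMθ, hℓ, hℓN, hℓδ, hmesh, hr⟩ :=
    exists_mesh (one_le_two.trans hd) hθ hθ1 hδ
  have hu₀ : ContinuousOn (u 0) (closedBall 0 1) :=
    h.continuousOn.comp (f := fun x => ((0 : ℝ), x)) (by fun_prop)
      fun x hx => ⟨left_mem_Icc.2 hT.le, hx⟩
  obtain ⟨a, ha, hsum, hau⟩ := exists_isSchemeState_le_of_le_setIntegral hM hMN hε hε1 hℓ hℓN hmesh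
    hℓδ hr hr1 hu₀ (fun x hx => hεu (0, x) ⟨left_mem_Icc.2 hT.le, hx⟩) hosc hmass
  have hN0 : (0 : ℝ) < N := by exact_mod_cast hM.trans hMN
  obtain ⟨n, ⟨hcfl, hc⟩, hn0, hnδ⟩ :=
    ((eventually_div_natCast_of_eventually_nhdsGT (hscheme N M ε a hM hMθ hε hε1 ha hsum)
      (show 0 < τ * (N : ℝ) ^ 2 by positivity)).and ((eventually_gt_atTop 0).and
      ((tendsto_const_div_atTop_nhds_zero_nat (τ / (2 * d) ^ 2)).eventually_lt_const hδ))).exists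
  have hn : (n : ℝ) ≠ 0 := Nat.cast_ne_zero.2 hn0.ne'
  have hκℓ : τ * N ^ 2 / n * ℓ ^ 2 = τ / (2 * d) ^ 2 / n := by
    field_simp
    linear_combination (2 * N * (d * ℓ) + 1) * hℓN
  have hle : (fdeStep m ε (τ * N ^ 2 / n) N)^[n] a 0 ≤ 2 * u (τ / (2 * d) ^ 2) 0 := by
    refine hbound N n ℓ _ a hℓ.le ?_ hmesh hcfl (by rwa [hκℓ]) ?_ (ha.mono hMN) hau
    · exact (le_mul_of_one_le_left hℓ.le (by linarith)).trans_lt hℓδ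
    · rw [hκℓ, mul_div_cancel₀ _ hn]
  linarith [hc n (mul_div_cancel₀ _ hn)]

end UnitScale

section Comparison

open Filter
open scoped Topology

lemma nonneg_of_isLocalMin_of_hasDerivAt {f f₁ : ℝ → ℝ} {x f₂ : ℝ} (hmin : IsLocalMin f x)
    (hf : ∀ᶠ s in 𝓝 x, HasDerivAt f (f₁ s) s) (hf₁ : HasDerivAt f₁ f₂ x) : 0 ≤ f₂ := by
  by_contra! hneg
  have hf₂ : HasDerivAt (deriv f) f₂ x :=
    hf₁.congr_of_eventuallyEq (hf.mono fun s hs => hs.deriv)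
  have hmax : IsLocalMax f x := isLocalMax_of_deriv_deriv_neg (hf₂.deriv.trans_lt hneg)
    hmin.deriv_eq_zero hf.self_of_nhds.continuousAt
  have hconst : f =ᶠ[𝓝 x] fun _ => f x := by
    filter_upwards [hmin, hmax] with s hge hle using le_antisymm hle hge
  have hzero : f₂ = 0 := hf₂.deriv.symm.trans (by simp [hconst.deriv.deriv_eq])
  exact hneg.ne hzero

lemma nonneg_of_isMinOn_of_hasLineDerivAt {E : Type*} [NormedAddCommGroup E] [NormedSpace ℝ E]
    {S : Set E} {f f₁ : E → ℝ} {x v : E} {f₂ : ℝ} (hmin : IsMinOn f S x) (hx : x ∈ interior S)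
    (hf : ∀ y ∈ S, HasLineDerivAt ℝ f (f₁ y) y v) (hf₁ : HasLineDerivAt ℝ f₁ f₂ x v) :
    0 ≤ f₂ := by
  have hnear : ∀ᶠ s in 𝓝 (0 : ℝ), x + s • v ∈ S := by
    have hcont : ContinuousAt (fun s : ℝ => x + s • v) 0 := by fun_prop
    exact hcont.preimage_mem_nhds (by simpa using mem_interior_iff_mem_nhds.1 hx)
  refine nonneg_of_isLocalMin_of_hasDerivAt (f := fun s => f (x + s • v)) ?_ ?_ hf₁
  · filter_upwards [hnear] with s hs
    simpa using hmin hs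
  · filter_upwards [hnear] with s hs
    exact hasDerivAt_comp_add_smul_of_hasLineDerivAt (hf _ hs)

lemma nonpos_of_hasDerivAt_of_forall_le {f : ℝ → ℝ} {f' a t : ℝ} (hf : HasDerivAt f f' t)
    (ha : a < t) (hmin : ∀ s ∈ Ioo a t, f t ≤ f s) : f' ≤ 0 := by
  have hslope := (hasDerivWithinAt_iff_tendsto_slope' self_notMem_Iio).1
    (hf.hasDerivWithinAt (s := Iio t))
  refine le_of_tendsto hslope ?_
  filter_upwards [Ioo_mem_nhdsLT ha] with s hs
  rw [slope_def_field]
  exact div_nonpos_of_nonneg_of_nonpos (sub_nonneg.2 (hmin s hs)) (sub_nonpos.2 hs.2.le)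

variable {d : ℕ} {m t T : ℝ}

lemma inv_mul_rpow_le_rpow_sub_one {w g : ℝ} (hm0 : 0 < m) (hm1 : m < 1) (ht : 0 < t) (hw : 0 < w)
    (hg : 0 < g) (hwg : w ^ m ≤ t ^ (m / (1 - m)) * g) :
    t⁻¹ * g ^ (1 - 1 / m) ≤ w ^ (m - 1) := by
  have hm1' : 1 - m ≠ 0 := by linarith
  calc t⁻¹ * g ^ (1 - 1 / m) = (t ^ (m / (1 - m)) * g) ^ ((m - 1) / m) := by
        rw [mul_rpow (by positivity) hg.le, ← rpow_mul ht.le, ← rpow_neg_one]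
        congr 2 <;> field_simp
        ring
    _ ≤ (w ^ m) ^ ((m - 1) / m) := rpow_le_rpow_of_nonpos (by positivity) hwg
        (div_nonpos_of_nonpos_of_nonneg (by linarith) hm0.le)
    _ = w ^ (m - 1) := by rw [← rpow_mul hw.le, mul_div_cancel₀ _ hm0.ne']

lemma separable_time_deriv_pos {w w' g L : ℝ} (hm0 : 0 < m) (hm1 : m < 1) (ht : 0 < t) (hw : 0 < w)
    (hg : 0 < g) (hwg : w ^ m ≤ t ^ (m / (1 - m)) * g) (hL : 1 / (1 - m) * g ^ (1 / m) < L)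
    (hw' : t ^ (m / (1 - m)) * L ≤ w') :
    0 < w' * m * w ^ (m - 1) - m / (1 - m) * t ^ (m / (1 - m) - 1) * g := by
  have : 0 < 1 - m := by linarith
  have hgpow : g ^ (1 / m) * g ^ (1 - 1 / m) = g := by
    rw [← rpow_add hg, add_sub_cancel, rpow_one]
  rw [sub_pos]
  calc m / (1 - m) * t ^ (m / (1 - m) - 1) * g
      = t ^ (m / (1 - m)) * (1 / (1 - m) * g ^ (1 / m)) * m * (t⁻¹ * g ^ (1 - 1 / m)) := by
        rw [rpow_sub_one ht.ne']
        linear_combination (-m / (1 - m) * t ^ (m / (1 - m)) * t⁻¹) * hgpow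
    _ < t ^ (m / (1 - m)) * L * m * (t⁻¹ * g ^ (1 - 1 / m)) := by gcongr
    _ ≤ w' * m * (t⁻¹ * g ^ (1 - 1 / m)) := by gcongr
    _ ≤ w' * m * w ^ (m - 1) := by
        have hL0 : 0 < L := lt_trans (by positivity) hL
        have hw'0 : 0 ≤ w' := le_trans (by positivity) hw'
        gcongr
        exact inv_mul_rpow_le_rpow_sub_one hm0 hm1 ht hw hg hwg

variable {S : Set (EuclideanSpace ℝ (Fin d))} {v : ℝ → EuclideanSpace ℝ (Fin d) → ℝ}
  {ut : ℝ × EuclideanSpace ℝ (Fin d) → ℝ} {W D : Fin d → ℝ × EuclideanSpace ℝ (Fin d) → ℝ}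
  {G : EuclideanSpace ℝ (Fin d) → ℝ} {G₁ G₂ : Fin d → EuclideanSpace ℝ (Fin d) → ℝ}
  {x : EuclideanSpace ℝ (Fin d)}

lemma IsFDESolWith.mul_sum_le_time_deriv {I : Set ℝ} {b : ℝ} (h : IsFDESolWith m (I ×ˢ S) v ut W D)
    (hG₁ : ∀ i, ∀ y ∈ S, HasLineDerivAt ℝ G (G₁ i y) y (EuclideanSpace.single i 1))
    (hG₂ : ∀ i, ∀ y ∈ S, HasLineDerivAt ℝ (G₁ i) (G₂ i y) y (EuclideanSpace.single i 1))
    (ht : t ∈ I) (hx : x ∈ interior S) (hmin : IsMinOn (fun y => v t y ^ m - b * G y) S x) :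
    b * ∑ i, G₂ i x ≤ ut (t, x) := by
  have hxS : x ∈ S := interior_subset hx
  rw [h.eq_sum _ ⟨ht, hxS⟩, Finset.mul_sum]
  refine Finset.sum_le_sum fun i _ => sub_nonneg.1 ?_
  exact nonneg_of_isMinOn_of_hasLineDerivAt hmin hx (f₁ := fun y => W i (t, y) - b * G₁ i y)
    (fun y hy => HasDerivAt.sub (h.hasLineDerivAt_first i (t, y) ⟨ht, hy⟩)
      (HasDerivAt.const_mul b (hG₁ i y hy)))
    (HasDerivAt.sub (h.hasLineDerivAt_second i (t, x) ⟨ht, hxS⟩)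
      (HasDerivAt.const_mul b (hG₂ i x hxS)))

theorem IsFDESolWith.rpow_mul_le_rpow_of_strict_subsolution (hm0 : 0 < m) (hm1 : m < 1)
    (hS : IsCompact S) (h : IsFDESolWith m (Ioo 0 T ×ˢ S) v ut W D)
    (hcont : ContinuousOn (fun p : ℝ × EuclideanSpace ℝ (Fin d) => v p.1 p.2) (Ico 0 T ×ˢ S))
    (hv₀ : ∀ x ∈ S, 0 ≤ v 0 x) (hG : ContinuousOn G S)
    (hG₁ : ∀ i, ∀ y ∈ S, HasLineDerivAt ℝ G (G₁ i y) y (EuclideanSpace.single i 1))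
    (hG₂ : ∀ i, ∀ y ∈ S, HasLineDerivAt ℝ (G₁ i) (G₂ i y) y (EuclideanSpace.single i 1))
    (hsub : ∀ x ∈ S, 0 < G x → 1 / (1 - m) * G x ^ (1 / m) < ∑ i, G₂ i x)
    (ht : t ∈ Ioo 0 T) (hbdry : ∀ s ∈ Ioc 0 t, ∀ x ∈ S, x ∉ interior S →
      s ^ (m / (1 - m)) * G x ≤ v s x ^ m) (hx : x ∈ S) :
    t ^ (m / (1 - m)) * G x ≤ v t x ^ m := by
  have hq : 0 < m / (1 - m) := div_pos hm0 (by linarith)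
  let gap (p : ℝ × EuclideanSpace ℝ (Fin d)) : ℝ := v p.1 p.2 ^ m - p.1 ^ (m / (1 - m)) * G p.2
  have hgap : ContinuousOn gap (Icc 0 t ×ˢ S) :=
    ((hcont.mono (prod_mono_left (Icc_subset_Ico_right ht.2))).rpow_const
      fun p _ => .inr hm0.le).sub ((continuousOn_fst.rpow_const fun p _ => .inr hq.le).mul
        (hG.comp continuousOn_snd fun p hp => hp.2))
  have htx : (t, x) ∈ Icc 0 t ×ˢ S := ⟨right_mem_Icc.2 ht.1.le, hx⟩
  obtain ⟨⟨s, y⟩, ⟨hs, hy⟩, hmin⟩ := (isCompact_Icc.prod hS).exists_isMinOn ⟨_, htx⟩ hgap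
  replace hs : s ∈ Icc 0 t := hs
  suffices hnonneg : 0 ≤ gap (s, y) from sub_nonneg.1 (hnonneg.trans (hmin htx))
  by_contra! hneg
  have hlt : v s y ^ m < s ^ (m / (1 - m)) * G y := sub_neg.1 hneg
  have hs0 : 0 < s := by
    refine hs.1.lt_of_ne fun hs0 => ?_
    rw [← hs0, zero_rpow hq.ne', zero_mul] at hlt
    exact hlt.not_ge (rpow_nonneg (hv₀ y hy) m)
  have hsT : s ∈ Ioo 0 T := ⟨hs0, hs.2.trans_lt ht.2⟩
  have hyint : y ∈ interior S := by
    by_contra hy'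
    exact hlt.not_ge (hbdry s ⟨hs0, hs.2⟩ y hy hy')
  have hv : 0 < v s y := h.pos (s, y) ⟨hsT, hy⟩
  have hGy : 0 < G y :=
    pos_of_mul_pos_right ((rpow_nonneg hv.le m).trans_lt hlt) (rpow_nonneg hs0.le _)
  have hspace : s ^ (m / (1 - m)) * ∑ i, G₂ i y ≤ ut (s, y) :=
    h.mul_sum_le_time_deriv hG₁ hG₂ hsT hyint fun z hz => hmin (show (s, z) ∈ _ from ⟨hs, hz⟩)
  have hderiv : HasDerivAt (fun r => v r y ^ m - r ^ (m / (1 - m)) * G y)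
      (ut (s, y) * m * v s y ^ (m - 1) - m / (1 - m) * s ^ (m / (1 - m) - 1) * G y) s :=
    ((h.hasDerivAt_time (s, y) ⟨hsT, hy⟩).rpow_const (.inl hv.ne')).sub
      ((hasDerivAt_rpow_const (.inl hs0.ne')).mul_const _)
  have htime := nonpos_of_hasDerivAt_of_forall_le hderiv hs0 fun r hr =>
    hmin (show (r, y) ∈ _ from ⟨⟨hr.1.le, hr.2.le.trans hs.2⟩, hy⟩)
  exact htime.not_gt <|
    separable_time_deriv_pos hm0 hm1 hs0 hv hGy hlt.le (hsub y hy hGy) hspace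

end Comparison

section Barrier

open Filter
open scoped Topology

variable {d : ℕ} {m ρ ε a : ℝ} {x z : EuclideanSpace ℝ (Fin d)}

/-- The Gaussian profile about `z` of height `ε` and rate `a`, lowered so as to vanish on the sphere
of radius `2`. For `a` large and `ε` small, `t ^ (m / (1 - m))` times this profile is a strict
subsolution of the equation satisfied by `u ^ m`, away from `z`. -/
noncomputable def gaussianBarrier (ε a : ℝ) (z x : EuclideanSpace ℝ (Fin d)) : ℝ :=
  ε * (exp (-a * ‖x - z‖ ^ 2) - exp (-a * 4))

lemma continuous_gaussianBarrier : Continuous (gaussianBarrier ε a z) := by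
  unfold gaussianBarrier
  fun_prop

lemma gaussianBarrier_le (hε : 0 ≤ ε) (ha : 0 ≤ a) : gaussianBarrier ε a z x ≤ ε := by
  have hexp : exp (-a * ‖x - z‖ ^ 2) ≤ 1 :=
    exp_le_one_iff.2 (mul_nonpos_of_nonpos_of_nonneg (neg_nonpos.2 ha) (by positivity))
  exact mul_le_of_le_one_right hε (by linarith [exp_pos (-a * 4)])

lemma gaussianBarrier_eq_zero (hx : ‖x - z‖ = 2) : gaussianBarrier ε a z x = 0 := by
  rw [gaussianBarrier, hx]
  norm_num

lemma hasLineDerivAt_exp_neg_mul_norm_sub_sq (i : Fin d) :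
    HasLineDerivAt ℝ (fun y => exp (-a * ‖y - z‖ ^ 2))
      (exp (-a * ‖x - z‖ ^ 2) * (-a * (2 * (x i - z i)))) x (EuclideanSpace.single i 1) := by
  have hsq : HasFDerivAt (fun y => ‖y - z‖ ^ 2) (2 • (innerSL ℝ (x - z)).comp (.id ℝ _)) x :=
    ((hasFDerivAt_id x).sub_const z).norm_sq
  refine HasDerivAt.congr_deriv
    ((hsq.const_mul (-a)).exp.hasLineDerivAt (EuclideanSpace.single i 1)) ?_
  simp [EuclideanSpace.inner_single_right]

lemma hasLineDerivAt_gaussianBarrier (i : Fin d) :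
    HasLineDerivAt ℝ (gaussianBarrier ε a z)
      (ε * (exp (-a * ‖x - z‖ ^ 2) * (-a * (2 * (x i - z i))))) x (EuclideanSpace.single i 1) :=
  HasDerivAt.const_mul ε (HasDerivAt.sub_const _ (hasLineDerivAt_exp_neg_mul_norm_sub_sq i))

lemma hasLineDerivAt_gaussianBarrier_deriv (i : Fin d) :
    HasLineDerivAt ℝ (fun y => ε * (exp (-a * ‖y - z‖ ^ 2) * (-a * (2 * (y i - z i)))))
      (ε * (exp (-a * ‖x - z‖ ^ 2) * (4 * a ^ 2 * (x i - z i) ^ 2 - 2 * a))) x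
      (EuclideanSpace.single i 1) := by
  have hcoord : HasLineDerivAt ℝ (fun y : EuclideanSpace ℝ (Fin d) => -a * (2 * (y i - z i)))
      (-a * (2 * 1)) x (EuclideanSpace.single i 1) := by
    refine HasDerivAt.const_mul (-a) (HasDerivAt.const_mul 2 (HasDerivAt.sub_const _ ?_))
    simpa using (hasDerivAt_id (0 : ℝ)).const_add (x i)
  have hexp := hasLineDerivAt_exp_neg_mul_norm_sub_sq (a := a) (x := x) (z := z) i
  refine HasDerivAt.congr_deriv (HasDerivAt.const_mul ε (HasDerivAt.mul hexp hcoord)) ?_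
  simp only [zero_smul, add_zero]
  ring

lemma sum_gaussianBarrier_second_deriv :
    ∑ i, ε * (exp (-a * ‖x - z‖ ^ 2) * (4 * a ^ 2 * (x i - z i) ^ 2 - 2 * a)) =
      ε * (exp (-a * ‖x - z‖ ^ 2) * (4 * a ^ 2 * ‖x - z‖ ^ 2 - 2 * d * a)) := by
  rw [← Finset.mul_sum, ← Finset.mul_sum, Finset.sum_sub_distrib, ← Finset.mul_sum,
    EuclideanSpace.real_norm_sq_eq, Finset.sum_const, Finset.card_univ, Fintype.card_fin,
    nsmul_eq_mul]
  simp only [PiLp.sub_apply]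
  ring

lemma exists_gaussianBarrier_strict_subsolution (d : ℕ) {c : ℝ} (hm0 : 0 < m) (hm1 : m < 1)
    (hρ : 0 < ρ) (hc : 0 < c) :
    ∃ ε a : ℝ, 0 < ε ∧ ε ≤ c ∧ 0 < a ∧ ∀ x z : EuclideanSpace ℝ (Fin d), ρ ≤ ‖x - z‖ →
      0 < gaussianBarrier ε a z x → 1 / (1 - m) * gaussianBarrier ε a z x ^ (1 / m) <
        ∑ i, ε * (exp (-a * ‖x - z‖ ^ 2) * (4 * a ^ 2 * (x i - z i) ^ 2 - 2 * a)) := by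
  have hm1' : 0 < 1 - m := by linarith
  have hσ : 0 < 1 / m - 1 := sub_pos.2 ((one_lt_div hm0).2 hm1)
  obtain ⟨a, ha, haρ⟩ : ∃ a : ℝ, 0 < a ∧ 4 * a * ρ ^ 2 = 2 * d + 1 :=
    ⟨(2 * d + 1) / (4 * ρ ^ 2), by positivity, by field_simp⟩
  obtain ⟨ε, hεσ, hε, hεc⟩ :
      ∃ ε : ℝ, ε ^ (1 / m - 1) < (1 - m) * (exp (-a * 4) * a) ∧ ε ∈ Ioc 0 c := by
    have hzero : ∀ᶠ ε in 𝓝 (0 : ℝ), ε ^ (1 / m - 1) < (1 - m) * (exp (-a * 4) * a) :=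
      (continuousAt_rpow_const 0 (1 / m - 1) (.inr hσ.le)).eventually_lt continuousAt_const
        (by rw [zero_rpow hσ.ne']; positivity)
    exact ((hzero.filter_mono nhdsWithin_le_nhds).and (Ioc_mem_nhdsGT hc)).exists
  refine ⟨ε, a, hε, hεc, ha, fun x z hx hpos => ?_⟩
  rw [sum_gaussianBarrier_second_deriv]
  have hexp : exp (-a * 4) ≤ exp (-a * ‖x - z‖ ^ 2) :=
    (sub_pos.1 (pos_of_mul_pos_right hpos hε.le)).le
  have hcurv : a ≤ 4 * a ^ 2 * ‖x - z‖ ^ 2 - 2 * d * a := by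
    have hmono : a * (4 * a * ρ ^ 2) ≤ a * (4 * a * ‖x - z‖ ^ 2) := by gcongr
    rw [haρ] at hmono
    linarith
  calc 1 / (1 - m) * gaussianBarrier ε a z x ^ (1 / m)
      ≤ 1 / (1 - m) * ε ^ (1 / m) := by
        gcongr
        exact gaussianBarrier_le hε.le ha.le
    _ = ε * (1 / (1 - m) * ε ^ (1 / m - 1)) := by
        rw [rpow_sub_one hε.ne']
        field_simp
    _ < ε * (1 / (1 - m) * ((1 - m) * (exp (-a * 4) * a))) := by gcongr
    _ = ε * (exp (-a * 4) * a) := by field_simp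
    _ ≤ ε * (exp (-a * ‖x - z‖ ^ 2) * (4 * a ^ 2 * ‖x - z‖ ^ 2 - 2 * d * a)) := by gcongr

lemma norm_sub_eq_or_eq_of_notMem_interior {R : ℝ} (hx : x ∈ closedBall z R \ ball z ρ)
    (hx' : x ∉ interior (closedBall z R \ ball z ρ)) : ‖x - z‖ = ρ ∨ ‖x - z‖ = R := by
  obtain ⟨hR, hρ⟩ : ‖x - z‖ ≤ R ∧ ρ ≤ ‖x - z‖ := by simpa [dist_eq_norm] using hx
  by_contra! hne
  refine hx' (mem_interior.2 ⟨ball z R \ closedBall z ρ,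
    sdiff_subset_sdiff ball_subset_closedBall ball_subset_closedBall,
    isOpen_ball.sdiff isClosed_closedBall, ?_⟩)
  simpa [dist_eq_norm] using And.intro (hR.lt_of_ne hne.2) (hρ.lt_of_ne hne.1.symm)

variable {T : ℝ} {v : ℝ → EuclideanSpace ℝ (Fin d) → ℝ}
  {ut : ℝ × EuclideanSpace ℝ (Fin d) → ℝ} {W D : Fin d → ℝ × EuclideanSpace ℝ (Fin d) → ℝ}

lemma IsFDESolWith.rpow_mul_gaussianBarrier_le {t b : ℝ} (hm0 : 0 < m) (hm1 : m < 1)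
    (hb : 0 ≤ b) (hε : 0 ≤ ε) (hεb : ε ≤ b ^ m) (ha : 0 ≤ a)
    (hsub : ∀ x : EuclideanSpace ℝ (Fin d), ρ ≤ ‖x - z‖ →
      0 < gaussianBarrier ε a z x → 1 / (1 - m) * gaussianBarrier ε a z x ^ (1 / m) <
        ∑ i, ε * (exp (-a * ‖x - z‖ ^ 2) * (4 * a ^ 2 * (x i - z i) ^ 2 - 2 * a)))
    (h : IsFDESolWith m (Ioo 0 T ×ˢ closedBall z 2) v ut W D)
    (hcont : ContinuousOn (fun p : ℝ × EuclideanSpace ℝ (Fin d) => v p.1 p.2)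
      (Ico 0 T ×ˢ closedBall z 2))
    (hv₀ : ∀ x ∈ closedBall z 2, 0 ≤ v 0 x) (ht : t ∈ Ioo 0 T)
    (hinner : ∀ s ∈ Ioc 0 t, ∀ x ∈ closedBall z ρ, b * s ^ (1 / (1 - m)) ≤ v s x)
    (hx : x ∈ closedBall z 2 \ ball z ρ) :
    t ^ (m / (1 - m)) * gaussianBarrier ε a z x ≤ v t x ^ m := by
  have hsubset : closedBall z 2 \ ball z ρ ⊆ closedBall z 2 := sdiff_subset
  refine (h.mono (prod_mono_right hsubset)).rpow_mul_le_rpow_of_strict_subsolution hm0 hm1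
    ((isCompact_closedBall z 2).diff isOpen_ball) (hcont.mono (prod_mono_right hsubset))
    (fun y hy => hv₀ y (hsubset hy)) continuous_gaussianBarrier.continuousOn
    (fun i y _ => hasLineDerivAt_gaussianBarrier i)
    (fun i y _ => hasLineDerivAt_gaussianBarrier_deriv i)
    (fun y hy => hsub y (by simpa [dist_eq_norm] using hy.2)) ht (fun s hs y hy hy' => ?_) hx
  have hvy : 0 < v s y := h.pos (s, y) ⟨⟨hs.1, hs.2.trans_lt ht.2⟩, hsubset hy⟩
  rcases norm_sub_eq_or_eq_of_notMem_interior hy hy' with hnorm | hnorm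
  · calc s ^ (m / (1 - m)) * gaussianBarrier ε a z y ≤ s ^ (m / (1 - m)) * b ^ m := by
          gcongr
          · exact rpow_nonneg hs.1.le _
          · exact (gaussianBarrier_le hε ha).trans hεb
      _ = (b * s ^ (1 / (1 - m))) ^ m := by
          rw [mul_rpow hb (rpow_nonneg hs.1.le _), ← rpow_mul hs.1.le, mul_comm, one_div_mul_eq_div]
      _ ≤ v s y ^ m := by
          refine rpow_le_rpow (mul_nonneg hb (rpow_nonneg hs.1.le _)) ?_ hm0.le
          exact hinner s hs y (by simp [dist_eq_norm, hnorm])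
  · rw [gaussianBarrier_eq_zero hnorm, mul_zero]
    exact rpow_nonneg hvy.le m

theorem exists_mul_rpow_le_of_forall_closedBall (d : ℕ) {b : ℝ} (hm0 : 0 < m) (hm1 : m < 1)
    (hρ : 0 < ρ) (hb : 0 < b) :
    ∃ c : ℝ, 0 < c ∧ ∀ (v : ℝ → EuclideanSpace ℝ (Fin d) → ℝ) (T : ℝ) ut W D
      (z y : EuclideanSpace ℝ (Fin d)) (t : ℝ),
      IsFDESolWith m (Ioo 0 T ×ˢ closedBall z 2) v ut W D →
      ContinuousOn (fun p : ℝ × EuclideanSpace ℝ (Fin d) => v p.1 p.2)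
        (Ico 0 T ×ˢ closedBall z 2) →
      (∀ x ∈ closedBall z 2, 0 ≤ v 0 x) → y ∈ closedBall z 1 → t ∈ Ioo 0 T →
      (∀ s ∈ Ioc 0 t, ∀ x ∈ closedBall z ρ, b * s ^ (1 / (1 - m)) ≤ v s x) →
      c * t ^ (1 / (1 - m)) ≤ v t y := by
  have hm1' : 0 < 1 - m := by linarith
  obtain ⟨ε, a, hε, hεb, ha, hsub⟩ :=
    exists_gaussianBarrier_strict_subsolution d hm0 hm1 hρ (rpow_pos_of_pos hb m)
  set g := ε * (exp (-a * 1) - exp (-a * 4)) with hg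
  have hg0 : 0 < g := mul_pos hε (sub_pos.2 (exp_lt_exp.2 (by linarith)))
  refine ⟨min b (g ^ (1 / m)), lt_min hb (by positivity), ?_⟩
  intro v T ut W D z y t h hcont hv₀ hy ht hinner
  have htpow : 0 ≤ t ^ (1 / (1 - m)) := rpow_nonneg ht.1.le _
  by_cases hyρ : y ∈ closedBall z ρ
  · exact (mul_le_mul_of_nonneg_right (min_le_left _ _) htpow).trans
      (hinner t ⟨ht.1, le_rfl⟩ y hyρ)
  have hyz : ‖y - z‖ ≤ 1 := mem_closedBall_iff_norm.1 hy
  have hgy : g ≤ gaussianBarrier ε a z y := by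
    have hsq : ‖y - z‖ ^ 2 ≤ 1 := pow_le_one₀ (norm_nonneg _) hyz
    rw [hg, gaussianBarrier]
    gcongr ε * (exp ?_ - _)
    nlinarith
  have hy2 : y ∈ closedBall z 2 := closedBall_subset_closedBall one_le_two hy
  have hbarrier : t ^ (m / (1 - m)) * g ≤ v t y ^ m :=
    (mul_le_mul_of_nonneg_left hgy (rpow_nonneg ht.1.le _)).trans <|
      h.rpow_mul_gaussianBarrier_le hm0 hm1 hb.le hε.le hεb ha.le (fun x => hsub x z) hcont hv₀ ht
        hinner ⟨hy2, fun hmem => hyρ (ball_subset_closedBall hmem)⟩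
  have hv : 0 < v t y := h.pos (t, y) ⟨ht, hy2⟩
  calc min b (g ^ (1 / m)) * t ^ (1 / (1 - m)) ≤ g ^ (1 / m) * t ^ (1 / (1 - m)) := by
        gcongr
        exact min_le_right _ _
    _ = (t ^ (m / (1 - m)) * g) ^ (1 / m) := by
        rw [mul_rpow (rpow_nonneg ht.1.le _) hg0.le, ← rpow_mul ht.1.le, mul_comm]
        congr 2
        field_simp
    _ ≤ (v t y ^ m) ^ (1 / m) :=
        rpow_le_rpow (mul_nonneg (rpow_nonneg ht.1.le _) hg0.le) hbarrier (by positivity)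
    _ = v t y := by rw [← rpow_mul hv.le, mul_one_div_cancel hm0.ne', rpow_one]

end Barrier

section LocalBound

open Filter
open scoped Topology

lemma continuousOn_setIntegral_of_isCompact {X Y : Type*} [TopologicalSpace X]
    [FirstCountableTopology X] [TopologicalSpace Y] [T2Space Y] [MeasurableSpace Y]
    [OpensMeasurableSpace Y] {μ : Measure Y} [IsFiniteMeasureOnCompacts μ] {f : X → Y → ℝ}
    {S : Set X} {K : Set Y} (hS : IsCompact S) (hK : IsCompact K)
    (hf : ContinuousOn (fun p : X × Y => f p.1 p.2) (S ×ˢ K)) :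
    ContinuousOn (fun s => ∫ y in K, f s y ∂μ) S := by
  obtain ⟨C, hC⟩ := (hS.prod hK).exists_bound_of_continuousOn hf
  refine continuousOn_of_dominated (bound := fun _ => C) (fun s hs => ?_) (fun s hs => ?_)
    (integrableOn_const hK.measure_ne_top) ?_
  · exact (hf.uncurry_left s hs).aestronglyMeasurable hK.measurableSet
  · exact ae_restrict_of_forall_mem hK.measurableSet fun y hy => hC (s, y) ⟨hs, hy⟩
  · exact ae_restrict_of_forall_mem hK.measurableSet fun y hy => hf.uncurry_right y hy

lemma setIntegral_preimage_const_add {E : Type*} [AddGroup E] [MeasurableSpace E]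
    [MeasurableAdd E] {μ : Measure E} [μ.IsAddLeftInvariant] (f : E → ℝ) (s : Set E) (x : E) :
    ∫ y in (x + ·) ⁻¹' s, f (x + y) ∂μ = ∫ y in s, f y ∂μ :=
  (measurePreserving_add_left μ x).setIntegral_preimage_emb (measurableEmbedding_addLeft x) f s

variable {d : ℕ} {m r T c K T' : ℝ} {v : ℝ → EuclideanSpace ℝ (Fin d) → ℝ}
  {ut : ℝ × EuclideanSpace ℝ (Fin d) → ℝ} {W D : Fin d → ℝ × EuclideanSpace ℝ (Fin d) → ℝ}
  {x : EuclideanSpace ℝ (Fin d)} {t : ℝ}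

lemma exists_lt_setIntegral_of_lt_setIntegral_zero {L : ℝ} (ht : 0 < t)
    (hcont : ContinuousOn (fun p : ℝ × EuclideanSpace ℝ (Fin d) => v p.1 p.2)
      (Icc 0 t ×ˢ closedBall x r))
    (hL : L < ∫ y in closedBall x r, v 0 y) :
    ∃ δ ∈ Ioc 0 t, L < ∫ y in closedBall x r, v δ y := by
  have hmass : ContinuousWithinAt (fun s => ∫ y in closedBall x r, v s y) (Ioc 0 t) 0 :=
    (continuousOn_setIntegral_of_isCompact isCompact_Icc (isCompact_closedBall x r) hcont 0
      ⟨le_rfl, ht.le⟩).mono Ioc_subset_Icc_self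
  have : (𝓝[Ioc 0 t] (0 : ℝ)).NeBot := by
    rw [nhdsWithin_Ioc_eq_nhdsGT ht]
    infer_instance
  exact (eventually_mem_nhdsWithin.and (hmass.eventually (lt_mem_nhds hL))).exists

lemma IsFDESolWith.mul_rpow_le_of_le_setIntegral {δ : ℝ} (hm1 : m < 1) (hT : 0 < T)
    (hunit : UnitScaleBound d m r T c K)
    (h : IsFDESolWith m (Icc δ t ×ˢ closedBall x 1) v ut W D) (hδt : δ < t)
    (hmass : K * ((t - δ) / T) ^ (1 / (1 - m)) ≤ ∫ y in closedBall x r, v δ y) :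
    c * ((t - δ) / T) ^ (1 / (1 - m)) ≤ v t x := by
  have hm1' : 0 < 1 - m := by linarith
  have hτ : 0 < (t - δ) / T := div_pos (sub_pos.2 hδt) hT
  obtain ⟨A, hA⟩ : ∃ A, A = ((t - δ) / T) ^ (1 / (1 - m)) := ⟨_, rfl⟩
  have hA0 : 0 < A := hA ▸ rpow_pos_of_pos hτ _
  have hApow : A ^ (1 - m) = (t - δ) / T := by
    rw [hA, ← rpow_mul hτ.le, one_div_mul_cancel hm1'.ne', rpow_one]
  rw [← hA] at hmass ⊢
  obtain ⟨ut', W', D', h'⟩ := h.rescale (ρ := 1) (Q' := Icc 0 T ×ˢ closedBall 0 1) hA0 δ x (by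
    rintro ⟨s, y⟩ ⟨⟨hs0, hsT⟩, hy⟩
    simp only [hApow, one_pow, mul_one, one_smul]
    refine ⟨⟨le_add_of_nonneg_right (mul_nonneg hτ.le hs0), ?_⟩, by simpa using hy⟩
    calc δ + (t - δ) / T * s ≤ δ + (t - δ) / T * T := by gcongr
      _ = t := by field_simp; ring)
  have hc : c ≤ A⁻¹ * v (δ + A ^ (1 - m) * 1 ^ 2 * T) (x + (1 : ℝ) • 0) := by
    refine hunit _ _ _ _ h' ?_
    simp only [mul_zero, add_zero, one_smul]
    rwa [integral_const_mul, le_inv_mul_iff₀' hA0, ← sub_self x, ← preimage_add_closedBall,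
      setIntegral_preimage_const_add]
  have htime : δ + A ^ (1 - m) * 1 ^ 2 * T = t := by
    rw [hApow]
    field_simp
    ring
  rwa [htime, smul_zero, add_zero, le_inv_mul_iff₀' hA0] at hc

lemma IsFDESolWith.mul_rpow_le_of_lt_setIntegral_zero (hm1 : m < 1) (hr1 : r ≤ 1) (hT : 0 < T)
    (hc : 0 ≤ c) (hK : 0 ≤ K)
    (hunit : UnitScaleBound d m r T c K)
    (h : IsFDESolWith m (Ioo 0 T' ×ˢ closedBall x 1) v ut W D)
    (hcont : ContinuousOn (fun p : ℝ × EuclideanSpace ℝ (Fin d) => v p.1 p.2)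
      (Ico 0 T' ×ˢ closedBall x 1))
    (ht : t ∈ Ioo 0 T')
    (hmass : K * (t / T) ^ (1 / (1 - m)) < ∫ y in closedBall x r, v 0 y) :
    c * (t / (2 * T)) ^ (1 / (1 - m)) ≤ v t x := by
  have : 0 < 1 - m := by linarith
  have ht0 : 0 < t := ht.1
  obtain ⟨δ, ⟨hδ0, hδt⟩, hmassδ⟩ := exists_lt_setIntegral_of_lt_setIntegral_zero (half_pos ht0)
    (hcont.mono (prod_mono (fun s hs => ⟨hs.1, by linarith [hs.2, ht.2]⟩)
      (closedBall_subset_closedBall hr1))) hmass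
  have hδ : δ < t := by linarith
  have : 0 ≤ (t - δ) / T := div_nonneg (sub_nonneg.2 hδ.le) hT.le
  calc c * (t / (2 * T)) ^ (1 / (1 - m)) ≤ c * ((t - δ) / T) ^ (1 / (1 - m)) := by
        rw [← div_div]
        gcongr
        linarith
    _ ≤ v t x := by
        refine (h.mono (prod_mono_left fun s hs => ⟨hδ0.trans_le hs.1, hs.2.trans_lt
          ht.2⟩)).mul_rpow_le_of_le_setIntegral hm1 hT hunit hδ (le_trans ?_ hmassδ.le)
        gcongr
        linarith

end LocalBound

section Covering

lemma setIntegral_le_sum_of_subset_iUnion {X ι : Type*} [MeasurableSpace X] {μ : Measure X}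
    [Fintype ι] {B : ι → Set X} {S : Set X} {f : X → ℝ} (hB : ∀ i, MeasurableSet (B i))
    (hf : ∀ i, IntegrableOn f (B i) μ) (hf₀ : ∀ i, ∀ x ∈ B i, 0 ≤ f x) (hS : S ⊆ ⋃ i, B i) :
    ∫ x in S, f x ∂μ ≤ ∑ i, ∫ x in B i, f x ∂μ := by
  have hle : μ.restrict S ≤ ∑ i, μ.restrict (B i) := by
    rw [← Measure.sum_fintype]
    exact (Measure.restrict_mono_set μ hS).trans Measure.restrict_iUnion_le
  have hfsum : Integrable f (∑ i, μ.restrict (B i)) :=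
    integrable_finsetSum_measure.2 fun i _ => hf i
  have hnonneg : 0 ≤ᵐ[∑ i, μ.restrict (B i)] f := by
    rw [← Measure.sum_fintype]
    exact Measure.ae_sum_iff.2 fun i => ae_restrict_of_forall_mem (hB i) (hf₀ i)
  exact (integral_mono_measure hle hnonneg hfsum).trans_eq
    (integral_finsetSum_measure fun i _ => hf i)

lemma exists_forall_exists_div_le_setIntegral_closedBall {X : Type*} [PseudoMetricSpace X]
    [MeasurableSpace X] [OpensMeasurableSpace X] (μ : Measure X) {S : Set X}
    (hS : TotallyBounded S) (hne : S.Nonempty) {r : ℝ} (hr : 0 < r) :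
    ∃ N : ℝ, 0 < N ∧ ∀ f : X → ℝ, IntegrableOn f (cthickening r S) μ →
      (∀ x ∈ cthickening r S, 0 ≤ f x) →
      ∃ z ∈ S, (∫ x in S, f x ∂μ) / N ≤ ∫ x in closedBall z r, f x ∂μ := by
  obtain ⟨Z, hZS, hZfin, hcover⟩ := finite_approx_of_totallyBounded hS r hr
  have := hZfin.fintype
  have hcover' : S ⊆ ⋃ z : Z, closedBall (z : X) r := by
    rw [← biUnion_eq_iUnion Z fun z _ => closedBall z r]
    exact hcover.trans (iUnion₂_mono fun z _ => ball_subset_closedBall)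
  have hZne : Nonempty Z := by
    obtain ⟨z, _⟩ := mem_iUnion.1 (hcover' hne.some_mem)
    exact ⟨z⟩
  refine ⟨Fintype.card Z, Nat.cast_pos.2 Fintype.card_pos, fun f hf hf₀ => ?_⟩
  have hsub (z : Z) : closedBall (z : X) r ⊆ cthickening r S :=
    closedBall_subset_cthickening (hZS z.2) r
  obtain ⟨z, -, hz⟩ := Finset.exists_le_of_sum_le (s := Finset.univ)
    (f := fun _ : Z => (∫ x in S, f x ∂μ) / Fintype.card Z)
    (g := fun z : Z => ∫ x in closedBall (z : X) r, f x ∂μ) Finset.univ_nonempty (by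
      rw [Finset.sum_const, Finset.card_univ, nsmul_eq_mul, mul_div_cancel₀]
      · exact setIntegral_le_sum_of_subset_iUnion (fun z => measurableSet_closedBall)
          (fun z => hf.mono_set (hsub z)) (fun z x hx => hf₀ x (hsub z hx)) hcover'
      · exact Nat.cast_ne_zero.2 Fintype.card_ne_zero)
  exact ⟨z, hZS z.2, hz⟩

end Covering

section NormalizedBound

variable {d : ℕ} {m r T c K T' : ℝ} {v : ℝ → EuclideanSpace ℝ (Fin d) → ℝ}
  {ut : ℝ × EuclideanSpace ℝ (Fin d) → ℝ} {W D : Fin d → ℝ × EuclideanSpace ℝ (Fin d) → ℝ}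
  {z : EuclideanSpace ℝ (Fin d)} {t : ℝ}

lemma mul_div_rpow_lt_div_of_lt {N I : ℝ} (hm1 : m < 1) (hT : 0 < T) (hK : 0 < K) (hN : 0 < N)
    (hI : 0 ≤ I) (ht : 0 ≤ t) (htI : t < T * (1 / (K * N)) ^ (1 - m) * I ^ (1 - m)) :
    K * (t / T) ^ (1 / (1 - m)) < I / N := by
  have hm1' : 0 < 1 - m := by linarith
  have hlt : t / T < (I / (K * N)) ^ (1 - m) := by
    rw [div_lt_iff₀ hT, ← one_div_mul_eq_div (K * N) I, mul_rpow (by positivity) hI]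
    linarith
  calc K * (t / T) ^ (1 / (1 - m)) < K * ((I / (K * N)) ^ (1 - m)) ^ (1 / (1 - m)) := by gcongr
    _ = I / N := by
      rw [← rpow_mul (by positivity), mul_one_div_cancel hm1'.ne', rpow_one]
      field_simp

lemma IsFDESolWith.mul_rpow_le_of_mem_closedBall_half {s : ℝ} {x : EuclideanSpace ℝ (Fin d)}
    (hm1 : m < 1) (hr1 : r ≤ 1) (hT : 0 < T) (hc : 0 ≤ c) (hK : 0 ≤ K)
    (hunit : UnitScaleBound d m r T c K)
    (h : IsFDESolWith m (Ioo 0 T' ×ˢ closedBall z 2) v ut W D)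
    (hcont : ContinuousOn (fun p : ℝ × EuclideanSpace ℝ (Fin d) => v p.1 p.2)
      (Ico 0 T' ×ˢ closedBall z 2))
    (hv₀ : ∀ x ∈ closedBall z 2, 0 ≤ v 0 x) (hs : s ∈ Ioo 0 T')
    (hmass : K * (s / T) ^ (1 / (1 - m)) < ∫ y in closedBall z (r / 2), v 0 y)
    (hx : x ∈ closedBall z (r / 2)) :
    c * (1 / (2 * T)) ^ (1 / (1 - m)) * s ^ (1 / (1 - m)) ≤ v s x := by
  have hs0 : 0 < s := hs.1
  have hxz : dist x z ≤ r / 2 := hx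
  have hball : closedBall x 1 ⊆ closedBall z 2 := closedBall_subset_closedBall' (by linarith)
  have hballr : closedBall x r ⊆ closedBall z 2 :=
    (closedBall_subset_closedBall hr1).trans hball
  have hsub : closedBall z (r / 2) ⊆ closedBall x r :=
    closedBall_subset_closedBall' (by rw [dist_comm]; linarith)
  have hv₀cont : ContinuousOn (v 0) (closedBall x r) :=
    hcont.comp (f := fun y => ((0 : ℝ), y)) (by fun_prop)
      fun y hy => ⟨⟨le_rfl, hs0.trans hs.2⟩, hballr hy⟩
  have hmono : ∫ y in closedBall z (r / 2), v 0 y ≤ ∫ y in closedBall x r, v 0 y :=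
    setIntegral_mono_set (hv₀cont.integrableOn_compact (isCompact_closedBall x r))
      (ae_restrict_of_forall_mem measurableSet_closedBall fun y hy => hv₀ y (hballr hy))
      hsub.eventuallyLE
  calc c * (1 / (2 * T)) ^ (1 / (1 - m)) * s ^ (1 / (1 - m))
      = c * (s / (2 * T)) ^ (1 / (1 - m)) := by
        rw [mul_assoc, ← mul_rpow (by positivity) hs0.le, one_div_mul_eq_div]
    _ ≤ v s x := (h.mono (prod_mono_right hball)).mul_rpow_le_of_lt_setIntegral_zero hm1 hr1 hT hc
        hK hunit (hcont.mono (prod_mono_right hball)) hs (hmass.trans_le hmono)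

theorem exists_mul_rpow_le_of_lt_setIntegral_ball (hd : 2 ≤ d) (hmc : (d - 2 : ℝ) / d < m)
    (hm1 : m < 1) :
    ∃ c₀ c : ℝ, 0 < c₀ ∧ 0 < c ∧ ∀ (v : ℝ → EuclideanSpace ℝ (Fin d) → ℝ) (T' : ℝ) ut W D,
      IsFDESolWith m (Ioo 0 T' ×ˢ closedBall 0 3) v ut W D →
      ContinuousOn (fun p : ℝ × EuclideanSpace ℝ (Fin d) => v p.1 p.2)
        (Ico 0 T' ×ˢ closedBall 0 3) →
      (∀ x ∈ closedBall 0 3, 0 ≤ v 0 x) → ∀ t ∈ Ioo 0 T',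
      t < c₀ * (∫ x in ball 0 1, v 0 x) ^ (1 - m) → c * t ^ (1 / (1 - m)) ≤ v t 0 := by
  have hd2 : (2 : ℝ) ≤ d := by exact_mod_cast hd
  have hm0 : 0 < m := lt_of_le_of_lt (div_nonneg (by linarith) (by linarith)) hmc
  obtain ⟨r, T, c, K, hr, hr1, hT, hc, hK, hunit⟩ := exists_unitScaleBound hd hmc hm1
  obtain ⟨N, hN, hcover⟩ := exists_forall_exists_div_le_setIntegral_closedBall volume
    ((isCompact_closedBall (0 : EuclideanSpace ℝ (Fin d)) 1).totallyBounded.subset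
      ball_subset_closedBall) (nonempty_ball.2 one_pos) (half_pos hr)
  obtain ⟨c', hc', hbarrier⟩ := exists_mul_rpow_le_of_forall_closedBall d hm0 hm1 (half_pos hr)
    (show 0 < c * (1 / (2 * T)) ^ (1 / (1 - m)) by positivity)
  refine ⟨T * (1 / (K * N)) ^ (1 - m), c', by positivity, hc', ?_⟩
  intro v T' ut W D h hcont hv₀ t ht htI
  have hthick : cthickening (r / 2) (ball (0 : EuclideanSpace ℝ (Fin d)) 1) ⊆ closedBall 0 3 := by
    rw [cthickening_ball (half_pos hr).le one_pos]
    exact closedBall_subset_closedBall (by linarith)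
  have hv₀cont : ContinuousOn (v 0) (closedBall 0 3) :=
    hcont.comp (f := fun y => ((0 : ℝ), y)) (by fun_prop)
      fun y hy => ⟨⟨le_rfl, ht.1.trans ht.2⟩, hy⟩
  obtain ⟨z, hz, hmass⟩ := hcover (v 0)
    ((hv₀cont.integrableOn_compact (isCompact_closedBall 0 3)).mono_set hthick)
    fun x hx => hv₀ x (hthick hx)
  have hz1 : dist z 0 < 1 := hz
  have hball : closedBall z 2 ⊆ closedBall 0 3 := closedBall_subset_closedBall' (by linarith)
  have hmass₀ : 0 ≤ ∫ x in ball 0 1, v 0 x := setIntegral_nonneg measurableSet_ball fun x hx =>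
    hv₀ x (hthick (self_subset_cthickening _ hx))
  refine hbarrier v T' ut W D z 0 t (h.mono (prod_mono_right hball))
    (hcont.mono (prod_mono_right hball)) (fun x hx => hv₀ x (hball hx))
    (mem_closedBall'.2 hz1.le) ht fun s hs x hx => ?_
  refine (h.mono (prod_mono_right hball)).mul_rpow_le_of_mem_closedBall_half hm1 hr1 hT hc.le
    hK.le hunit (hcont.mono (prod_mono_right hball)) (fun x hx => hv₀ x (hball hx))
    ⟨hs.1, hs.2.trans_lt ht.2⟩ (lt_of_lt_of_le ?_ hmass) hx
  exact mul_div_rpow_lt_div_of_lt hm1 hT hK hN hmass₀ hs.1.le (hs.2.trans_lt htI)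

end NormalizedBound

section Rescaling

variable {d : ℕ} {m R : ℝ} {x₀ : EuclideanSpace ℝ (Fin d)}

lemma setIntegral_unitBall_comp_add_smul (hR : 0 < R) (f : EuclideanSpace ℝ (Fin d) → ℝ)
    (x₀ : EuclideanSpace ℝ (Fin d)) :
    ∫ x in ball 0 1, f (x₀ + R • x) = (R ^ d)⁻¹ * ∫ x in ball x₀ R, f x := by
  rw [Measure.setIntegral_comp_smul_of_pos volume (fun x => f (x₀ + x)) (ball 0 1) hR,
    finrank_euclideanSpace_fin, smul_unitBall_of_pos hR, smul_eq_mul, ← sub_self x₀,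
    ← preimage_add_ball, setIntegral_preimage_const_add]

lemma rpow_two_sub_mul_rpow {I : ℝ} (hR : 0 < R) (hI : 0 ≤ I) :
    R ^ (2 - d * (1 - m)) * I ^ (1 - m) = ((R ^ d)⁻¹ * I) ^ (1 - m) * R ^ 2 := by
  rw [mul_rpow (by positivity) hI, rpow_sub hR, inv_rpow (by positivity), ← rpow_natCast R d,
    ← rpow_mul hR.le, ← rpow_natCast R 2]
  push_cast
  field_simp

lemma add_smul_mem_closedBall_of_mem {ρ : ℝ} (hR : 0 ≤ R) {y : EuclideanSpace ℝ (Fin d)}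
    (hy : y ∈ closedBall 0 ρ) : x₀ + R • y ∈ closedBall x₀ (ρ * R) := by
  rw [mem_closedBall_iff_norm, add_sub_cancel_left, norm_smul, norm_of_nonneg hR, mul_comm]
  exact mul_le_mul_of_nonneg_right (mem_closedBall_zero_iff.1 hy) hR

end Rescaling

theorem lower_harnack_good_fde_general {d : ℕ} (hd : 2 ≤ d) {m : ℝ} (hmc : (d - 2 : ℝ) / d < m)
    (hm1 : m < 1) :
    ∃ c₀' c : ℝ, 0 < c₀' ∧ 0 < c ∧
      ∀ (Ω : Set (EuclideanSpace ℝ (Fin d))), IsOpen Ω →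
      ∀ (u : ℝ → EuclideanSpace ℝ (Fin d) → ℝ) (u₀ : EuclideanSpace ℝ (Fin d) → ℝ) (T' : ℝ),
        IsFDESol m (Ioo 0 T' ×ˢ Ω) u →
        (∀ x ∈ Ω, 0 ≤ u₀ x) →
        TakesInit T' Ω u u₀ →
      ∀ (x₀ : EuclideanSpace ℝ (Fin d)) (R : ℝ), 0 < R →
        closedBall x₀ (3 * R) ⊆ Ω →
      ∀ t : ℝ, 0 < t →
        t < min T' (c₀' * R ^ (2 - d * (1 - m)) * (∫ x in ball x₀ R, u₀ x) ^ (1 - m)) →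
        c * (t / R ^ 2) ^ (1 / (1 - m)) ≤ u t x₀ := by
  obtain ⟨c₀, c, hc₀, hc, hnormalized⟩ := exists_mul_rpow_le_of_lt_setIntegral_ball hd hmc hm1
  refine ⟨c₀, c, hc₀, hc, fun Ω hΩ u u₀ T' hu hu₀ hinit x₀ R hR hball t ht htlt => ?_⟩
  have hΩmem (y) (hy : y ∈ closedBall 0 3) : x₀ + R • y ∈ Ω :=
    hball (add_smul_mem_closedBall_of_mem hR.le hy)
  have htime (s) (hs : s < T' / R ^ 2) : R ^ 2 * s < T' := (lt_div_iff₀' (by positivity)).1 hs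
  have hinit' (y) (hy : y ∈ closedBall 0 3) : u (R ^ 2 * 0) (x₀ + R • y) = u₀ (x₀ + R • y) := by
    rw [mul_zero, hinit.2 _ (hΩmem y hy)]
  obtain ⟨ut, W, D, h⟩ := hu.exists_isFDESolWith (isOpen_Ioo.prod hΩ)
  obtain ⟨ut', W', D', h'⟩ := h.rescale (ρ := R) (Q' := Ioo 0 (T' / R ^ 2) ×ˢ closedBall 0 3)
    one_pos 0 x₀ (by
      rintro ⟨s, y⟩ ⟨hs, hy⟩
      simp only [one_rpow, one_mul, zero_add]
      exact ⟨⟨mul_pos (by positivity) hs.1, htime s hs.2⟩, hΩmem y hy⟩)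
  simp only [one_rpow, one_mul, zero_add, inv_one] at h'
  have hcont : ContinuousOn (fun p : ℝ × EuclideanSpace ℝ (Fin d) =>
      u (R ^ 2 * p.1) (x₀ + R • p.2)) (Ico 0 (T' / R ^ 2) ×ˢ closedBall 0 3) :=
    hinit.1.comp (f := fun p : ℝ × EuclideanSpace ℝ (Fin d) => (R ^ 2 * p.1, x₀ + R • p.2))
      (by fun_prop) fun p hp =>
        ⟨⟨mul_nonneg (by positivity) hp.1.1, htime p.1 hp.1.2⟩, hΩmem p.2 hp.2⟩
  have hmass : ∫ x in ball 0 1, u (R ^ 2 * 0) (x₀ + R • x) =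
      (R ^ d)⁻¹ * ∫ x in ball x₀ R, u₀ x := by
    rw [← setIntegral_unitBall_comp_add_smul hR]
    exact setIntegral_congr_fun measurableSet_ball fun y hy => hinit' y
      (closedBall_subset_closedBall (by norm_num) (ball_subset_closedBall hy))
  have hsmall : t / R ^ 2 < c₀ * (∫ x in ball 0 1, u (R ^ 2 * 0) (x₀ + R • x)) ^ (1 - m) := by
    have hI : 0 ≤ ∫ x in ball x₀ R, u₀ x := setIntegral_nonneg measurableSet_ball fun x hx =>
      hu₀ x (hball (closedBall_subset_closedBall (by linarith) (ball_subset_closedBall hx)))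
    rw [hmass, div_lt_iff₀ (by positivity), mul_assoc, ← rpow_two_sub_mul_rpow hR hI, ← mul_assoc]
    exact htlt.trans_le (min_le_right _ _)
  have key := hnormalized (fun s y => u (R ^ 2 * s) (x₀ + R • y)) (T' / R ^ 2) ut' W' D' h' hcont
    (fun y hy => (hinit' y hy).ge.trans' (hu₀ _ (hΩmem y hy))) (t / R ^ 2)
    ⟨by positivity, by gcongr; exact htlt.trans_le (min_le_left _ _)⟩ hsmall
  simpa [mul_div_cancel₀ t (pow_ne_zero 2 hR.ne')] using key

/-- **Theorem 1.3(ii): lower Harnack inequality in the good fast diffusion range.** -/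
theorem lower_harnack_good_fde
    (d : ℕ) (hd : 3 ≤ d) (m : ℝ) (hmc : (d - 2 : ℝ) / d < m) (hm1 : m < 1) :
    ∃ c₀' c : ℝ, 0 < c₀' ∧ 0 < c ∧
      ∀ (Ω : Set (EuclideanSpace ℝ (Fin d))), IsOpen Ω →
      ∀ (u : ℝ → EuclideanSpace ℝ (Fin d) → ℝ) (u₀ : EuclideanSpace ℝ (Fin d) → ℝ) (T' : ℝ),
        0 < T' →
        IsFDESol m (Ioo 0 T' ×ˢ Ω) u →
        (∀ x ∈ Ω, 0 ≤ u₀ x) →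
        LocallyIntegrableOn u₀ Ω →
        TakesInit T' Ω u u₀ →
      ∀ (x₀ : EuclideanSpace ℝ (Fin d)) (R : ℝ), 0 < R →
        closedBall x₀ (3 * R) ⊆ Ω →
        0 < ∫ x in ball x₀ R, u₀ x →
      ∀ t : ℝ, 0 < t →
        t < min T' (c₀' * R ^ (2 - d * (1 - m)) * (∫ x in ball x₀ R, u₀ x) ^ (1 - m)) →
        u t x₀ ≥ c * (t / R ^ 2) ^ ((1 : ℝ) / (1 - m)) := by
  obtain ⟨c₀', c, hc₀', hc, hbound⟩ := lower_harnack_good_fde_general (by omega : 2 ≤ d) hmc hm1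
  exact ⟨c₀', c, hc₀', hc, fun Ω hΩ u u₀ T' _ hu hu₀ _ hinit x₀ R hR hball _ t ht htlt =>
    hbound Ω hΩ u u₀ T' hu hu₀ hinit x₀ R hR hball t ht htlt⟩
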